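/- Let z ∈ (0, 1/2), let μ be the unique absolutely continuous f_z-invariant Borel probability measure on [0,1], and let φ : [0,1] → ℝ be Hölder continuous with ∫ φ dμ = 0. Set Φ_n = ∑_{j=0}^{n-1} φ ∘ f_z^j. Then there exists σ ≥ 0 such that the distribution of n^{−1/2} Φ_n under μ (i.e., the pushforward of μ by x ↦ n^{−1/2} Φ_n(x)) converges weakly to the Gaussian distribution N(0, σ²) as n → ∞. -/

import Mathlib

open MeasureTheory Set NNReal Filter

/-- The Liverani–Saussol–Vaienti (Pomeau–Manneville type) map with parameter `z`. -/
noncomputable def lsv (z : ℝ) (y : ℝ) : ℝ :=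
  if y < 1 / 2 then y * (1 + 2 ^ z * y ^ z) else 2 * y - 1

/-- The Birkhoff sum `Φ_n = ∑_{j=0}^{n-1} φ ∘ f_z^j`. -/
noncomputable def lsvBirkhoff (z : ℝ) (φ : ℝ → ℝ) (n : ℕ) (x : ℝ) : ℝ :=
  ∑ j ∈ Finset.range n, φ ((lsv z)^[j] x)



section MartCLT
open scoped Topology

variable {Ω : Type*} [MeasurableSpace Ω] {ν : Measure Ω} [IsProbabilityMeasure ν] {T : Ω → Ω}

lemma birk_ae_eq (hT : Ergodic T ν) (V : Lp ℝ 2 ν) (n : ℕ) :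
    (birkhoffAverage ℝ (Lp.compMeasurePreservingₗᵢ ℝ T hT.toMeasurePreserving (E := ℝ) (p := 2)).toContinuousLinearMap _root_.id n V : Lp ℝ 2 ν)
      =ᵐ[ν] fun x => (n : ℝ)⁻¹ * ∑ j ∈ Finset.range n, V (T^[j] x) := by
  have h1 : ∀ j : ℕ, ((Lp.compMeasurePreservingₗᵢ ℝ T hT.toMeasurePreserving (E := ℝ) (p := 2)).toContinuousLinearMap)^[j] V
      =ᵐ[ν] fun x => V (T^[j] x) := by
    intro j
    have e : ((Lp.compMeasurePreservingₗᵢ ℝ T hT.toMeasurePreserving (E := ℝ) (p := 2)).toContinuousLinearMap : Lp ℝ 2 ν → Lp ℝ 2 ν)^[j] = Lp.compMeasurePreserving (T^[j]) (hT.toMeasurePreserving.iterate j) := by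
      rw [← Lp.compMeasurePreserving_iterate]; rfl
    rw [e]
    exact Lp.coeFn_compMeasurePreserving _ _
  have h2 : ∀ᵐ x ∂ν, ∀ j : ℕ, (((Lp.compMeasurePreservingₗᵢ ℝ T hT.toMeasurePreserving (E := ℝ) (p := 2)).toContinuousLinearMap)^[j] V) x = V (T^[j] x) :=
    ae_all_iff.2 h1
  rw [birkhoffAverage, birkhoffSum]
  have h3 : ∀ k : ℕ, (((∑ j ∈ Finset.range k, _root_.id ((((Lp.compMeasurePreservingₗᵢ ℝ T hT.toMeasurePreserving (E := ℝ) (p := 2)).toContinuousLinearMap)^[j]) V) : Lp ℝ 2 ν)) : Ω → ℝ) =ᵐ[ν] fun x => ∑ j ∈ Finset.range k, V (T^[j] x) := by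
    intro k
    induction k with
    | zero => simp only [Finset.range_zero, Finset.sum_empty]; exact Lp.coeFn_zero ℝ 2 ν
    | succ k ih =>
      rw [Finset.sum_range_succ]
      filter_upwards [Lp.coeFn_add (∑ j ∈ Finset.range k, _root_.id ((((Lp.compMeasurePreservingₗᵢ ℝ T hT.toMeasurePreserving (E := ℝ) (p := 2)).toContinuousLinearMap)^[j]) V) : Lp ℝ 2 ν) (_root_.id ((((Lp.compMeasurePreservingₗᵢ ℝ T hT.toMeasurePreserving (E := ℝ) (p := 2)).toContinuousLinearMap)^[k]) V)), ih, h2] with x e1 e2 e3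
      rw [e1, Finset.sum_range_succ, Pi.add_apply, e2]
      congr 1
      exact e3 k
  filter_upwards [Lp.coeFn_smul ((n : ℝ)⁻¹) (∑ j ∈ Finset.range n, _root_.id ((((Lp.compMeasurePreservingₗᵢ ℝ T hT.toMeasurePreserving (E := ℝ) (p := 2)).toContinuousLinearMap)^[j]) V) : Lp ℝ 2 ν), h3 n] with x e1 e2
  rw [e1, Pi.smul_apply, e2, smul_eq_mul]

lemma mean_ergodic_L1 (hT : Ergodic T ν) (v : Ω → ℝ) (hv : MemLp v 2 ν) :
    Tendsto (fun n : ℕ => ∫ x, |(n : ℝ)⁻¹ * ∑ j ∈ Finset.range n, v (T^[j] x) - ∫ y, v y ∂ν| ∂ν)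
      atTop (𝓝 0) := by
  set U := (Lp.compMeasurePreservingₗᵢ ℝ T hT.toMeasurePreserving (E := ℝ) (p := 2)).toContinuousLinearMap with hU
  set V : Lp ℝ 2 ν := hv.toLp v with hV
  have hVv : ∀ᵐ x ∂ν, ∀ j : ℕ, V (T^[j] x) = v (T^[j] x) := by
    rw [ae_all_iff]; intro j
    exact (hT.toMeasurePreserving.iterate j).quasiMeasurePreserving.ae hv.coeFn_toLp
  have hlim := U.tendsto_birkhoffAverage_orthogonalProjection (LinearIsometry.norm_toContinuousLinearMap_le _) V
  set Q := (U.eqLocus (1 : Lp ℝ 2 ν →L[ℝ] Lp ℝ 2 ν)).orthogonalProjectionOnto V with hQ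
  have hfix : U (Q : Lp ℝ 2 ν) = Q := by
    have := Q.2
    simpa using this
  obtain ⟨c, hc⟩ : ∃ c, ((Q : Lp ℝ 2 ν) : Ω → ℝ) =ᵐ[ν] Function.const Ω c := by
    apply hT.ae_eq_const_of_ae_eq_comp_ae (Lp.aestronglyMeasurable _)
    have := Lp.coeFn_compMeasurePreserving (Q : Lp ℝ 2 ν) hT.toMeasurePreserving
    refine this.symm.trans ?_
    have h4 : Lp.compMeasurePreserving T hT.toMeasurePreserving (Q : Lp ℝ 2 ν) = Q := hfix
    rw [h4]
  set A : ℕ → Ω → ℝ := fun n x => (n : ℝ)⁻¹ * ∑ j ∈ Finset.range n, v (T^[j] x) with hA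
  have hAint : ∀ n, MemLp (A n) 2 ν := by
    intro n
    apply MemLp.const_mul
    apply memLp_finsetSum
    intro j _
    exact hv.comp_measurePreserving (hT.toMeasurePreserving.iterate j)
  have hAae : ∀ n, (birkhoffAverage ℝ U _root_.id n V : Lp ℝ 2 ν) =ᵐ[ν] A n := by
    intro n
    filter_upwards [birk_ae_eq hT V n, hVv] with x e1 e2
    rw [e1]; simp only [hA, e2]
  have key : Tendsto (fun n => ∫ x, |A n x - c| ∂ν) atTop (𝓝 0) := by
    rw [tendsto_iff_norm_sub_tendsto_zero] at hlim
    refine squeeze_zero (fun n => integral_nonneg fun x => abs_nonneg _) (fun n => ?_) hlim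
    have hm : MemLp (fun x => A n x - c) 2 ν := (hAint n).sub (memLp_const c)
    have e0 : eLpNorm (fun x => A n x - c) 2 ν = eLpNorm ((birkhoffAverage ℝ U _root_.id n V - Q : Lp ℝ 2 ν) : Ω → ℝ) 2 ν := by
      apply eLpNorm_congr_ae
      filter_upwards [hAae n, hc, Lp.coeFn_sub (birkhoffAverage ℝ U _root_.id n V) (Q : Lp ℝ 2 ν)] with x e1 e2 e3
      rw [e3, Pi.sub_apply, e1, e2]; rfl
    rw [Lp.norm_def, ← e0]
    have e5 : ∫ x, |A n x - c| ∂ν = (eLpNorm (fun x => A n x - c) 1 ν).toReal := by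
      rw [eLpNorm_one_eq_lintegral_enorm, ← integral_norm_eq_lintegral_enorm hm.1]; rfl
    rw [e5]
    exact ENNReal.toReal_mono hm.2.ne (eLpNorm_le_eLpNorm_of_exponent_le (by norm_num) hm.1)
  have hcv : c = ∫ y, v y ∂ν := by
    have h6 : ∀ n : ℕ, 1 ≤ n → ∫ x, A n x ∂ν = ∫ y, v y ∂ν := by
      intro n hn
      simp only [hA]
      rw [integral_const_mul, integral_finsetSum]
      · have : ∀ j ∈ Finset.range n, ∫ x, v (T^[j] x) ∂ν = ∫ y, v y ∂ν := by
          intro j _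
          have hmp := hT.toMeasurePreserving.iterate j
          have h7 := integral_map (μ := ν) hmp.measurable.aemeasurable (f := v) (by rw [hmp.map_eq]; exact hv.1)
          rw [hmp.map_eq] at h7
          exact h7.symm
        rw [Finset.sum_congr rfl this]
        have : (n : ℝ) ≠ 0 := by positivity
        simp; field_simp
      · intro j _
        exact (hv.comp_measurePreserving (hT.toMeasurePreserving.iterate j)).integrable (by norm_num)
    have h8 : Tendsto (fun n : ℕ => |(∫ y, v y ∂ν) - c|) atTop (𝓝 0) := by
      refine squeeze_zero' (Eventually.of_forall fun n => abs_nonneg _) ?_ key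
      filter_upwards [eventually_ge_atTop 1] with n hn
      rw [← h6 n hn]
      have : (∫ x, A n x ∂ν) - c = ∫ x, (A n x - c) ∂ν := by
        rw [integral_sub ((hAint n).integrable (by norm_num)) (integrable_const c)]; simp
      rw [this]
      exact abs_integral_le_integral_abs
    have := tendsto_nhds_unique h8 tendsto_const_nhds
    have := abs_eq_zero.1 this.symm
    linarith
  rw [hcv] at key
  exact key
end MartCLT


section MartCLT2
open scoped Topology
open Complex (I)

lemma norm_one_add_I_mul_le (x : ℝ) : ‖(1 : ℂ) + I * x‖ ≤ Real.exp (x ^ 2 / 2) := by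
  have h1 : ‖(1 : ℂ) + I * x‖ ^ 2 = 1 + x ^ 2 := by
    rw [← Complex.normSq_eq_norm_sq, Complex.normSq_apply]
    simp; ring
  have h2 : 1 + x ^ 2 ≤ (Real.exp (x ^ 2 / 2)) ^ 2 := by
    rw [← Real.exp_nat_mul]
    have := Real.add_one_le_exp (x ^ 2)
    have e : ((2 : ℕ) : ℝ) * (x ^ 2 / 2) = x ^ 2 := by push_cast; ring
    rw [e]; linarith
  exact le_of_sq_le_sq (by rw [h1]; exact h2) (Real.exp_pos _).le

lemma norm_b_le (x : ℝ) : ‖((1 : ℂ) + I * x) * (Real.exp (-(x ^ 2 / 2)) : ℝ)‖ ≤ 1 := by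
  rw [norm_mul, Complex.norm_real, Real.norm_eq_abs, abs_of_pos (Real.exp_pos _), Real.exp_neg]
  rw [← div_eq_mul_inv, div_le_one (Real.exp_pos _)]
  exact norm_one_add_I_mul_le x

lemma norm_a_sub_b_le (x : ℝ) (hx : |x| ≤ 1) :
    ‖Complex.exp (I * x) - ((1 : ℂ) + I * x) * (Real.exp (-(x ^ 2 / 2)) : ℝ)‖ ≤ 2 * |x| ^ 3 := by
  have hn : ‖I * (x : ℂ)‖ = |x| := by simp
  have h1 := Complex.exp_bound (x := I * x) (by rw [hn]; exact hx) (n := 3) (by norm_num)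
  rw [hn] at h1
  have h2 : |Real.exp (-(x ^ 2 / 2)) - 1 - (-(x ^ 2 / 2))| ≤ (-(x ^ 2 / 2)) ^ 2 := by
    apply Real.abs_exp_sub_one_sub_id_le
    rw [abs_neg, abs_of_nonneg (by positivity)]
    have : x ^ 2 ≤ 1 := by rw [← sq_abs]; nlinarith [abs_nonneg x]
    linarith
  set R := Real.exp (-(x ^ 2 / 2)) - 1 - (-(x ^ 2 / 2)) with hR
  have hRe : Real.exp (-(x ^ 2 / 2)) = 1 - x ^ 2 / 2 + R := by rw [hR]; ring
  rw [hRe]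
  set S := Complex.exp (I * x) - ∑ m ∈ Finset.range 3, (I * (x : ℂ)) ^ m / (m.factorial : ℂ) with hS
  have hSe : Complex.exp (I * x) = 1 + I * x - x ^ 2 / 2 + S := by
    rw [hS]; simp [Finset.sum_range_succ]
    rw [mul_pow, Complex.I_sq]; ring
  rw [hSe]
  have e : (1 + I * x - x ^ 2 / 2 + S) - ((1 : ℂ) + I * x) * ((1 - x ^ 2 / 2 + R : ℝ) : ℂ)
      = S + I * (x ^ 3 / 2 : ℝ) - (1 + I * x) * (R : ℂ) := by
    push_cast; ring
  rw [e]
  have hx0 := abs_nonneg x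
  have h3 : ‖I * ((x ^ 3 / 2 : ℝ) : ℂ)‖ = |x| ^ 3 / 2 := by
    rw [norm_mul, Complex.norm_I, Complex.norm_real, one_mul, Real.norm_eq_abs, abs_div, abs_pow]; norm_num
  have h4 : ‖(1 + I * x) * (R : ℂ)‖ ≤ |x| ^ 3 / 2 := by
    rw [norm_mul, Complex.norm_real, Real.norm_eq_abs]
    have h5 : ‖(1 : ℂ) + I * x‖ ≤ 2 := by
      refine (norm_add_le _ _).trans ?_
      rw [hn]; simp; linarith
    have h6 : |R| ≤ |x| ^ 3 / 4 := by
      refine h2.trans ?_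
      have : (-(x ^ 2 / 2)) ^ 2 = |x| ^ 3 * |x| / 4 := by
        rw [← pow_succ, show (3 + 1) = 2 * 2 by norm_num, pow_mul, sq_abs]; ring
      rw [this]
      have := mul_le_mul_of_nonneg_left hx (pow_nonneg hx0 3)
      linarith
    nlinarith [abs_nonneg R, norm_nonneg ((1 : ℂ) + I * x)]
  have h7 : ‖S‖ ≤ |x| ^ 3 := by
    refine h1.trans ?_
    norm_num [Nat.factorial]
    nlinarith [pow_nonneg hx0 3]
  calc _ ≤ ‖S + I * ((x ^ 3 / 2 : ℝ) : ℂ)‖ + ‖(1 + I * x) * (R : ℂ)‖ := norm_sub_le _ _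
    _ ≤ ‖S‖ + ‖I * ((x ^ 3 / 2 : ℝ) : ℂ)‖ + ‖(1 + I * x) * (R : ℂ)‖ := by gcongr; exact norm_add_le _ _
    _ ≤ 2 * |x| ^ 3 := by rw [h3]; linarith

lemma norm_prod_sub_prod_le' (a b : ℕ → ℂ) (ha : ∀ j, ‖a j‖ ≤ 1) (hb : ∀ j, ‖b j‖ ≤ 1) (n : ℕ) :
    ‖∏ j ∈ Finset.range n, a j - ∏ j ∈ Finset.range n, b j‖ ≤ ∑ j ∈ Finset.range n, ‖a j - b j‖ := by
  induction n with
  | zero => simp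
  | succ n ih =>
    rw [Finset.prod_range_succ, Finset.prod_range_succ, Finset.sum_range_succ]
    have e : (∏ j ∈ Finset.range n, a j) * a n - (∏ j ∈ Finset.range n, b j) * b n
      = (∏ j ∈ Finset.range n, a j - ∏ j ∈ Finset.range n, b j) * a n + (∏ j ∈ Finset.range n, b j) * (a n - b n) := by ring
    rw [e]
    refine (norm_add_le _ _).trans ?_
    rw [norm_mul, norm_mul]
    have h1 : ‖∏ j ∈ Finset.range n, b j‖ ≤ 1 := by
      rw [norm_prod]; exact Finset.prod_le_one (fun _ _ => norm_nonneg _) (fun j _ => hb j)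
    have h2 := ha n
    have h3 := norm_nonneg (∏ j ∈ Finset.range n, a j - ∏ j ∈ Finset.range n, b j)
    have h4 := norm_nonneg (a n - b n)
    nlinarith [norm_nonneg (a n)]

variable {Ω : Type*} [MeasurableSpace Ω] {ν : Measure Ω} [IsProbabilityMeasure ν] {T : Ω → Ω}

/-- `m` is a reverse martingale difference for `T`. -/
def RevMart (ν : Measure Ω) (T : Ω → Ω) (m : Ω → ℝ) : Prop :=
  ∀ g : Ω → ℝ, Measurable g → (∃ C, ∀ x, |g x| ≤ C) → ∫ x, m x * g (T x) ∂ν = 0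

lemma revMart_complex {m : Ω → ℝ} (hT : Measurable T) (hmi : Integrable m ν) (hm : RevMart ν T m) (g : Ω → ℂ) (hg : Measurable g)
    (hgb : ∃ C, ∀ x, ‖g x‖ ≤ C) : ∫ x, (m x : ℂ) * g (T x) ∂ν = 0 := by
  obtain ⟨C, hC⟩ := hgb
  have h1 := hm (fun x => (g x).re) (Complex.measurable_re.comp hg) ⟨C, fun x => (Complex.abs_re_le_norm _).trans (hC x)⟩
  have h2 := hm (fun x => (g x).im) (Complex.measurable_im.comp hg) ⟨C, fun x => (Complex.abs_im_le_norm _).trans (hC x)⟩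
  have hIntg : Integrable (fun x => (m x : ℂ) * g (T x)) ν := by
    apply Integrable.mul_bdd (c := C) hmi.ofReal
    · exact (hg.comp hT).aestronglyMeasurable
    · exact Eventually.of_forall fun x => hC _
  apply Complex.ext
  · have := integral_re hIntg
    simp only [Complex.zero_re]
    rw [← RCLike.re_eq_complex_re, ← this, ← h1]
    congr 1; ext x; simp
  · have := integral_im hIntg
    simp only [Complex.zero_im]
    rw [← RCLike.im_eq_complex_im, ← this, ← h2]
    congr 1; ext x; simp

lemma mart_prod_integral {m : Ω → ℝ} {K : ℝ} (hT : MeasurePreserving T ν ν) (hmm : Measurable m) (hK : ∀ x, |m x| ≤ K)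
    (hm : RevMart ν T m) (s : ℝ) (n : ℕ) :
    ∫ x, ∏ j ∈ Finset.range n, ((1 : ℂ) + I * (s * m (T^[j] x) : ℝ)) ∂ν = 1 := by
  have hmeas : ∀ n : ℕ, Measurable fun x => ∏ j ∈ Finset.range n, ((1 : ℂ) + I * (s * m (T^[j] x) : ℝ)) := by
    intro n
    apply Finset.measurable_prod
    intro j _
    exact ((Complex.measurable_ofReal.comp ((hmm.comp (hT.measurable.iterate j)).const_mul s)).const_mul I).const_add 1
  have hb1 : ∀ x, ‖(1 : ℂ) + I * (s * m x : ℝ)‖ ≤ 1 + |s| * K := by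
    intro x
    refine (norm_add_le _ _).trans ?_
    simp only [norm_one, norm_mul, Complex.norm_I, Complex.norm_real, Real.norm_eq_abs, one_mul, abs_mul]
    gcongr; exact hK x
  have hbd : ∀ n : ℕ, ∀ x, ‖∏ j ∈ Finset.range n, ((1 : ℂ) + I * (s * m (T^[j] x) : ℝ))‖ ≤ (1 + |s| * K) ^ n := by
    intro n x
    rw [norm_prod]
    calc _ ≤ ∏ j ∈ Finset.range n, (1 + |s| * K) := Finset.prod_le_prod (fun _ _ => norm_nonneg _) (fun j _ => hb1 _)
      _ = _ := by simp
  have hmi : Integrable m ν := Integrable.of_bound hmm.aestronglyMeasurable K (Eventually.of_forall hK)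
  induction n with
  | zero => simp
  | succ n ih =>
    have e : ∀ x, ∏ j ∈ Finset.range (n+1), ((1 : ℂ) + I * (s * m (T^[j] x) : ℝ))
       = (∏ j ∈ Finset.range n, ((1 : ℂ) + I * (s * m (T^[j] (T x)) : ℝ)))
        + (I * s) * ((m x : ℂ) * ∏ j ∈ Finset.range n, ((1 : ℂ) + I * (s * m (T^[j] (T x)) : ℝ))) := by
      intro x
      rw [Finset.prod_range_succ']
      simp only [Function.iterate_succ, Function.comp, Function.iterate_zero, id]
      push_cast; ring
    simp_rw [e]
    rw [integral_add, integral_const_mul]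
    · rw [revMart_complex hT.measurable hmi hm (fun y => ∏ j ∈ Finset.range n, ((1 : ℂ) + I * (s * m (T^[j] y) : ℝ))) (hmeas n) ⟨_, hbd n⟩]
      have h7 := integral_map (μ := ν) hT.measurable.aemeasurable (f := fun y => ∏ j ∈ Finset.range n, ((1 : ℂ) + I * (s * m (T^[j] y) : ℝ))) (hmeas n).aestronglyMeasurable
      rw [hT.map_eq] at h7
      rw [← h7, ih]; simp
    · exact Integrable.of_bound ((hmeas n).comp hT.measurable).aestronglyMeasurable _ (Eventually.of_forall fun x => hbd n (T x))
    · apply Integrable.const_mul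
      apply Integrable.mul_bdd (c := (1 + |s| * K) ^ n) hmi.ofReal
      · exact ((hmeas n).comp hT.measurable).aestronglyMeasurable
      · exact Eventually.of_forall fun x => hbd n (T x)
end MartCLT2


section MartCLT3
open scoped Topology
open Complex (I)

lemma abs_exp_neg_sub_le {a b : ℝ} (ha : 0 ≤ a) (hb : 0 ≤ b) : |Real.exp (-a) - Real.exp (-b)| ≤ |a - b| := by
  wlog h : a ≤ b generalizing a b with H
  · rw [abs_sub_comm, abs_sub_comm a b]; exact H hb ha (le_of_not_ge h)
  have h1 : Real.exp (-b) ≤ Real.exp (-a) := Real.exp_le_exp.2 (by linarith)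
  rw [abs_of_nonneg (by linarith), abs_of_nonpos (by linarith)]
  have h2 : Real.exp (-b) = Real.exp (-a) * Real.exp (-(b - a)) := by rw [← Real.exp_add]; ring_nf
  have h3 := Real.add_one_le_exp (-(b-a))
  have h4 : Real.exp (-a) ≤ 1 := Real.exp_le_one_iff.2 (by linarith)
  have h5 := Real.exp_pos (-a)
  rw [h2]
  nlinarith

variable {Ω : Type*} [MeasurableSpace Ω] {ν : Measure Ω} [IsProbabilityMeasure ν] {T : Ω → Ω}

lemma mclt_bdd {m : Ω → ℝ} {K : ℝ} (hT : Ergodic T ν) (hmm : Measurable m) (hK : ∀ x, |m x| ≤ K)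
    (hm : RevMart ν T m) (t : ℝ) :
    Tendsto (fun n : ℕ => ∫ x, Complex.exp (I * (t * (√n)⁻¹ * ∑ j ∈ Finset.range n, m (T^[j] x) : ℝ)) ∂ν) atTop
      (𝓝 (Real.exp (-(t ^ 2 / 2 * ∫ x, m x ^ 2 ∂ν)) : ℝ)) := by
  have hT' := hT.toMeasurePreserving
  have : Nonempty Ω := by
    by_contra h
    rw [not_nonempty_iff] at h
    have h1 : ν univ = 0 := by rw [univ_eq_empty_iff.2 h]; simp
    simp at h1
  have hK0 : 0 ≤ K := (abs_nonneg _).trans (hK (Classical.arbitrary Ω))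
  have hv2 : MemLp (fun x => m x ^ 2) 2 ν := by
    apply MemLp.of_bound (hmm.pow_const 2).aestronglyMeasurable (K ^ 2)
    refine Eventually.of_forall fun x => ?_
    rw [Real.norm_eq_abs, abs_pow]; gcongr; exact hK x
  have herg := mean_ergodic_L1 hT (fun x => m x ^ 2) hv2
  set σ2 := ∫ x, m x ^ 2 ∂ν with hσ
  have hσ0 : 0 ≤ σ2 := integral_nonneg fun x => sq_nonneg _
  set A : ℕ → Ω → ℝ := fun n x => (n : ℝ)⁻¹ * ∑ j ∈ Finset.range n, m (T^[j] x) ^ 2 with hA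
  have hA0 : ∀ n x, 0 ≤ A n x := fun n x => by simp only [hA]; positivity
  have hAK : ∀ n x, A n x ≤ K ^ 2 := by
    intro n x
    have h1 : ∑ j ∈ Finset.range n, m (T^[j] x) ^ 2 ≤ n * K ^ 2 := by
      calc _ ≤ ∑ j ∈ Finset.range n, K ^ 2 := by
            apply Finset.sum_le_sum; intro j _; rw [← sq_abs]; gcongr; exact hK _
        _ = _ := by simp
    simp only [hA]
    rcases Nat.eq_zero_or_pos n with h | h
    · subst h; simp; positivity
    · have : (0 : ℝ) < n := by exact_mod_cast h
      rw [inv_mul_le_iff₀ this]; exact h1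
  have hAm : ∀ n, Measurable (A n) := by
    intro n
    apply Measurable.const_mul
    apply Finset.measurable_sum
    intro j _
    exact (hmm.comp (hT'.measurable.iterate j)).pow_const 2
  have hbound : ∀ᶠ n : ℕ in atTop, ‖(∫ x, Complex.exp (I * (t * (√n)⁻¹ * ∑ j ∈ Finset.range n, m (T^[j] x) : ℝ)) ∂ν) - (Real.exp (-(t ^ 2 / 2 * σ2)) : ℝ)‖
      ≤ 2 * (|t| * K) ^ 3 * (√n)⁻¹ + Real.exp (t ^ 2 * K ^ 2 / 2) * (t ^ 2 / 2) * ∫ x, |A n x - σ2| ∂ν := by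
    have hlim : Tendsto (fun n : ℕ => (|t| * K) * (√(n : ℝ))⁻¹) atTop (𝓝 0) := by
      rw [← mul_zero (|t| * K)]
      apply Tendsto.const_mul
      exact tendsto_inv_atTop_zero.comp (Real.tendsto_sqrt_atTop.comp tendsto_natCast_atTop_atTop)
    filter_upwards [hlim.eventually (Iio_mem_nhds zero_lt_one), eventually_ge_atTop 1] with n hn hn1
    have hnpos : (0 : ℝ) < n := by exact_mod_cast hn1
    have hsn : 0 < √(n : ℝ) := Real.sqrt_pos.2 hnpos
    set s := t * (√(n : ℝ))⁻¹ with hs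
    have hs2 : s ^ 2 = t ^ 2 * (n : ℝ)⁻¹ := by rw [hs, mul_pow, inv_pow, Real.sq_sqrt hnpos.le]
    set a : Ω → ℕ → ℂ := fun x j => Complex.exp (I * (s * m (T^[j] x) : ℝ)) with ha
    set b : Ω → ℕ → ℂ := fun x j => ((1 : ℂ) + I * (s * m (T^[j] x) : ℝ)) * (Real.exp (-((s * m (T^[j] x)) ^ 2 / 2)) : ℝ) with hb
    set P : Ω → ℂ := fun x => ∏ j ∈ Finset.range n, ((1 : ℂ) + I * (s * m (T^[j] x) : ℝ)) with hP
    have hP1 : ∫ x, P x ∂ν = 1 := mart_prod_integral hT' hmm hK hm s n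
    have hPm : Measurable P := by
      apply Finset.measurable_prod
      intro j _
      exact ((Complex.measurable_ofReal.comp ((hmm.comp (hT'.measurable.iterate j)).const_mul s)).const_mul I).const_add 1
    have hsum : ∀ x, ∑ j ∈ Finset.range n, (s * m (T^[j] x)) ^ 2 / 2 = t ^ 2 / 2 * A n x := by
      intro x
      simp only [hA, Finset.mul_sum]
      apply Finset.sum_congr rfl
      intro j _
      rw [mul_pow, hs2]; ring
    have hPb : ∀ x, ‖P x‖ ≤ Real.exp (t ^ 2 * K ^ 2 / 2) := by
      intro x
      rw [hP, norm_prod]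
      calc _ ≤ ∏ j ∈ Finset.range n, Real.exp ((s * m (T^[j] x)) ^ 2 / 2) :=
            Finset.prod_le_prod (fun _ _ => norm_nonneg _) (fun j _ => norm_one_add_I_mul_le _)
        _ = Real.exp (t ^ 2 / 2 * A n x) := by rw [← Real.exp_sum, hsum]
        _ ≤ _ := by
          apply Real.exp_le_exp.2
          have := hAK n x
          nlinarith [sq_nonneg t]
    have hprodb : ∀ x, ∏ j ∈ Finset.range n, b x j = P x * (Real.exp (-(t ^ 2 / 2 * A n x)) : ℝ) := by
      intro x
      simp only [hb, hP, Finset.prod_mul_distrib]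
      rw [← hsum x, ← Finset.sum_neg_distrib, Real.exp_sum]
      push_cast; rfl
    have hproda : ∀ x, Complex.exp (I * (s * ∑ j ∈ Finset.range n, m (T^[j] x) : ℝ)) = ∏ j ∈ Finset.range n, a x j := by
      intro x
      simp only [ha]
      rw [← Complex.exp_sum, ← Finset.mul_sum]
      push_cast
      rw [Finset.mul_sum]
    have hdiff : ∀ x, ‖∏ j ∈ Finset.range n, a x j - P x * (Real.exp (-(t ^ 2 / 2 * A n x)) : ℝ)‖ ≤ 2 * (|t| * K) ^ 3 * (√n)⁻¹ := by
      intro x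
      rw [← hprodb]
      refine (norm_prod_sub_prod_le' (a x) (b x) ?_ ?_ n).trans ?_
      · intro j; simp only [ha]; rw [mul_comm, Complex.norm_exp_ofReal_mul_I]
      · intro j; exact norm_b_le _
      · have hsm : ∀ j, |s * m (T^[j] x)| ≤ (|t| * K) * (√(n : ℝ))⁻¹ := by
          intro j
          rw [hs, abs_mul, abs_mul, abs_of_pos (inv_pos.2 hsn)]
          have := mul_le_mul_of_nonneg_left (hK (T^[j] x)) (by positivity : 0 ≤ |t| * (√(n:ℝ))⁻¹)
          linarith
        calc _ ≤ ∑ j ∈ Finset.range n, 2 * ((|t| * K) * (√(n : ℝ))⁻¹) ^ 3 := by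
              apply Finset.sum_le_sum
              intro j _
              refine (norm_a_sub_b_le _ ((hsm j).trans hn.le)).trans ?_
              gcongr; exact hsm j
          _ = n * (2 * ((|t| * K) * (√(n : ℝ))⁻¹) ^ 3) := by simp
          _ = 2 * (|t| * K) ^ 3 * (√n)⁻¹ := by
              have : (n : ℝ) = √n ^ 2 := (Real.sq_sqrt hnpos.le).symm
              rw [this]
              simp only [Real.sqrt_sq hsn.le]
              field_simp
          _ ≤ _ := le_rfl
    have ham : Measurable fun x => ∏ j ∈ Finset.range n, a x j := by
      apply Finset.measurable_prod
      intro j _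
      exact Complex.measurable_exp.comp ((Complex.measurable_ofReal.comp ((hmm.comp (hT'.measurable.iterate j)).const_mul s)).const_mul I)
    have hai : Integrable (fun x => ∏ j ∈ Finset.range n, a x j) ν := by
      apply Integrable.of_bound ham.aestronglyMeasurable 1
      refine Eventually.of_forall fun x => ?_
      rw [norm_prod]
      apply Finset.prod_le_one (fun _ _ => norm_nonneg _)
      intro j _; simp only [ha]; rw [mul_comm, Complex.norm_exp_ofReal_mul_I]
    have hPi : Integrable P ν := Integrable.of_bound hPm.aestronglyMeasurable _ (Eventually.of_forall hPb)
    have hAi : Integrable (fun x => |A n x - σ2|) ν := by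
      apply Integrable.abs
      apply Integrable.sub _ (integrable_const _)
      apply Integrable.of_bound (hAm n).aestronglyMeasurable (K ^ 2)
      refine Eventually.of_forall fun x => ?_
      rw [Real.norm_eq_abs, abs_of_nonneg (hA0 n x)]; exact hAK n x
    have e1 : (∫ x, Complex.exp (I * (s * ∑ j ∈ Finset.range n, m (T^[j] x) : ℝ)) ∂ν) - (Real.exp (-(t ^ 2 / 2 * σ2)) : ℝ)
        = ∫ x, (∏ j ∈ Finset.range n, a x j - P x * (Real.exp (-(t ^ 2 / 2 * σ2)) : ℝ)) ∂ν := by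
      rw [integral_sub hai (hPi.mul_const _), integral_mul_const, hP1, one_mul]
      simp_rw [hproda]
    rw [e1]
    calc _ ≤ ∫ x, (2 * (|t| * K) ^ 3 * (√n)⁻¹ + Real.exp (t ^ 2 * K ^ 2 / 2) * (t ^ 2 / 2) * |A n x - σ2|) ∂ν := by
          apply norm_integral_le_of_norm_le
          · exact (integrable_const _).add (hAi.const_mul _)
          · refine Eventually.of_forall fun x => ?_
            have e2 : ∏ j ∈ Finset.range n, a x j - P x * (Real.exp (-(t ^ 2 / 2 * σ2)) : ℝ)
              = (∏ j ∈ Finset.range n, a x j - P x * (Real.exp (-(t ^ 2 / 2 * A n x)) : ℝ))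
                + P x * ((Real.exp (-(t ^ 2 / 2 * A n x)) - Real.exp (-(t ^ 2 / 2 * σ2)) : ℝ) : ℂ) := by
              push_cast; ring
            rw [e2]
            refine (norm_add_le _ _).trans (add_le_add (hdiff x) ?_)
            rw [norm_mul, Complex.norm_real, Real.norm_eq_abs, mul_assoc]
            apply mul_le_mul (hPb x) _ (abs_nonneg _) (Real.exp_pos _).le
            refine (abs_exp_neg_sub_le ?_ ?_).trans ?_
            · have := hA0 n x; positivity
            · positivity
            · rw [← mul_sub, abs_mul, abs_of_nonneg (by positivity : 0 ≤ t ^ 2 / 2)]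
      _ = _ := by
          rw [integral_add (integrable_const _) (hAi.const_mul _), integral_const_mul _ (fun x => |A n x - σ2|)]; simp
  rw [tendsto_iff_norm_sub_tendsto_zero]
  refine squeeze_zero' (Eventually.of_forall fun n => norm_nonneg _) hbound ?_
  have h1 : Tendsto (fun n : ℕ => 2 * (|t| * K) ^ 3 * (√(n : ℝ))⁻¹) atTop (𝓝 (2 * (|t| * K) ^ 3 * 0)) := by
    apply Tendsto.const_mul
    exact tendsto_inv_atTop_zero.comp (Real.tendsto_sqrt_atTop.comp tendsto_natCast_atTop_atTop)
  have h2 := herg.const_mul (Real.exp (t ^ 2 * K ^ 2 / 2) * (t ^ 2 / 2))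
  have h3 := h1.add h2
  simpa using h3
end MartCLT3


section MartCLT4
set_option linter.unusedSectionVars false
open scoped Topology
open Complex (I)

variable {Ω : Type*} [mΩ : MeasurableSpace Ω] {ν : Measure Ω} [IsProbabilityMeasure ν] {T : Ω → Ω}

lemma revMart_congr {m m' : Ω → ℝ} (h : m =ᵐ[ν] m') (hm : RevMart ν T m) : RevMart ν T m' := by
  intro g hg hb
  rw [← hm g hg hb]
  apply integral_congr_ae
  filter_upwards [h] with x hx
  rw [hx]

lemma revMart_sub_condExp {f : Ω → ℝ} (hT : Measurable T) (hf : Integrable f ν) :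
    RevMart ν T (fun x => f x - (ν[f|MeasurableSpace.comap T mΩ]) x) := by
  intro g hg ⟨C, hC⟩
  have hle : MeasurableSpace.comap T mΩ ≤ mΩ := hT.comap_le
  have hgT : StronglyMeasurable[MeasurableSpace.comap T mΩ] (fun x => g (T x)) :=
    (hg.comp (comap_measurable T)).stronglyMeasurable
  have hi : Integrable (fun x => f x * g (T x)) ν := by
    apply Integrable.mul_bdd (c := C) hf
    · exact (hg.comp hT).aestronglyMeasurable
    · exact Eventually.of_forall fun x => hC _
  have hi2 : Integrable (fun x => (ν[f|MeasurableSpace.comap T mΩ]) x * g (T x)) ν := by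
    apply Integrable.mul_bdd (c := C) integrable_condExp
    · exact (hg.comp hT).aestronglyMeasurable
    · exact Eventually.of_forall fun x => hC _
  have h1 := condExp_mul_of_stronglyMeasurable_right (f := f) hgT hi hf
  have h2 := integral_condExp (μ := ν) hle (f := f * fun x => g (T x))
  rw [integral_congr_ae h1] at h2
  simp_rw [sub_mul]
  rw [integral_sub hi hi2]
  rw [sub_eq_zero]
  exact h2.symm

lemma revMart_condExp {m : Ω → ℝ} (hT : Measurable T) (hmi : Integrable m ν) (hm : RevMart ν T m) :
    ν[m|MeasurableSpace.comap T mΩ] =ᵐ[ν] 0 := by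
  have hle : MeasurableSpace.comap T mΩ ≤ mΩ := hT.comap_le
  symm
  apply ae_eq_condExp_of_forall_setIntegral_eq hle hmi
  · intro s _ _; exact (integrable_zero _ _ _).integrableOn
  · rintro s ⟨A, hA, rfl⟩ _
    have := hm (A.indicator fun _ => 1) (measurable_const.indicator hA) ⟨1, fun x => by
      by_cases h : x ∈ A <;> simp [h]⟩
    simp only [Pi.zero_apply, integral_zero]
    rw [← this, ← integral_indicator (hT hA)]
    congr 1; ext x
    by_cases h : T x ∈ A <;> simp [h, indicator]
  · exact aestronglyMeasurable_zero

lemma revMart_L2 {m g : Ω → ℝ} (hT : MeasurePreserving T ν ν) (hm2 : MemLp m 2 ν) (hm : RevMart ν T m)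
    (hg : Measurable g) (hg2 : MemLp g 2 ν) : ∫ x, m x * g (T x) ∂ν = 0 := by
  have hgT : MemLp (g ∘ T) 2 ν := hg2.comp_measurePreserving hT
  have hIntg : Integrable (fun x => m x * g (T x)) ν := hm2.integrable_mul hgT
  have key : Tendsto (fun N : ℕ => ∫ x, m x * (max (-(N:ℝ)) (min N (g (T x)))) ∂ν) atTop (𝓝 (∫ x, m x * g (T x) ∂ν)) := by
    apply tendsto_integral_of_dominated_convergence (fun x => ‖m x * g (T x)‖)
    · intro N
      exact hm2.1.mul (measurable_const.max (measurable_const.min (hg.comp hT.measurable))).aestronglyMeasurable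
    · exact hIntg.norm
    · intro N
      refine Eventually.of_forall fun x => ?_
      rw [norm_mul, norm_mul]
      gcongr
      rw [Real.norm_eq_abs, Real.norm_eq_abs]
      have hN : (0:ℝ) ≤ N := Nat.cast_nonneg N
      rw [abs_le]
      constructor
      · rcases le_total (0:ℝ) (g (T x)) with h | h
        · exact (neg_nonpos.2 (abs_nonneg _)).trans (le_max_of_le_right (le_min hN h))
        · rw [abs_of_nonpos h, neg_neg]; exact le_max_of_le_right (le_min (h.trans hN) le_rfl)
      · exact max_le ((neg_nonpos.2 hN).trans (abs_nonneg _)) ((min_le_right _ _).trans (le_abs_self _))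
    · refine Eventually.of_forall fun x => ?_
      apply tendsto_const_nhds.congr'
      obtain ⟨N, hN⟩ := exists_nat_ge |g (T x)|
      filter_upwards [eventually_ge_atTop N] with n hn
      have : |g (T x)| ≤ n := hN.trans (by exact_mod_cast hn)
      rw [abs_le] at this
      rw [min_eq_right this.2, max_eq_right this.1]
  refine tendsto_nhds_unique key ?_
  have : ∀ N : ℕ, ∫ x, m x * (max (-(N:ℝ)) (min N (g (T x)))) ∂ν = 0 := by
    intro N
    apply hm (fun y => max (-(N:ℝ)) (min N (g y))) (measurable_const.max (measurable_const.min hg))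
    refine ⟨N, fun x => abs_le.2 ⟨le_max_left _ _, max_le ?_ (min_le_left _ _)⟩⟩
    have hN : (0:ℝ) ≤ N := Nat.cast_nonneg N
    linarith
  simp_rw [this]
  exact tendsto_const_nhds

lemma birk_memLp {d : Ω → ℝ} (hT : MeasurePreserving T ν ν) (hd : MemLp d 2 ν) (n : ℕ) :
    MemLp (fun x => ∑ j ∈ Finset.range n, d (T^[j] x)) 2 ν :=
  memLp_finsetSum _ fun j _ => hd.comp_measurePreserving (hT.iterate j)

lemma birk_sq {d : Ω → ℝ} (hT : MeasurePreserving T ν ν) (hdm : Measurable d) (hd : MemLp d 2 ν) (hm : RevMart ν T d) (n : ℕ) :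
    ∫ x, (∑ j ∈ Finset.range n, d (T^[j] x)) ^ 2 ∂ν = n * ∫ x, d x ^ 2 ∂ν := by
  induction n with
  | zero => simp
  | succ n ih =>
    have hS := birk_memLp hT hd n
    have hSm : Measurable (fun x => ∑ j ∈ Finset.range n, d (T^[j] x)) :=
      Finset.measurable_sum _ fun j _ => hdm.comp (hT.measurable.iterate j)
    have hST := hS.comp_measurePreserving hT
    have e : ∀ x, (∑ j ∈ Finset.range (n+1), d (T^[j] x)) ^ 2 = d x ^ 2 +
        (2 * (d x * ∑ j ∈ Finset.range n, d (T^[j] (T x))) + (∑ j ∈ Finset.range n, d (T^[j] (T x))) ^ 2) := by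
      intro x
      rw [Finset.sum_range_succ']
      simp only [Function.iterate_succ, Function.comp, Function.iterate_zero, id]
      ring
    simp_rw [e]
    have i3 : Integrable (fun x => (∑ j ∈ Finset.range n, d (T^[j] (T x))) ^ 2) ν := hST.integrable_sq
    have i2 : Integrable (fun x => 2 * (d x * ∑ j ∈ Finset.range n, d (T^[j] (T x)))) ν := (hd.integrable_mul hST).const_mul 2
    rw [integral_add (g := fun x => 2 * (d x * ∑ j ∈ Finset.range n, d (T^[j] (T x))) + (∑ j ∈ Finset.range n, d (T^[j] (T x))) ^ 2) hd.integrable_sq (i2.add i3), integral_add i2 i3, integral_const_mul, revMart_L2 hT hd hm hSm hS]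
    have h7 := integral_map (μ := ν) hT.measurable.aemeasurable (f := fun y => (∑ j ∈ Finset.range n, d (T^[j] y)) ^ 2) (hSm.pow_const 2).aestronglyMeasurable
    rw [hT.map_eq] at h7
    rw [← h7, ih]; push_cast; ring

lemma revMart_approx {m : Ω → ℝ} (hT : Measurable T) (hmm : Measurable m) (hm2 : MemLp m 2 ν) (hm : RevMart ν T m)
    {ε : ℝ} (hε : 0 < ε) : ∃ m' : Ω → ℝ, Measurable m' ∧ (∃ K, ∀ x, |m' x| ≤ K) ∧ RevMart ν T m' ∧
      ∫ x, (m x - m' x) ^ 2 ∂ν ≤ ε ^ 2 := by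
  have hle : MeasurableSpace.comap T mΩ ≤ mΩ := hT.comap_le
  obtain ⟨M, hM, hMε⟩ := hm2.eLpNorm_indicator_norm_ge_pos_le hmm.stronglyMeasurable (half_pos hε)
  set b := {x | M ≤ ‖m x‖₊}.indicator m with hb
  set A := {x | M ≤ ‖m x‖₊} with hA
  have hAm : MeasurableSet A := measurableSet_le measurable_const hmm.norm
  have hbm : Measurable b := hmm.indicator hAm
  have hb2 : MemLp b 2 ν := hm2.indicator hAm
  set tr := fun x => m x - b x with htr
  have htrm : Measurable tr := hmm.sub hbm
  have htrb : ∀ x, |tr x| ≤ M := by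
    intro x
    simp only [htr, hb]
    by_cases h : x ∈ A
    · simp [h, hM.le]
    · simp only [h, not_false_eq_true, indicator_of_notMem, sub_zero]
      simp only [hA, mem_ofPred_eq, not_le, coe_nnnorm, Real.norm_eq_abs] at h
      exact h.le
  have htri : Integrable tr ν := Integrable.of_bound htrm.aestronglyMeasurable M (Eventually.of_forall htrb)
  set E := ν[tr|MeasurableSpace.comap T mΩ] with hE
  have hEm : Measurable E := (stronglyMeasurable_condExp.mono hle).measurable
  have hEb : ∀ᵐ x ∂ν, |E x| ≤ M := by
    exact ae_bdd_abs_condExp_of_ae_bdd_abs (Eventually.of_forall htrb)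
  have hae : (fun x => tr x - E x) =ᵐ[ν] fun x => tr x - max (-M) (min M (E x)) := by
    filter_upwards [hEb] with x hx
    rw [abs_le] at hx
    rw [min_eq_right hx.2, max_eq_right hx.1]
  have hEeq : (fun x => m x - (tr x - max (-M) (min M (E x)))) =ᵐ[ν] fun x => b x - (ν[b|MeasurableSpace.comap T mΩ]) x := by
    have h1 := revMart_condExp hT (hm2.integrable one_le_two) hm
    have h2 : ν[tr|MeasurableSpace.comap T mΩ] =ᵐ[ν] ν[m|MeasurableSpace.comap T mΩ] - ν[b|MeasurableSpace.comap T mΩ] :=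
      condExp_sub (hm2.integrable one_le_two) (hb2.integrable one_le_two) _
    filter_upwards [hae, h1, h2] with x h3 h1 h2
    rw [← h3]
    have h5 : E x = - (ν[b|MeasurableSpace.comap T mΩ]) x := by
      rw [hE, h2, Pi.sub_apply, h1]; simp
    rw [h5]
    simp only [htr]
    ring
  refine ⟨fun x => tr x - max (-M) (min M (E x)), htrm.sub (measurable_const.max (measurable_const.min hEm)),
    ⟨M + M, fun x => ?_⟩, revMart_congr hae (revMart_sub_condExp hT htri), ?_⟩
  · refine (abs_sub _ _).trans (add_le_add (htrb x) ?_)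
    exact abs_le.2 ⟨le_max_left _ _, max_le (by linarith) (min_le_left _ _)⟩
  · have h1 : eLpNorm (fun x => m x - (tr x - max (-M) (min M (E x)))) 2 ν ≤ ENNReal.ofReal ε := by
      rw [eLpNorm_congr_ae hEeq]
      refine (eLpNorm_sub_le hbm.aestronglyMeasurable (stronglyMeasurable_condExp.mono hle).aestronglyMeasurable one_le_two).trans ?_
      refine (add_le_add hMε ((eLpNorm_condExp_le_eLpNorm _ one_le_two).trans hMε)).trans ?_
      rw [← ENNReal.ofReal_add (by linarith) (by linarith)]
      simp
    have hmem : MemLp (fun x => m x - (tr x - max (-M) (min M (E x)))) 2 ν :=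
      ⟨(hmm.sub (htrm.sub (measurable_const.max (measurable_const.min hEm)))).aestronglyMeasurable, h1.trans_lt ENNReal.ofReal_lt_top⟩
    rw [hmem.eLpNorm_eq_integral_rpow_norm two_ne_zero ENNReal.ofNat_ne_top] at h1
    rw [ENNReal.ofReal_le_ofReal_iff hε.le] at h1
    simp only [ENNReal.toReal_ofNat, Real.rpow_two, Real.norm_eq_abs, sq_abs] at h1
    have h0 : 0 ≤ ∫ x, (m x - (tr x - max (-M) (min M (E x)))) ^ 2 ∂ν := integral_nonneg fun x => sq_nonneg _
    have h3 := pow_le_pow_left₀ (Real.rpow_nonneg h0 _) h1 2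
    rw [← Real.rpow_natCast, ← Real.rpow_mul h0] at h3
    norm_num at h3
    exact h3

lemma mclt {m : Ω → ℝ} (hT : Ergodic T ν) (hmm : Measurable m) (hm2 : MemLp m 2 ν)
    (hm : RevMart ν T m) (t : ℝ) :
    Tendsto (fun n : ℕ => ∫ x, Complex.exp (I * (t * (√n)⁻¹ * ∑ j ∈ Finset.range n, m (T^[j] x) : ℝ)) ∂ν) atTop
      (𝓝 (Real.exp (-(t ^ 2 / 2 * ∫ x, m x ^ 2 ∂ν)) : ℝ)) := by
  have hT' := hT.toMeasurePreserving
  set V := ∫ x, m x ^ 2 ∂ν with hV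
  have hV0 : 0 ≤ V := integral_nonneg fun x => sq_nonneg _
  rw [Metric.tendsto_atTop]
  intro δ hδ
  have hB : Tendsto (fun ε : ℝ => |t| * ε + t ^ 2 / 2 * (ε ^ 2 + ε + ε * V)) (𝓝[>] 0) (𝓝 0) := by
    have : Continuous (fun ε : ℝ => |t| * ε + t ^ 2 / 2 * (ε ^ 2 + ε + ε * V)) := by fun_prop
    have h := this.tendsto 0
    simp only [mul_zero, ne_eq, OfNat.ofNat_ne_zero, not_false_eq_true, zero_pow, add_zero, zero_mul] at h
    exact h.mono_left nhdsWithin_le_nhds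
  obtain ⟨ε, hεB, hε⟩ := ((hB.eventually (gt_mem_nhds (half_pos hδ))).and self_mem_nhdsWithin).exists
  replace hε : 0 < ε := hε
  obtain ⟨m', hm'm, ⟨K, hK⟩, hm'r, hd⟩ := revMart_approx hT'.measurable hmm hm2 hm hε
  have hm'2 : MemLp m' 2 ν := MemLp.of_bound hm'm.aestronglyMeasurable K (Eventually.of_forall hK)
  set d := fun x => m x - m' x with hdd
  have hdm : Measurable d := hmm.sub hm'm
  have hd2 : MemLp d 2 ν := hm2.sub hm'2
  have hdr : RevMart ν T d := by
    intro g hg hgb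
    have h1 := hm g hg hgb
    have h2 := hm'r g hg hgb
    obtain ⟨C, hC⟩ := hgb
    simp only [hdd, sub_mul]
    have hb : ∀ u : Ω → ℝ, MemLp u 2 ν → Integrable (fun x => u x * g (T x)) ν := by
      intro u hu
      apply Integrable.mul_bdd (c := C) (hu.integrable one_le_two)
      · exact (hg.comp hT'.measurable).aestronglyMeasurable
      · exact Eventually.of_forall fun x => hC _
    rw [integral_sub (hb _ hm2) (hb _ hm'2), h1, h2, sub_zero]
  obtain ⟨N, hN⟩ := (Metric.tendsto_atTop.1 (mclt_bdd hT hm'm hK hm'r t)) (δ / 2) (half_pos hδ)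
  refine ⟨N, fun n hn => ?_⟩
  have hSm : ∀ u : Ω → ℝ, Measurable u → Measurable (fun x => ∑ j ∈ Finset.range n, u (T^[j] x)) := fun u hu =>
      Finset.measurable_sum _ fun j _ => hu.comp (hT'.measurable.iterate j)
  have hIe : ∀ u : Ω → ℝ, Measurable u → Integrable (fun x => Complex.exp (I * (t * (√n)⁻¹ * ∑ j ∈ Finset.range n, u (T^[j] x) : ℝ))) ν := by
    intro u hu
    refine Integrable.of_bound (C := 1) ?_ (Eventually.of_forall fun x => ?_)
    · exact (Complex.measurable_exp.comp ((Complex.measurable_ofReal.comp ((hSm u hu).const_mul _)).const_mul I)).aestronglyMeasurable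
    · rw [mul_comm, Complex.norm_exp_ofReal_mul_I]
  have hn0 : (0:ℝ) ≤ n := Nat.cast_nonneg n
  have hA : dist (∫ x, Complex.exp (I * (t * (√n)⁻¹ * ∑ j ∈ Finset.range n, m (T^[j] x) : ℝ)) ∂ν)
      (∫ x, Complex.exp (I * (t * (√n)⁻¹ * ∑ j ∈ Finset.range n, m' (T^[j] x) : ℝ)) ∂ν) ≤ |t| * ε := by
    rw [dist_eq_norm, ← integral_sub (hIe m hmm) (hIe m' hm'm)]
    have hpt : ∀ x, ‖Complex.exp (I * (t * (√n)⁻¹ * ∑ j ∈ Finset.range n, m (T^[j] x) : ℝ)) -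
       Complex.exp (I * (t * (√n)⁻¹ * ∑ j ∈ Finset.range n, m' (T^[j] x) : ℝ))‖ ≤
       |t| * (((n:ℝ)⁻¹ * (∑ j ∈ Finset.range n, d (T^[j] x)) ^ 2 / ε + ε) / 2) := by
      intro x
      set A := ∑ j ∈ Finset.range n, m (T^[j] x)
      set B := ∑ j ∈ Finset.range n, m' (T^[j] x)
      have hAB : ∑ j ∈ Finset.range n, d (T^[j] x) = A - B := by
        simp only [hdd, A, B, Finset.sum_sub_distrib]
      rw [hAB]
      have e : Complex.exp (I * (t * (√n)⁻¹ * A : ℝ)) - Complex.exp (I * (t * (√n)⁻¹ * B : ℝ)) =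
        Complex.exp (I * (t * (√n)⁻¹ * B : ℝ)) * (Complex.exp (I * (t * ((√n)⁻¹ * (A - B)) : ℝ)) - 1) := by
        rw [mul_sub, ← Complex.exp_add, mul_one]
        congr 2
        push_cast; ring
      rw [e, norm_mul, mul_comm I, Complex.norm_exp_ofReal_mul_I, one_mul]
      refine Real.norm_exp_I_mul_ofReal_sub_one_le.trans ?_
      rw [Real.norm_eq_abs, abs_mul]
      gcongr
      have hs : (n:ℝ)⁻¹ * (A - B) ^ 2 = ((√n)⁻¹ * (A - B)) ^ 2 := by
        rw [mul_pow, inv_pow, Real.sq_sqrt hn0]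
      rw [hs]
      set y := (√n)⁻¹ * (A - B)
      rw [div_add' _ _ _ hε.ne', div_div, le_div_iff₀ (by positivity)]
      rw [← sq_abs y]
      nlinarith [sq_nonneg (|y| - ε)]
    refine (norm_integral_le_of_norm_le ?_ (Eventually.of_forall hpt)).trans ?_
    · exact (((((birk_memLp hT' hd2 n).integrable_sq.const_mul _).div_const _).add (integrable_const _)).div_const _).const_mul _
    · have hi := (((birk_memLp hT' hd2 n).integrable_sq.const_mul (n:ℝ)⁻¹).div_const ε)
      rw [integral_const_mul, integral_div, integral_add hi (integrable_const _), integral_div, integral_const_mul, birk_sq hT' hdm hd2 hdr]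
      simp only [integral_const, probReal_univ, smul_eq_mul, one_mul]
      gcongr
      have h0 : 0 ≤ ∫ x, d x ^ 2 ∂ν := integral_nonneg fun x => sq_nonneg _
      have h1 : (n:ℝ)⁻¹ * (n * ∫ x, d x ^ 2 ∂ν) ≤ ε ^ 2 := by
        rcases eq_or_ne (n:ℝ) 0 with h | h
        · rw [h]; simp; positivity
        · rw [inv_mul_cancel_left₀ h]; exact hd
      have h2 : (n:ℝ)⁻¹ * (n * ∫ x, d x ^ 2 ∂ν) / ε ≤ ε := by
        rw [div_le_iff₀ hε]; linarith [sq ε]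
      linarith
  have hC : dist ((Real.exp (-(t ^ 2 / 2 * ∫ x, m' x ^ 2 ∂ν)) : ℝ) : ℂ) (Real.exp (-(t ^ 2 / 2 * V)) : ℝ) ≤
     t ^ 2 / 2 * (ε ^ 2 + ε + ε * V) := by
    rw [dist_eq_norm, ← Complex.ofReal_sub, Complex.norm_real, Real.norm_eq_abs]
    have h0 : 0 ≤ ∫ x, m' x ^ 2 ∂ν := integral_nonneg fun x => sq_nonneg _
    refine (abs_exp_neg_sub_le (by positivity) (by positivity)).trans ?_
    rw [← mul_sub, abs_mul, abs_of_nonneg (by positivity : 0 ≤ t ^ 2 / 2)]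
    gcongr
    rw [hV, ← integral_sub hm'2.integrable_sq hm2.integrable_sq, ← Real.norm_eq_abs]
    have hpt : ∀ x, ‖m' x ^ 2 - m x ^ 2‖ ≤ d x ^ 2 + (d x ^ 2 / ε + ε * m x ^ 2) := by
      intro x
      have e : m' x ^ 2 - m x ^ 2 = d x ^ 2 - 2 * (m x * d x) := by simp only [hdd]; ring
      rw [e]
      refine (norm_sub_le _ _).trans ?_
      rw [Real.norm_eq_abs, Real.norm_eq_abs, abs_of_nonneg (sq_nonneg (d x))]
      gcongr
      rw [div_add' _ _ _ hε.ne', le_div_iff₀ hε]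
      have h3 : |2 * (m x * d x)| = 2 * (|m x| * |d x|) := by rw [abs_mul, abs_mul, abs_two]
      rw [h3, ← sq_abs (d x), ← sq_abs (m x)]
      nlinarith [sq_nonneg (|d x| - ε * |m x|)]
    have i1 := hd2.integrable_sq
    have i2 := i1.div_const ε
    have i3 := hm2.integrable_sq.const_mul ε
    refine (norm_integral_le_of_norm_le (i1.add (i2.add i3)) (Eventually.of_forall hpt)).trans ?_
    simp only [Pi.add_apply]
    rw [integral_add i1 (g := fun a => d a ^ 2 / ε + ε * m a ^ 2) (i2.add i3), integral_add i2 i3, integral_div, integral_const_mul, ← hV]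
    have h2 : (∫ x, d x ^ 2 ∂ν) / ε ≤ ε := by
        rw [div_le_iff₀ hε]; linarith [sq ε]
    linarith
  have h1 := hN n hn
  have h2 := dist_triangle4 (∫ x, Complex.exp (I * (t * (√n)⁻¹ * ∑ j ∈ Finset.range n, m (T^[j] x) : ℝ)) ∂ν)
      (∫ x, Complex.exp (I * (t * (√n)⁻¹ * ∑ j ∈ Finset.range n, m' (T^[j] x) : ℝ)) ∂ν)
      ((Real.exp (-(t ^ 2 / 2 * ∫ x, m' x ^ 2 ∂ν)) : ℝ) : ℂ) ((Real.exp (-(t ^ 2 / 2 * V)) : ℝ) : ℂ)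
  linarith
end MartCLT4


section MartCLT5
set_option linter.unusedSectionVars false
open scoped Topology
open Complex (I)

variable {Ω : Type*} [mΩ : MeasurableSpace Ω] {ν : Measure Ω} [IsProbabilityMeasure ν] {T : Ω → Ω}

lemma norm_exp_sub_exp_le_min (a c : ℝ) (B : ℝ) :
    ‖Complex.exp (I * (B + (a - c) : ℝ)) - Complex.exp (I * (B : ℝ))‖ ≤ min 2 |a| + min 2 |c| := by
  have e : Complex.exp (I * (B + (a - c) : ℝ)) - Complex.exp (I * (B : ℝ)) =
      Complex.exp (I * (B : ℝ)) * (Complex.exp (I * (a - c : ℝ)) - 1) := by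
    rw [mul_sub, ← Complex.exp_add, mul_one]
    congr 2
    push_cast; ring
  have h1 : ‖Complex.exp (I * (a - c : ℝ)) - 1‖ ≤ |a - c| := Real.norm_exp_I_mul_ofReal_sub_one_le
  have h2 : ‖Complex.exp (I * (a - c : ℝ)) - 1‖ ≤ 2 := by
    refine (norm_sub_le _ _).trans ?_
    rw [mul_comm, Complex.norm_exp_ofReal_mul_I]; norm_num
  rw [e, norm_mul, mul_comm I, Complex.norm_exp_ofReal_mul_I, one_mul]
  have h3 := abs_sub a c
  have h4 := abs_nonneg a
  have h5 := abs_nonneg c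
  rcases min_cases (2:ℝ) |a| with ⟨h, _⟩ | ⟨h, _⟩ <;> rcases min_cases (2:ℝ) |c| with ⟨h', _⟩ | ⟨h', _⟩ <;> rw [h, h'] <;> linarith

lemma clt_coboundary {m ψ χ : Ω → ℝ} (hT : Ergodic T ν) (hmm : Measurable m) (hm2 : MemLp m 2 ν)
    (hm : RevMart ν T m) (hψ : Measurable ψ) (hχ : Measurable χ) (hco : ∀ᵐ x ∂ν, ψ x = m x + χ (T x) - χ x) :
    ∃ σ : ℝ≥0, ∀ g : BoundedContinuousFunction ℝ ℝ,
      Tendsto (fun n : ℕ => ∫ x, g ((n : ℝ) ^ (-(1 / 2 : ℝ)) * ∑ j ∈ Finset.range n, ψ (T^[j] x)) ∂ν)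
        atTop (nhds (∫ y, g y ∂(ProbabilityTheory.gaussianReal 0 (σ ^ 2)))) := by
  have hT' := hT.toMeasurePreserving
  have hV0 : 0 ≤ ∫ x, m x ^ 2 ∂ν := integral_nonneg fun x => sq_nonneg _
  have hsq : ∀ n : ℕ, (n : ℝ) ^ (-(1 / 2 : ℝ)) = (√n)⁻¹ := by
    intro n
    rw [Real.rpow_neg (Nat.cast_nonneg n), Real.sqrt_eq_rpow]
  have hSm : ∀ u : Ω → ℝ, Measurable u → ∀ n : ℕ, Measurable (fun x => ∑ j ∈ Finset.range n, u (T^[j] x)) := fun u hu n =>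
      Finset.measurable_sum _ fun j _ => hu.comp (hT'.measurable.iterate j)
  have hIe : ∀ u : Ω → ℝ, Measurable u → ∀ t : ℝ, ∀ n : ℕ, Integrable (fun x => Complex.exp (I * (t * (√n)⁻¹ * ∑ j ∈ Finset.range n, u (T^[j] x) : ℝ))) ν := by
    intro u hu t n
    refine Integrable.of_bound (C := 1) ?_ (Eventually.of_forall fun x => ?_)
    · exact (Complex.measurable_exp.comp ((Complex.measurable_ofReal.comp ((hSm u hu n).const_mul _)).const_mul I)).aestronglyMeasurable
    · rw [mul_comm, Complex.norm_exp_ofReal_mul_I]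
  have hsum : ∀ᵐ x ∂ν, ∀ n : ℕ, ∑ j ∈ Finset.range n, ψ (T^[j] x) = ∑ j ∈ Finset.range n, m (T^[j] x) + (χ (T^[n] x) - χ x) := by
    have h1 : ∀ᵐ x ∂ν, ∀ j : ℕ, ψ (T^[j] x) = m (T^[j] x) + χ (T (T^[j] x)) - χ (T^[j] x) :=
      ae_all_iff.2 fun j => (hT'.iterate j).quasiMeasurePreserving.ae hco
    filter_upwards [h1] with x hx n
    induction n with
    | zero => simp
    | succ n ih =>
      rw [Finset.sum_range_succ, Finset.sum_range_succ, ih, hx n, Function.iterate_succ_apply']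
      ring
  have hchar : ∀ t : ℝ, Tendsto (fun n : ℕ => ∫ x, Complex.exp (I * (t * (√n)⁻¹ * ∑ j ∈ Finset.range n, ψ (T^[j] x) : ℝ)) ∂ν) atTop
      (𝓝 (Real.exp (-(t ^ 2 / 2 * ∫ x, m x ^ 2 ∂ν)) : ℝ)) := by
    intro t
    have hb : ∀ n : ℕ, Measurable (fun x => min 2 |t * (√n)⁻¹ * χ x|) := fun n => measurable_const.min (hχ.const_mul _).norm
    have hbd : ∀ n : ℕ, ∀ x, ‖min 2 |t * (√n)⁻¹ * χ x|‖ ≤ 2 := fun n x => by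
      rw [Real.norm_eq_abs, abs_of_nonneg (le_min zero_le_two (abs_nonneg _))]
      exact min_le_left _ _
    have hbi : ∀ n : ℕ, Integrable (fun x => min 2 |t * (√n)⁻¹ * χ x|) ν := fun n =>
      Integrable.of_bound (hb n).aestronglyMeasurable 2 (Eventually.of_forall (hbd n))
    have hbi2 : ∀ n : ℕ, Integrable (fun x => min 2 |t * (√n)⁻¹ * χ (T^[n] x)|) ν := fun n =>
      Integrable.of_bound ((hb n).comp (hT'.measurable.iterate n)).aestronglyMeasurable 2 (Eventually.of_forall fun x => hbd n _)
    have hlim : Tendsto (fun n : ℕ => 2 * ∫ x, min 2 |t * (√n)⁻¹ * χ x| ∂ν) atTop (𝓝 0) := by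
      have : Tendsto (fun n : ℕ => ∫ x, min 2 |t * (√n)⁻¹ * χ x| ∂ν) atTop (𝓝 (∫ x, (0:ℝ) ∂ν)) := by
        apply tendsto_integral_of_dominated_convergence (fun _ => 2)
        · exact fun n => (hb n).aestronglyMeasurable
        · exact integrable_const _
        · exact fun n => Eventually.of_forall (hbd n)
        · refine Eventually.of_forall fun x => ?_
          have h1 : Tendsto (fun n : ℕ => (√(n:ℝ))⁻¹) atTop (𝓝 0) :=
            tendsto_inv_atTop_zero.comp (Real.tendsto_sqrt_atTop.comp tendsto_natCast_atTop_atTop)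
          have h2 : Tendsto (fun n : ℕ => min 2 |t * (√(n:ℝ))⁻¹ * χ x|) atTop (𝓝 (min 2 |t * 0 * χ x|)) :=
            tendsto_const_nhds.min ((h1.const_mul t).mul_const _).abs
          simpa using h2
      simpa using this.const_mul 2
    have hdiff : Tendsto (fun n : ℕ => (∫ x, Complex.exp (I * (t * (√n)⁻¹ * ∑ j ∈ Finset.range n, ψ (T^[j] x) : ℝ)) ∂ν) -
        ∫ x, Complex.exp (I * (t * (√n)⁻¹ * ∑ j ∈ Finset.range n, m (T^[j] x) : ℝ)) ∂ν) atTop (𝓝 0) := by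
      refine squeeze_zero_norm (fun n => ?_) hlim
      rw [← integral_sub (hIe ψ hψ t n) (hIe m hmm t n)]
      have hpt : ∀ᵐ x ∂ν, ‖Complex.exp (I * (t * (√n)⁻¹ * ∑ j ∈ Finset.range n, ψ (T^[j] x) : ℝ)) -
         Complex.exp (I * (t * (√n)⁻¹ * ∑ j ∈ Finset.range n, m (T^[j] x) : ℝ))‖ ≤
         min 2 |t * (√n)⁻¹ * χ (T^[n] x)| + min 2 |t * (√n)⁻¹ * χ x| := by
        filter_upwards [hsum] with x hx
        rw [hx n, mul_add (t * (√n)⁻¹), mul_sub]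
        exact norm_exp_sub_exp_le_min _ _ _
      refine (norm_integral_le_of_norm_le ((hbi2 n).add (hbi n)) hpt).trans ?_
      simp only [Pi.add_apply]
      rw [integral_add (hbi2 n) (hbi n)]
      have h7 := integral_map (μ := ν) (hT'.iterate n).measurable.aemeasurable (hb n).aestronglyMeasurable
      rw [(hT'.iterate n).map_eq] at h7
      rw [← h7]
      linarith
    have := hdiff.add (mclt hT hmm hm2 hm t)
    simpa using this
  set σ : ℝ≥0 := ⟨√(∫ x, m x ^ 2 ∂ν), Real.sqrt_nonneg _⟩ with hσ
  refine ⟨σ, ?_⟩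
  have hXm : ∀ n : ℕ, Measurable fun x => (n : ℝ) ^ (-(1 / 2 : ℝ)) * ∑ j ∈ Finset.range n, ψ (T^[j] x) := fun n => (hSm ψ hψ n).const_mul _
  let P : ℕ → ProbabilityMeasure ℝ := fun n => ⟨ν.map (fun x => (n : ℝ) ^ (-(1 / 2 : ℝ)) * ∑ j ∈ Finset.range n, ψ (T^[j] x)), Measure.isProbabilityMeasure_map (hXm n).aemeasurable⟩
  let P0 : ProbabilityMeasure ℝ := ⟨ProbabilityTheory.gaussianReal 0 (σ ^ 2), inferInstance⟩
  have hP : Tendsto P atTop (𝓝 P0) := by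
    apply ProbabilityMeasure.tendsto_of_tendsto_charFun
    intro t
    have h0 : charFun (P0 : Measure ℝ) t = (Real.exp (-(t ^ 2 / 2 * ∫ x, m x ^ 2 ∂ν)) : ℝ) := by
      show charFun (ProbabilityTheory.gaussianReal 0 (σ ^ 2)) t = _
      rw [ProbabilityTheory.charFun_gaussianReal, Complex.ofReal_exp]
      congr 1
      have : ((σ ^ 2 : ℝ≥0) : ℝ) = ∫ x, m x ^ 2 ∂ν := by
        rw [NNReal.coe_pow]; exact Real.sq_sqrt hV0
      rw [this]
      push_cast; ring
    rw [h0]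
    refine (hchar t).congr fun n => ?_
    show _ = charFun (ν.map (fun x => (n : ℝ) ^ (-(1 / 2 : ℝ)) * ∑ j ∈ Finset.range n, ψ (T^[j] x))) t
    rw [charFun_apply_real, integral_map (hXm n).aemeasurable (by fun_prop)]
    congr 1; ext x
    rw [hsq]
    congr 1
    push_cast; ring
  rw [ProbabilityMeasure.tendsto_iff_forall_integral_tendsto] at hP
  intro g
  refine (hP g).congr fun n => ?_
  show ∫ y, g y ∂(ν.map _) = _
  rw [integral_map (hXm n).aemeasurable g.continuous.aestronglyMeasurable]
end MartCLT5


section Tower6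
set_option linter.unusedSectionVars false
open scoped Topology ENNReal

variable {X : Type*} [MeasurableSpace X]

noncomputable def towerMeas (κ : X → ℕ) (m0 : Measure X) : Measure (X × ℕ) :=
  Measure.sum fun j : ℕ => (m0.restrict {x | j ≤ κ x}).map (fun x => (x, j))

def towerMap (f : X → X) (κ : X → ℕ) (p : X × ℕ) : X × ℕ :=
  if p.2 < κ p.1 then (p.1, p.2 + 1) else (f^[p.2 + 1] p.1, 0)

noncomputable def projMeas (f : X → X) (κ : X → ℕ) (m0 : Measure X) : Measure X :=
  (towerMeas κ m0).map (fun p => f^[p.2] p.1)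

variable {f : X → X} {κ : X → ℕ} {m0 : Measure X}

lemma measurable_towerMap (hf : Measurable f) (hκ : Measurable κ) : Measurable (towerMap f κ) := by
  apply measurable_from_prod_countable_left
  intro j
  unfold towerMap
  refine Measurable.ite (hκ (measurableSet_Ioi (a := j))) ?_ ?_
  · exact measurable_id.prodMk (measurable_const (a := j + 1))
  · exact (hf.iterate (j + 1)).prodMk (measurable_const (a := 0))

lemma measurable_towerProj (hf : Measurable f) : Measurable (fun p : X × ℕ => f^[p.2] p.1) := by
  apply measurable_from_prod_countable_left
  intro j
  exact hf.iterate j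

lemma measurable_base (hf : Measurable f) (hκ : Measurable κ) : Measurable (fun x => f^[κ x + 1] x) := by
  have : (fun x => f^[κ x + 1] x) = (fun p : X × ℕ => f^[p.2] p.1) ∘ (fun x => (x, κ x + 1)) := rfl
  rw [this]
  exact (measurable_towerProj hf).comp (measurable_id.prodMk (hκ.add_const 1))

lemma lintegral_tower (hκ : Measurable κ) {u : X × ℕ → ℝ≥0∞} (hu : Measurable u) :
    ∫⁻ p, u p ∂(towerMeas κ m0) = ∫⁻ x, ∑ j ∈ Finset.range (κ x + 1), u (x, j) ∂m0 := by
  have hm : ∀ j : ℕ, MeasurableSet {x | j ≤ κ x} := fun j => hκ (measurableSet_Ici (a := j))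
  have hmm : ∀ j : ℕ, Measurable (fun x : X => (x, j)) := fun j => measurable_id.prodMk measurable_const
  unfold towerMeas
  rw [lintegral_sum_measure]
  have h1 : ∀ j : ℕ, ∫⁻ p, u p ∂((m0.restrict {x | j ≤ κ x}).map (fun x => (x, j))) =
      ∫⁻ x, ({x | j ≤ κ x}.indicator (fun x => u (x, j))) x ∂m0 := by
    intro j
    rw [lintegral_map hu (hmm j), lintegral_indicator (hm j)]
  simp_rw [h1]
  rw [← lintegral_tsum]
  · congr 1; ext x
    rw [tsum_eq_sum (s := Finset.range (κ x + 1))]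
    · apply Finset.sum_congr rfl
      intro j hj
      have : j ≤ κ x := by simpa [Nat.lt_succ_iff] using hj
      simp [indicator, this]
    · intro j hj
      have : ¬ j ≤ κ x := by simpa [Nat.lt_succ_iff] using hj
      simp [indicator, this]
  · intro j
    exact ((hu.comp (hmm j)).indicator (hm j)).aemeasurable

lemma ae_tower (hκ : Measurable κ) {s : Set (X × ℕ)} (hs : MeasurableSet s) (h : ∀ᵐ x ∂m0, ∀ j ≤ κ x, (x, j) ∈ s) :
    ∀ᵐ p ∂(towerMeas κ m0), p ∈ s := by
  rw [ae_iff]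
  have e : {a | a ∉ s} = sᶜ := rfl
  rw [e, ← lintegral_indicator_one hs.compl, lintegral_tower hκ (measurable_one.indicator hs.compl)]
  rw [← lintegral_zero (μ := m0)]
  apply lintegral_congr_ae
  filter_upwards [h] with x hx
  apply Finset.sum_eq_zero
  intro j hj
  have : (x, j) ∈ s := hx j (by simpa [Nat.lt_succ_iff] using hj)
  simp [this]

lemma towerMap_mp (hf : Measurable f) (hκ : Measurable κ) (hG : MeasurePreserving (fun x => f^[κ x + 1] x) m0 m0) :
    MeasurePreserving (towerMap f κ) (towerMeas κ m0) (towerMeas κ m0) := by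
  refine ⟨measurable_towerMap hf hκ, ?_⟩
  have hT := measurable_towerMap hf hκ
  refine Measure.ext_of_lintegral _ fun u hu => ?_
  rw [lintegral_map hu hT, lintegral_tower hκ (u := fun p => u (towerMap f κ p)) (hu.comp hT), lintegral_tower hκ hu]
  have e1 : ∀ x, ∑ j ∈ Finset.range (κ x + 1), u (towerMap f κ (x, j)) = ∑ j ∈ Finset.range (κ x), u (x, j + 1) + u (f^[κ x + 1] x, 0) := by
    intro x
    rw [Finset.sum_range_succ]
    congr 1
    · apply Finset.sum_congr rfl
      intro j hj
      have : j < κ x := by simpa using hj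
      simp [towerMap, this]
    · simp [towerMap]
  have e2 : ∀ x, ∑ j ∈ Finset.range (κ x + 1), u (x, j) = ∑ j ∈ Finset.range (κ x), u (x, j + 1) + u (x, 0) := by
    intro x
    rw [Finset.sum_range_succ']
  simp_rw [e1, e2]
  have hu0 : Measurable (fun x => u (x, 0)) := hu.comp (measurable_id.prodMk measurable_const)
  have hu1 : Measurable (fun x => u (f^[κ x + 1] x, 0)) := hu0.comp hG.measurable
  rw [lintegral_add_right _ hu1, lintegral_add_right _ hu0]
  congr 1
  exact hG.lintegral_comp hu0

lemma tower_mem_iff {A : Set (X × ℕ)} (hA : towerMap f κ ⁻¹' A = A) (x : X) (j : ℕ) (hj : j ≤ κ x) :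
    (x, j) ∈ A ↔ (x, 0) ∈ A := by
  induction j with
  | zero => rfl
  | succ j ih =>
    rw [← ih (by omega)]
    conv_rhs => rw [← hA]
    have : j < κ x := by omega
    simp [towerMap, this]

lemma towerMap_ergodic (hf : Measurable f) (hκ : Measurable κ) (hG : Ergodic (fun x => f^[κ x + 1] x) m0) :
    Ergodic (towerMap f κ) (towerMeas κ m0) := by
  refine ⟨towerMap_mp hf hκ hG.toMeasurePreserving, ⟨fun A hAm hA => ?_⟩⟩
  have hA0m : MeasurableSet {x | (x, 0) ∈ A} := (measurable_id.prodMk measurable_const) hAm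
  have hA0 : (fun x => f^[κ x + 1] x) ⁻¹' {x | (x, 0) ∈ A} = {x | (x, 0) ∈ A} := by
    ext x
    have h1 := tower_mem_iff hA x (κ x) le_rfl
    show (f^[κ x + 1] x, 0) ∈ A ↔ (x, 0) ∈ A
    rw [← h1]
    conv_rhs => rw [← hA]
    simp [towerMap]
  have h := hG.toPreErgodic.aeconst_set hA0m hA0
  rw [eventuallyConst_set] at h ⊢
  rcases h with h | h
  · left
    apply ae_tower hκ hAm
    filter_upwards [h] with x hx j hj
    exact (tower_mem_iff hA x j hj).2 hx
  · right
    have : ∀ᵐ p ∂(towerMeas κ m0), p ∈ Aᶜ := by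
      apply ae_tower hκ hAm.compl
      filter_upwards [h] with x hx j hj
      have h1 : (x, 0) ∉ A := fun h => hx h
      exact fun h' => h1 ((tower_mem_iff hA x j hj).1 h')
    filter_upwards [this] with p hp using hp

lemma towerMeas_prob (hκ : Measurable κ) (h1 : ∫⁻ x, (κ x + 1 : ℝ≥0∞) ∂m0 = 1) : IsProbabilityMeasure (towerMeas κ m0) := by
  constructor
  rw [← lintegral_one, lintegral_tower hκ measurable_const]
  refine Eq.trans ?_ h1
  congr 1; ext x; simp

lemma tower_semiconj : Function.Semiconj (fun p : X × ℕ => f^[p.2] p.1) (towerMap f κ) f := by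
  intro p
  by_cases h : p.2 < κ p.1
  · simp only [towerMap, h, if_true]; rw [Function.iterate_succ_apply']
  · simp only [towerMap, h, if_false]; rw [Function.iterate_succ_apply']; simp

lemma projMeas_prob (hf : Measurable f) (hκ : Measurable κ) (h1 : ∫⁻ x, (κ x + 1 : ℝ≥0∞) ∂m0 = 1) :
    IsProbabilityMeasure (projMeas f κ m0) := by
  have := towerMeas_prob hκ h1
  exact Measure.isProbabilityMeasure_map (measurable_towerProj hf).aemeasurable

lemma projMeas_ergodic (hf : Measurable f) (hκ : Measurable κ) (hG : Ergodic (fun x => f^[κ x + 1] x) m0) :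
    Ergodic f (projMeas f κ m0) := by
  have h : MeasurePreserving (fun p : X × ℕ => f^[p.2] p.1) (towerMeas κ m0) (projMeas f κ m0) :=
    ⟨measurable_towerProj hf, rfl⟩
  exact h.ergodic_of_ergodic_semiconj (towerMap_ergodic hf hκ hG) hf tower_semiconj

lemma lintegral_projMeas (hf : Measurable f) (hκ : Measurable κ) {u : X → ℝ≥0∞} (hu : Measurable u) :
    ∫⁻ x, u x ∂(projMeas f κ m0) = ∫⁻ x, ∑ j ∈ Finset.range (κ x + 1), u (f^[j] x) ∂m0 := by
  unfold projMeas
  rw [lintegral_map hu (measurable_towerProj hf), lintegral_tower hκ (u := fun p => u (f^[p.2] p.1)) (hu.comp (measurable_towerProj hf))]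

lemma ac_projMeas (hf : Measurable f) (hκ : Measurable κ) : m0 ≪ projMeas f κ m0 := by
  refine Measure.AbsolutelyContinuous.mk fun s hs h0 => ?_
  rw [← lintegral_indicator_one hs, lintegral_projMeas hf hκ (measurable_one.indicator hs)] at h0
  rw [← nonpos_iff_eq_zero, ← h0, ← lintegral_indicator_one hs]
  apply lintegral_mono
  intro x
  exact Finset.single_le_sum (f := fun j => s.indicator (1 : X → ℝ≥0∞) (f^[j] x)) (fun _ _ => zero_le) (Finset.mem_range.2 (Nat.succ_pos _))

lemma measurable_birk_var (hf : Measurable f) {φ : X → ℝ} (hφ : Measurable φ) : Measurable (fun p : X × ℕ => ∑ i ∈ Finset.range p.2, φ (f^[i] p.1)) := by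
  apply measurable_from_prod_countable_left
  intro j
  exact Finset.measurable_sum (Finset.range j) fun i _ => hφ.comp (hf.iterate i)

theorem tower_clt (hf : Measurable f) (hκ : Measurable κ) (hG : Ergodic (fun x => f^[κ x + 1] x) m0)
    (h1 : ∫⁻ x, (κ x + 1 : ℝ≥0∞) ∂m0 = 1) {φ χ mY : X → ℝ} (hφ : Measurable φ) (hχ : Measurable χ) (hmY : Measurable mY)
    (hmY2 : MemLp mY 2 m0) (hmart : ∀ g : X → ℝ, Measurable g → (∃ C, ∀ x, |g x| ≤ C) → ∫ x, mY x * g (f^[κ x + 1] x) ∂m0 = 0)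
    (hco : ∀ᵐ x ∂m0, ∑ j ∈ Finset.range (κ x + 1), φ (f^[j] x) = mY x + χ (f^[κ x + 1] x) - χ x) :
    ∃ σ : ℝ≥0, ∀ g : BoundedContinuousFunction ℝ ℝ,
      Tendsto (fun n : ℕ => ∫ x, g ((n : ℝ) ^ (-(1 / 2 : ℝ)) * ∑ j ∈ Finset.range n, φ (f^[j] x)) ∂(projMeas f κ m0))
        atTop (nhds (∫ y, g y ∂(ProbabilityTheory.gaussianReal 0 (σ ^ 2)))) := by
  have hprob := towerMeas_prob hκ h1
  set ν := towerMeas κ m0 with hν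
  have herg := towerMap_ergodic hf hκ hG
  have hT := measurable_towerMap hf hκ
  have hπ := measurable_towerProj hf
  let m : X × ℕ → ℝ := fun p => if p.2 = κ p.1 then mY p.1 else 0
  let χ' : X × ℕ → ℝ := fun p => χ p.1 + ∑ i ∈ Finset.range p.2, φ (f^[i] p.1)
  have hχ' : Measurable χ' := (hχ.comp measurable_fst).add (measurable_birk_var hf hφ)
  have hE : MeasurableSet {p : X × ℕ | p.2 = κ p.1} := measurableSet_eq_fun measurable_snd (hκ.comp measurable_fst)
  have hmm : Measurable m := Measurable.ite hE (hmY.comp measurable_fst) measurable_const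
  have hι : Measurable (fun x => (x, κ x)) := measurable_id.prodMk hκ
  have hres : ν.restrict {p : X × ℕ | p.2 = κ p.1} = m0.map (fun x => (x, κ x)) := by
    ext s hs
    rw [Measure.restrict_apply hs, Measure.map_apply hι hs, ← lintegral_indicator_one (hs.inter hE), hν,
      lintegral_tower hκ (measurable_one.indicator (hs.inter hE)), ← lintegral_indicator_one (hι hs)]
    congr 1; ext x
    rw [Finset.sum_range_succ, Finset.sum_eq_zero, zero_add]
    · by_cases h : (x, κ x) ∈ s <;> simp [h, indicator]
    · intro j hj
      have : j ≠ κ x := by have := Finset.mem_range.1 hj; omega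
      simp [indicator, this]
  have hm2 : MemLp m 2 ν := by
    refine ⟨hmm.aestronglyMeasurable, ?_⟩
    have h2 := hmY2.2
    rw [eLpNorm_lt_top_iff_lintegral_rpow_enorm_lt_top two_ne_zero ENNReal.ofNat_ne_top] at h2 ⊢
    convert h2 using 1
    rw [hν, lintegral_tower hκ (hmm.enorm.pow_const _)]
    congr 1; ext x
    rw [Finset.sum_range_succ, Finset.sum_eq_zero, zero_add]
    · simp [m]
    · intro j hj
      have : j ≠ κ x := by have := Finset.mem_range.1 hj; omega
      simp [m, this]
  have hm : RevMart ν (towerMap f κ) m := by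
    intro g hg ⟨C, hC⟩
    have e : (fun p => m p * g (towerMap f κ p)) = {p : X × ℕ | p.2 = κ p.1}.indicator (fun p => m p * g (towerMap f κ p)) := by
      ext p
      by_cases h : p.2 = κ p.1 <;> simp [indicator, m, h]
    rw [e, integral_indicator hE, hres, integral_map hι.aemeasurable (f := fun p => m p * g (towerMap f κ p)) (hmm.mul (hg.comp hT)).aestronglyMeasurable]
    rw [← hmart (fun x => g (x, 0)) (hg.comp (measurable_id.prodMk measurable_const)) ⟨C, fun x => hC _⟩]
    congr 1; ext x
    simp [m, towerMap]
  have hco' : ∀ᵐ p ∂ν, φ (f^[p.2] p.1) = m p + χ' (towerMap f κ p) - χ' p := by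
    apply ae_tower hκ (s := {p | φ (f^[p.2] p.1) = m p + χ' (towerMap f κ p) - χ' p})
    · exact measurableSet_eq_fun (hφ.comp hπ) ((hmm.add (hχ'.comp hT)).sub hχ')
    · filter_upwards [hco] with x hx j hj
      show φ (f^[j] x) = m (x, j) + χ' (towerMap f κ (x, j)) - χ' (x, j)
      rcases hj.lt_or_eq with h | h
      · have h' : j ≠ κ x := h.ne
        simp only [m, χ', h', towerMap, h, if_true, if_false, Finset.sum_range_succ]
        ring
      · rw [Finset.sum_range_succ] at hx
        subst h
        simp only [m, χ', towerMap, lt_irrefl, if_true, if_false, Finset.sum_range_zero]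
        linarith
  obtain ⟨σ, hσ⟩ := clt_coboundary herg hmm hm2 hm (hφ.comp hπ) hχ' hco'
  refine ⟨σ, fun g => (hσ g).congr fun n => ?_⟩
  unfold projMeas
  rw [integral_map hπ.aemeasurable]
  · congr 1; ext p
    congr 2
    apply Finset.sum_congr rfl
    intro j _
    simp only [Function.comp]
    congr 1
    exact (tower_semiconj.iterate_right j) p
  · exact (g.continuous.measurable.comp ((Finset.measurable_sum _ fun j _ => hφ.comp (hf.iterate j)).const_mul _)).aestronglyMeasurable
end Tower6


section Cone7
set_option linter.unusedSectionVars false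
open scoped Topology ENNReal

abbrev UI : Type := unitInterval

def LCone (a r : ℝ) (u : C(UI, ℝ)) : Prop :=
  (∀ y, 0 ≤ u y) ∧ ∀ y y', u y ≤ Real.exp (a * dist y y' ^ r) * u y'

lemma UI_dist_le (y y' : UI) : dist y y' ≤ 1 := by
  rw [Subtype.dist_eq, Real.dist_eq, abs_le]
  have h1 := y.2.1; have h2 := y.2.2; have h3 := y'.2.1; have h4 := y'.2.2
  constructor <;> linarith

lemma UI_integrable (u : C(UI, ℝ)) : Integrable u (volume : Measure UI) :=
  Integrable.of_bound u.continuous.aestronglyMeasurable ‖u‖ (Eventually.of_forall fun y => u.norm_coe_le_norm y)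

noncomputable def cint (u : C(UI, ℝ)) : ℝ := ∫ y, u y ∂(volume : Measure UI)

lemma cint_add (u v : C(UI, ℝ)) : cint (u + v) = cint u + cint v := integral_add (UI_integrable u) (UI_integrable v)
lemma cint_sub (u v : C(UI, ℝ)) : cint (u - v) = cint u - cint v := integral_sub (UI_integrable u) (UI_integrable v)
lemma cint_smul (c : ℝ) (u : C(UI, ℝ)) : cint (c • u) = c * cint u := integral_const_mul c _
lemma cint_const (c : ℝ) : cint (ContinuousMap.const UI c) = c := by simp [cint]
lemma cint_le (u : C(UI, ℝ)) {c : ℝ} (h : ∀ y, u y ≤ c) : cint u ≤ c := by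
  rw [← cint_const c]
  exact integral_mono (UI_integrable u) (UI_integrable _) h
lemma le_cint (u : C(UI, ℝ)) {c : ℝ} (h : ∀ y, c ≤ u y) : c ≤ cint u := by
  conv_lhs => rw [← cint_const c]
  exact integral_mono (UI_integrable _) (UI_integrable _) h

lemma continuous_cint : Continuous cint := by
  rw [Metric.continuous_iff]
  intro u ε hε
  refine ⟨ε / 2, half_pos hε, fun v hv => ?_⟩
  rw [Real.dist_eq, ← cint_sub, abs_lt]
  rw [dist_eq_norm] at hv
  have h1 : ∀ y, |(v - u) y| ≤ ε / 2 := fun y => ((v - u).norm_coe_le_norm y).trans hv.le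
  have h2 := cint_le (v - u) fun y => (abs_le.1 (h1 y)).2
  have h3 := le_cint (v - u) fun y => (abs_le.1 (h1 y)).1
  constructor <;> linarith

namespace LCone
variable {a b r : ℝ} {u v : C(UI, ℝ)}

lemma rpow_mem (hr : 0 < r) (y y' : UI) : 0 ≤ dist y y' ^ r ∧ dist y y' ^ r ≤ 1 :=
  ⟨Real.rpow_nonneg dist_nonneg _, Real.rpow_le_one dist_nonneg (UI_dist_le _ _) hr.le⟩

lemma add (hu : LCone a r u) (hv : LCone a r v) : LCone a r (u + v) :=
  ⟨fun y => add_nonneg (hu.1 y) (hv.1 y), fun y y' => by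
    simp only [ContinuousMap.add_apply, mul_add]; exact add_le_add (hu.2 y y') (hv.2 y y')⟩

lemma zero : LCone a r 0 := ⟨fun y => by simp, fun y y' => by simp⟩

lemma smul {c : ℝ} (hc : 0 ≤ c) (hu : LCone a r u) : LCone a r (c • u) :=
  ⟨fun y => mul_nonneg hc (hu.1 y), fun y y' => by
    simp only [ContinuousMap.smul_apply, smul_eq_mul]
    calc c * u y ≤ c * (Real.exp (a * dist y y' ^ r) * u y') := mul_le_mul_of_nonneg_left (hu.2 y y') hc
      _ = _ := by ring⟩

lemma mono (hr : 0 < r) (hab : a ≤ b) (hu : LCone a r u) : LCone b r u :=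
  ⟨hu.1, fun y y' => (hu.2 y y').trans (mul_le_mul_of_nonneg_right (Real.exp_le_exp.2
    (mul_le_mul_of_nonneg_right hab (rpow_mem hr y y').1)) (hu.1 y'))⟩

lemma mul (hu : LCone a r u) (hv : LCone b r v) : LCone (a + b) r (u * v) :=
  ⟨fun y => mul_nonneg (hu.1 y) (hv.1 y), fun y y' => by
    simp only [ContinuousMap.mul_apply]
    calc u y * v y ≤ (Real.exp (a * dist y y' ^ r) * u y') * (Real.exp (b * dist y y' ^ r) * v y') :=
          mul_le_mul (hu.2 y y') (hv.2 y y') (hv.1 y) (mul_nonneg (Real.exp_pos _).le (hu.1 y'))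
      _ = _ := by rw [add_mul, Real.exp_add]; ring⟩

lemma const (hr : 0 < r) (ha : 0 ≤ a) {c : ℝ} (hc : 0 ≤ c) : LCone a r (ContinuousMap.const UI c) :=
  ⟨fun _ => hc, fun y y' => by
    simp only [ContinuousMap.const_apply]
    exact le_mul_of_one_le_left hc (Real.one_le_exp (mul_nonneg ha (rpow_mem hr y y').1))⟩

lemma sum {ι : Type*} (s : Finset ι) (c : ι → C(UI, ℝ)) (h : ∀ i ∈ s, LCone a r (c i)) : LCone a r (∑ i ∈ s, c i) := by
  classical
  induction s using Finset.induction_on with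
  | empty => simpa using zero
  | insert i s hi ih =>
    rw [Finset.sum_insert hi]
    exact (h i (by simp)).add (ih fun j hj => h j (by simp [hj]))

lemma isClosed : IsClosed {u | LCone a r u} := by
  have : {u | LCone a r u} = (⋂ y, {u : C(UI, ℝ) | 0 ≤ u y}) ∩ ⋂ y, ⋂ y', {u : C(UI, ℝ) | u y ≤ Real.exp (a * dist y y' ^ r) * u y'} := by
    ext u
    constructor
    · intro h
      exact ⟨mem_iInter.2 fun y => h.1 y, mem_iInter.2 fun y => mem_iInter.2 fun y' => h.2 y y'⟩
    · rintro ⟨h1, h2⟩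
      exact ⟨fun y => mem_iInter.1 h1 y, fun y y' => mem_iInter.1 (mem_iInter.1 h2 y) y'⟩
  rw [this]
  have hc : ∀ y : UI, Continuous fun u : C(UI, ℝ) => u y := fun y => continuous_eval_const y
  refine (isClosed_iInter fun y => isClosed_le continuous_const (hc y)).inter
    (isClosed_iInter fun y => isClosed_iInter fun y' => isClosed_le (hc y) ((hc y').const_mul _))

lemma of_tendsto {s : ℕ → C(UI, ℝ)} (h : Tendsto s atTop (𝓝 u)) (hs : ∀ n, LCone a r (s n)) : LCone a r u :=
  isClosed.mem_of_tendsto h (Eventually.of_forall hs)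

lemma tsum {c : ℕ → C(UI, ℝ)} (hc : Summable c) (h : ∀ n, LCone a r (c n)) : LCone a r (∑' n, c n) :=
  of_tendsto hc.hasSum.tendsto_sum_nat fun n => sum _ _ fun i _ => h i

lemma comp (h : C(UI, UI)) {l : ℝ} (hr : 0 < r) (ha : 0 ≤ a) (hl : 0 ≤ l) (hh : ∀ y y', dist (h y) (h y') ≤ l * dist y y') (hu : LCone a r u) :
    LCone (a * l ^ r) r (u.comp h) :=
  ⟨fun y => hu.1 _, fun y y' => by
    refine (hu.2 (h y) (h y')).trans (mul_le_mul_of_nonneg_right (Real.exp_le_exp.2 ?_) (hu.1 _))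
    rw [mul_assoc, ← Real.mul_rpow hl dist_nonneg]
    exact mul_le_mul_of_nonneg_left (Real.rpow_le_rpow dist_nonneg (hh y y') hr.le) ha⟩

lemma le_exp_mul (hr : 0 < r) (ha : 0 ≤ a) (hu : LCone a r u) (y y' : UI) : u y ≤ Real.exp a * u y' :=
  (hu.2 y y').trans (mul_le_mul_of_nonneg_right (Real.exp_le_exp.2 (mul_le_of_le_one_right ha (rpow_mem hr y y').2)) (hu.1 y'))

lemma le_cint_mul (hr : 0 < r) (ha : 0 ≤ a) (hu : LCone a r u) (y : UI) : u y ≤ Real.exp a * cint u := by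
  have h := le_cint (Real.exp a • u) (c := u y) fun y' => by
    simpa using hu.le_exp_mul hr ha y y'
  rwa [cint_smul] at h

lemma cint_mul_le (hr : 0 < r) (ha : 0 ≤ a) (hu : LCone a r u) (y : UI) : Real.exp (-a) * cint u ≤ u y := by
  have h := cint_le u (c := Real.exp a * u y) fun y' => hu.le_exp_mul hr ha y' y
  rw [Real.exp_neg, inv_mul_le_iff₀ (Real.exp_pos a)]
  exact h

lemma sub_const {θ δ : ℝ} (hr : 0 < r) (ha : 0 ≤ a) (hθ : 0 ≤ θ) (hθ1 : θ ≤ 1) (hu : LCone (θ * a) r u) (h1 : cint u = 1)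
    (hδ : δ = (1 - θ) * Real.exp (-(2 * a))) : LCone a r (u - ContinuousMap.const UI δ) := by
  have hθa : θ * a ≤ a := mul_le_of_le_one_left ha hθ1
  have hlow : ∀ y, Real.exp (-a) ≤ u y := fun y => by
    have h := hu.cint_mul_le hr (mul_nonneg hθ ha) y
    rw [h1, mul_one] at h
    exact (Real.exp_le_exp.2 (by linarith)).trans h
  have hδe : δ * Real.exp a = (1 - θ) * Real.exp (-a) := by
    rw [hδ, mul_assoc, ← Real.exp_add]; ring_nf
  refine ⟨fun y => ?_, fun y y' => ?_⟩
  · simp only [ContinuousMap.sub_apply, ContinuousMap.const_apply, sub_nonneg]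
    refine le_trans ?_ (hlow y)
    rw [hδ]
    calc (1 - θ) * Real.exp (-(2 * a)) ≤ 1 * Real.exp (-a) :=
          mul_le_mul (by linarith) (Real.exp_le_exp.2 (by linarith)) (Real.exp_pos _).le zero_le_one
      _ = _ := one_mul _
  · simp only [ContinuousMap.sub_apply, ContinuousMap.const_apply]
    obtain ⟨hd0, hd1⟩ := rpow_mem hr y y'
    set A := a * dist y y' ^ r with hA
    have hA0 : 0 ≤ A := mul_nonneg ha hd0
    have hAa : A ≤ a := mul_le_of_le_one_right ha hd1
    have hy := hu.2 y y'
    rw [mul_assoc, ← hA] at hy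
    have hδ0 : 0 ≤ δ := by rw [hδ]; exact mul_nonneg (by linarith) (Real.exp_pos _).le
    have e1 : Real.exp A - 1 ≤ A * Real.exp a := by
      have h2 := Real.add_one_le_exp (-A)
      have h3 : Real.exp A * Real.exp (-A) = 1 := by rw [← Real.exp_add]; simp
      have h4 := Real.exp_pos A
      have h5 : Real.exp A - 1 ≤ A * Real.exp A := by nlinarith
      exact h5.trans (mul_le_mul_of_nonneg_left (Real.exp_le_exp.2 hAa) hA0)
    have e2 : (1 - θ) * A ≤ Real.exp A - Real.exp (θ * A) := by
      have h2 := Real.add_one_le_exp ((1 - θ) * A)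
      have h3 : Real.exp A = Real.exp (θ * A) * Real.exp ((1 - θ) * A) := by rw [← Real.exp_add]; ring_nf
      have h4 : 1 ≤ Real.exp (θ * A) := Real.one_le_exp (mul_nonneg hθ hA0)
      have h5 : 0 ≤ (1 - θ) * A := mul_nonneg (by linarith) hA0
      rw [h3]
      nlinarith
    have e3 : δ * (Real.exp A - 1) ≤ u y' * (Real.exp A - Real.exp (θ * A)) := by
      calc δ * (Real.exp A - 1) ≤ δ * (A * Real.exp a) := mul_le_mul_of_nonneg_left e1 hδ0
        _ = Real.exp (-a) * ((1 - θ) * A) := by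
            rw [show δ * (A * Real.exp a) = (δ * Real.exp a) * A by ring, hδe]; ring
        _ ≤ u y' * (Real.exp A - Real.exp (θ * A)) :=
            mul_le_mul (hlow y') e2 (mul_nonneg (by linarith) hA0) (hu.1 y')
    nlinarith
end LCone

lemma LCone.shift_of_holder {C r b M : ℝ} (hr : 0 < r) (hb : 0 < b) (u : C(UI, ℝ)) (hC : 0 ≤ C) (hu : ∀ y y', |u y - u y'| ≤ C * dist y y' ^ r)
    (hM : C / b + ‖u‖ ≤ M) : LCone b r (u + ContinuousMap.const UI M) := by
  have hp : ∀ y, C / b ≤ u y + M := fun y => by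
    have h1 := u.norm_coe_le_norm y
    rw [Real.norm_eq_abs, abs_le] at h1
    linarith [h1.1]
  refine ⟨fun y => ?_, fun y y' => ?_⟩
  · exact (div_nonneg hC hb.le).trans (hp y)
  · simp only [ContinuousMap.add_apply, ContinuousMap.const_apply]
    have h1 := (abs_le.1 (hu y y')).2
    have h2 := Real.add_one_le_exp (b * dist y y' ^ r)
    have h3 := hp y'
    have h4 := (LCone.rpow_mem hr y y').1
    have h5 : 0 ≤ u y' + M := (div_nonneg hC hb.le).trans h3
    have h6 : C ≤ b * (u y' + M) := by rw [div_le_iff₀ hb] at h3; linarith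
    calc u y + M ≤ (u y' + M) + C * dist y y' ^ r := by linarith
      _ ≤ (u y' + M) + (b * (u y' + M)) * dist y y' ^ r := by gcongr
      _ = (b * dist y y' ^ r + 1) * (u y' + M) := by ring
      _ ≤ _ := mul_le_mul_of_nonneg_right h2 h5

end Cone7


section Sys8
set_option linter.unusedSectionVars false
open scoped Topology ENNReal

structure LSys (f : UI → UI) (κ : UI → ℕ) (h : ℕ → C(UI, UI)) (w : ℕ → C(UI, ℝ)) : Prop where
  hf : Measurable f
  hκ : Measurable κ
  wpos : ∀ k y, 0 < w k y
  contr : ∀ k y y', dist (h k y) (h k y') ≤ 1 / 2 * dist y y'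
  dist_le : ∀ k y y', w k y ≤ Real.exp (2 * dist y y') * w k y'
  summ : Summable fun k : ℕ => ((k : ℝ) + 1) ^ 2 * ‖w k‖
  change : ∀ U : UI → ℝ≥0∞, Measurable U → ∫⁻ x, U x = ∑' k, ∫⁻ y, ENNReal.ofReal (w k y) * U (h k y)
  orbit : ∀ k, ∀ y : UI, (y : ℝ) < 1 → ∀ j ≤ k, f^[j] (h k y) = h (k - j) y
  ret : ∀ k, ∀ y : UI, (y : ℝ) < 1 → f^[k + 1] (h k y) = y
  kap : ∀ k, ∀ y : UI, (y : ℝ) < 1 → κ (h k y) = k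

lemma UI_ae_lt : ∀ᵐ y : UI, (y : ℝ) < 1 := by
  have h1 : ∀ᵐ y : UI, y ≠ 1 := by
    rw [ae_iff]
    simp
  filter_upwards [h1] with y hy
  exact lt_of_le_of_ne y.2.2 fun h => hy (Subtype.ext h)

namespace LSys
variable {f : UI → UI} {κ : UI → ℕ} {h : ℕ → C(UI, UI)} {w : ℕ → C(UI, ℝ)} (S : LSys f κ h w)
include S

lemma vol_eq : (volume : Measure UI) = Measure.sum fun k => ((volume : Measure UI).withDensity (fun y => ENNReal.ofReal (w k y))).map (h k) := by
  refine Measure.ext_of_lintegral _ fun U hU => ?_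
  rw [lintegral_sum_measure, S.change U hU]
  congr 1; ext k
  rw [lintegral_map hU (h k).continuous.measurable]
  exact (lintegral_withDensity_eq_lintegral_mul (μ := (volume : Measure UI)) (w k).continuous.measurable.ennreal_ofReal (hU.comp (h k).continuous.measurable)).symm

lemma xfer0 {F : UI → ℝ} (hF : Measurable F) (c : ℕ → UI → ℝ) (M : ℕ → ℝ)
    (hc : ∀ k (y : UI), (y : ℝ) < 1 → F (h k y) = c k y) (hM : ∀ k y, |w k y * c k y| ≤ M k) (hs : Summable M) :
    Integrable F ∧ ∫ x, F x = ∫ y, ∑' k, w k y * c k y := by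
  have hwm : ∀ k, Measurable fun y => ENNReal.ofReal (w k y) := fun k => (w k).continuous.measurable.ennreal_ofReal
  have hwt : ∀ k, ∀ᵐ y : UI, ENNReal.ofReal (w k y) < ⊤ := fun k => Eventually.of_forall fun y => ENNReal.ofReal_lt_top
  have hae : ∀ k, ∀ᵐ y : UI, (ENNReal.ofReal (w k y)).toReal • F (h k y) = w k y * c k y := by
    intro k
    filter_upwards [UI_ae_lt] with y hy
    rw [ENNReal.toReal_ofReal (S.wpos k y).le, hc k y hy, smul_eq_mul]
  have hi0 : ∀ k, Integrable (fun y => (ENNReal.ofReal (w k y)).toReal • F (h k y)) := by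
    intro k
    refine Integrable.of_bound (C := M k) ((hwm k).ennreal_toReal.smul (hF.comp (h k).continuous.measurable)).aestronglyMeasurable ?_
    filter_upwards [hae k] with y hy
    rw [hy]; exact hM k y
  have hi1 : ∀ k, Integrable (fun y => w k y * c k y) := fun k => (hi0 k).congr (hae k)
  have hi2 : ∀ k, Integrable F (((volume : Measure UI).withDensity (fun y => ENNReal.ofReal (w k y))).map (h k)) := by
    intro k
    rw [integrable_map_measure hF.aestronglyMeasurable (h k).continuous.measurable.aemeasurable,
      integrable_withDensity_iff_integrable_smul' (hwm k) (hwt k)]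
    exact hi0 k
  have hsn : Summable fun k => ∫ y, ‖w k y * c k y‖ := by
    refine Summable.of_nonneg_of_le (fun k => integral_nonneg fun y => norm_nonneg _) (fun k => ?_) hs
    calc ∫ y, ‖w k y * c k y‖ ≤ ∫ y : UI, M k := integral_mono (hi1 k).norm (integrable_const _) (hM k)
      _ = M k := by simp
  have hIntg : Integrable F (Measure.sum fun k => ((volume : Measure UI).withDensity (fun y => ENNReal.ofReal (w k y))).map (h k)) := by
    refine integrable_sum_measure hi2 ?_
    convert hsn using 2 with k
    rw [integral_map (h k).continuous.measurable.aemeasurable hF.norm.aestronglyMeasurable,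
      integral_withDensity_eq_integral_toReal_smul (hwm k) (hwt k)]
    apply integral_congr_ae
    filter_upwards [hae k] with y hy
    rw [← hy, norm_smul, smul_eq_mul, Real.norm_of_nonneg ENNReal.toReal_nonneg]
  refine ⟨by rw [S.vol_eq]; exact hIntg, ?_⟩
  conv_lhs => rw [S.vol_eq]
  rw [integral_sum_measure hIntg, ← (hasSum_integral_of_summable_integral_norm hi1 hsn).tsum_eq]
  congr 1; ext k
  rw [integral_map (h k).continuous.measurable.aemeasurable hF.aestronglyMeasurable,
      integral_withDensity_eq_integral_toReal_smul (hwm k) (hwt k)]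
  exact integral_congr_ae (hae k)

lemma measG : Measurable (fun x => f^[κ x + 1] x) := measurable_base S.hf S.hκ

lemma G_h (k : ℕ) (y : UI) (hy : (y : ℝ) < 1) : f^[κ (h k y) + 1] (h k y) = y := by
  rw [S.kap k y hy, S.ret k y hy]

lemma xfer {U : UI → ℝ} (hU : Measurable U) (u : ℕ → C(UI, ℝ)) (hu : ∀ k (y : UI), (y : ℝ) < 1 → U (h k y) = u k y)
    (hs : Summable fun k => ‖w k * u k‖) : Integrable U ∧ ∀ g : UI → ℝ, Measurable g → (∃ C, ∀ x, |g x| ≤ C) →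
      ∫ x, U x * g (f^[κ x + 1] x) = ∫ y, (∑' k, w k * u k) y * g y := by
  refine ⟨(S.xfer0 hU (fun k y => u k y) _ hu (fun k y => (w k * u k).norm_coe_le_norm y) hs).1, ?_⟩
  rintro g hg ⟨C, hC⟩
  have hC0 : 0 ≤ C := (abs_nonneg _).trans (hC 0)
  have := (S.xfer0 (F := fun x => U x * g (f^[κ x + 1] x)) (hU.mul (hg.comp S.measG)) (fun k y => u k y * g y) (fun k => ‖w k * u k‖ * C) ?_ ?_ (hs.mul_right C)).2
  · rw [this]
    congr 1; ext y
    rw [← ContinuousMap.tsum_apply hs.of_norm, ← _root_.tsum_mul_right]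
    congr 1; ext k
    simp [mul_assoc]
  · intro k y hy
    rw [hu k y hy, S.G_h k y hy]
  · intro k y
    rw [← mul_assoc, abs_mul]
    exact mul_le_mul ((w k * u k).norm_coe_le_norm y) (hC y) (abs_nonneg _) (norm_nonneg _)

lemma summ1 : Summable fun k : ℕ => ((k : ℝ) + 1) * ‖w k‖ := by
  refine Summable.of_nonneg_of_le (fun k => by positivity) (fun k => ?_) S.summ
  gcongr
  have : (0:ℝ) ≤ k := Nat.cast_nonneg k
  nlinarith

lemma summ0 : Summable fun k : ℕ => ‖w k‖ := by
  refine Summable.of_nonneg_of_le (fun k => by positivity) (fun k => ?_) S.summ1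
  have : (0:ℝ) ≤ k := Nat.cast_nonneg k
  have := norm_nonneg (w k)
  nlinarith

lemma summ_comp (u : C(UI, ℝ)) : Summable fun k => ‖w k * u.comp (h k)‖ := by
  refine Summable.of_nonneg_of_le (fun k => norm_nonneg _) (fun k => ?_) (S.summ0.mul_right ‖u‖)
  refine (norm_mul_le _ _).trans (mul_le_mul_of_nonneg_left ?_ (norm_nonneg _))
  exact (ContinuousMap.norm_le _ (norm_nonneg _)).2 fun y => u.norm_coe_le_norm _

omit S in
lemma comp_norm_le (u : C(UI, ℝ)) (k : ℕ) : ‖u.comp (h k)‖ ≤ ‖u‖ :=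
  (ContinuousMap.norm_le _ (norm_nonneg _)).2 fun y => u.norm_coe_le_norm _

noncomputable def L : C(UI, ℝ) →L[ℝ] C(UI, ℝ) :=
  LinearMap.mkContinuous
    { toFun := fun u => ∑' k, w k * u.comp (h k)
      map_add' := fun u v => by
        rw [← (S.summ_comp u).of_norm.tsum_add (S.summ_comp v).of_norm]
        congr 1; ext k y; simp [mul_add]
      map_smul' := fun c u => by
        simp only [RingHom.id_apply]
        rw [← (S.summ_comp u).of_norm.tsum_const_smul c]
        congr 1; ext k y; simp }
    (∑' k, ‖w k‖) (fun u => by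
      show ‖∑' k, w k * u.comp (h k)‖ ≤ _
      refine (norm_tsum_le_tsum_norm (S.summ_comp u)).trans ?_
      rw [← _root_.tsum_mul_right]
      refine (S.summ_comp u).tsum_le_tsum (fun k => ?_) (S.summ0.mul_right ‖u‖)
      exact (norm_mul_le _ _).trans (mul_le_mul_of_nonneg_left (comp_norm_le u k) (norm_nonneg _)))

lemma L_apply (u : C(UI, ℝ)) : S.L u = ∑' k, w k * u.comp (h k) := rfl

lemma L_int (u : C(UI, ℝ)) (g : UI → ℝ) (hg : Measurable g) (hb : ∃ C, ∀ x, |g x| ≤ C) :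
    ∫ x, u x * g (f^[κ x + 1] x) = ∫ y, S.L u y * g y :=
  (S.xfer u.continuous.measurable (fun k => u.comp (h k)) (fun _ _ _ => rfl) (S.summ_comp u)).2 g hg hb

lemma L_cint (u : C(UI, ℝ)) : cint (S.L u) = cint u := by
  have := S.L_int u (fun _ => 1) measurable_const ⟨1, fun _ => by simp⟩
  simpa [cint] using this.symm

lemma cone_sum {a r : ℝ} (hr : 0 < r) (hr1 : r ≤ 1) (c : ℕ → C(UI, ℝ)) (hs : Summable fun k => ‖w k * c k‖)
    (hc : ∀ k, LCone a r (c k)) : LCone (2 + a) r (∑' k, w k * c k) := by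
  refine LCone.tsum hs.of_norm fun k => LCone.mul ⟨fun y => (S.wpos k y).le, fun y y' => ?_⟩ (hc k)
  refine (S.dist_le k y y').trans (mul_le_mul_of_nonneg_right (Real.exp_le_exp.2 ?_) (S.wpos k y').le)
  gcongr
  calc dist y y' = dist y y' ^ (1:ℝ) := (Real.rpow_one _).symm
    _ ≤ dist y y' ^ r := by
      rcases eq_or_lt_of_le (dist_nonneg (x := y) (y := y')) with h0 | h0
      · rw [← h0, Real.zero_rpow hr.ne', Real.zero_rpow one_ne_zero]
      · exact Real.rpow_le_rpow_of_exponent_ge h0 (UI_dist_le _ _) hr1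

lemma L_cone {a r : ℝ} (hr : 0 < r) (hr1 : r ≤ 1) (ha : 0 ≤ a) {u : C(UI, ℝ)} (hu : LCone a r u) :
    LCone (2 + a * (1 / 2) ^ r) r (S.L u) :=
  S.cone_sum hr hr1 _ (S.summ_comp u) fun k => hu.comp (h k) hr ha (by norm_num) (S.contr k)

lemma L_const_contr {a r θ δ : ℝ} (hr : 0 < r) (hr1 : r ≤ 1) (ha : 0 ≤ a) (hθ : 0 ≤ θ) (hθ1 : θ < 1)
    (hθa : 2 + a * (1 / 2) ^ r ≤ θ * a) (hδ : δ = (1 - θ) * Real.exp (-(2 * a))) (hδ1 : δ < 1) (n : ℕ) :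
    ∀ u v : C(UI, ℝ), LCone a r u → LCone a r v → cint u = 1 → cint v = 1 →
     ‖(S.L ^ n) u - (S.L ^ n) v‖ ≤ (1 - δ) ^ n * Real.exp a := by
  induction n with
  | zero =>
    intro u v hu hv hu1 hv1
    simp only [pow_zero, one_mul, ContinuousLinearMap.one_apply]
    refine (ContinuousMap.norm_le _ (Real.exp_pos a).le).2 fun y => ?_
    have h1 := hu.le_cint_mul hr ha y
    have h2 := hv.le_cint_mul hr ha y
    have h3 := hu.1 y
    have h4 := hv.1 y
    rw [hu1, mul_one] at h1
    rw [hv1, mul_one] at h2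
    rw [ContinuousMap.sub_apply, Real.norm_eq_abs, abs_le]
    constructor <;> linarith
  | succ n ih =>
    intro u v hu hv hu1 hv1
    have key : ∀ u : C(UI, ℝ), LCone a r u → cint u = 1 → ∃ u' : C(UI, ℝ), LCone a r u' ∧ cint u' = 1 ∧
        S.L u = ContinuousMap.const UI δ + (1 - δ) • u' := by
      intro u hu hu1
      have h1 : LCone (θ * a) r (S.L u) := (S.L_cone hr hr1 ha hu).mono hr hθa
      have h2 := h1.sub_const hr ha hθ hθ1.le (by rw [S.L_cint, hu1]) hδ
      have h3 : 1 - δ ≠ 0 := by linarith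
      refine ⟨(1 - δ)⁻¹ • (S.L u - ContinuousMap.const UI δ), h2.smul (inv_nonneg.2 (by linarith)), ?_, ?_⟩
      · rw [cint_smul, cint_sub, cint_const, S.L_cint, hu1, inv_mul_cancel₀ h3]
      · rw [smul_inv_smul₀ h3]; abel
    obtain ⟨u', hu', hu1', eu⟩ := key u hu hu1
    obtain ⟨v', hv', hv1', ev⟩ := key v hv hv1
    rw [pow_succ, ContinuousLinearMap.mul_apply, ContinuousLinearMap.mul_apply, eu, ev, ← map_sub, add_sub_add_left_eq_sub,
      ← smul_sub, map_smul, norm_smul, map_sub, Real.norm_of_nonneg (by linarith : 0 ≤ 1 - δ), pow_succ']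
    rw [mul_assoc]
    exact mul_le_mul_of_nonneg_left (ih u' v' hu' hv' hu1' hv1') (by linarith)

end LSys
end Sys8


section Sys9
set_option linter.unusedSectionVars false
open scoped Topology ENNReal

noncomputable def densM (ρ : C(UI, ℝ)) : Measure UI := (volume : Measure UI).withDensity fun y => ENNReal.ofReal (ρ y)

lemma densM_integral {ρ : C(UI, ℝ)} (hρ : ∀ y, 0 < ρ y) (g : UI → ℝ) : ∫ x, g x ∂(densM ρ) = ∫ x, ρ x * g x := by
  rw [densM, integral_withDensity_eq_integral_toReal_smul ρ.continuous.measurable.ennreal_ofReal (Eventually.of_forall fun y => ENNReal.ofReal_lt_top)]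
  congr 1; ext y
  rw [ENNReal.toReal_ofReal (hρ y).le, smul_eq_mul]

lemma densM_lintegral (ρ : C(UI, ℝ)) {g : UI → ℝ≥0∞} (hg : Measurable g) : ∫⁻ x, g x ∂(densM ρ) = ∫⁻ x, ENNReal.ofReal (ρ x) * g x :=
  lintegral_withDensity_eq_lintegral_mul _ ρ.continuous.measurable.ennreal_ofReal hg

lemma densM_ac (ρ : C(UI, ℝ)) : densM ρ ≪ volume := withDensity_absolutelyContinuous _ _

lemma ac_densM {ρ : C(UI, ℝ)} (hρ : ∀ y, 0 < ρ y) : volume ≪ densM ρ :=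
  withDensity_absolutelyContinuous' ρ.continuous.measurable.ennreal_ofReal.aemeasurable
    (Eventually.of_forall fun y => by simpa using hρ y)

instance densM_finite (ρ : C(UI, ℝ)) : IsFiniteMeasure (densM ρ) :=
  isFiniteMeasure_withDensity_ofReal (UI_integrable ρ).2

namespace LSys
variable {f : UI → UI} {κ : UI → ℕ} {h : ℕ → C(UI, UI)} {w : ℕ → C(UI, ℝ)} (S : LSys f κ h w)
include S

lemma exists_contr {r : ℝ} (hr : 0 < r) (hr1 : r ≤ 1) : ∃ a q K : ℝ, 3 ≤ a ∧ 0 ≤ q ∧ q < 1 ∧ 0 ≤ K ∧ 3 + a * (1 / 2) ^ r ≤ a ∧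
    ∀ u v : C(UI, ℝ), LCone a r u → LCone a r v → cint u = cint v → ∀ n, ‖(S.L ^ n) u - (S.L ^ n) v‖ ≤ K * cint u * q ^ n := by
  set l : ℝ := (1 / 2) ^ r with hl
  have hl0 : 0 < l := by positivity
  have hl1 : l < 1 := Real.rpow_lt_one (by norm_num) (by norm_num) hr
  have h1l : 0 < 1 - l := by linarith
  set a : ℝ := 6 / (1 - l) with ha
  have ha6 : 6 ≤ a := by rw [ha, le_div_iff₀ h1l]; linarith
  have hal : a * (1 - l) = 6 := by rw [ha]; field_simp
  set θ : ℝ := (1 + l) / 2 with hθ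
  set δ : ℝ := (1 - θ) * Real.exp (-(2 * a)) with hδ
  have hδ0 : 0 < δ := mul_pos (by rw [hθ]; linarith) (Real.exp_pos _)
  have hδ1 : δ < 1 := by
    have : Real.exp (-(2 * a)) ≤ 1 := Real.exp_le_one_iff.2 (by linarith)
    have h2 : 1 - θ < 1 := by rw [hθ]; linarith
    have h3 : 0 ≤ 1 - θ := by rw [hθ]; linarith
    calc δ ≤ (1 - θ) * 1 := mul_le_mul_of_nonneg_left this h3
      _ < 1 := by linarith
  have hθa : 3 + a * l ≤ θ * a := by rw [hθ]; nlinarith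
  refine ⟨a, 1 - δ, Real.exp a, by linarith, by linarith, by linarith, (Real.exp_pos a).le, by nlinarith, ?_⟩
  intro u v hu hv huv n
  have hr0 : (0:ℝ) ≤ cint u := le_cint u hu.1
  rcases eq_or_lt_of_le hr0 with h0 | h0
  · have hz : ∀ u : C(UI, ℝ), LCone a r u → cint u = 0 → u = 0 := by
      intro u hu hu0
      ext y
      have := hu.le_cint_mul hr (by linarith) y
      rw [hu0, mul_zero] at this
      exact le_antisymm this (hu.1 y)
    rw [hz u hu h0.symm, hz v hv (huv.symm.trans h0.symm)]
    simp [cint]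
  · have h1 : (cint u)⁻¹ * cint u = 1 := inv_mul_cancel₀ h0.ne'
    have := S.L_const_contr hr hr1 (by linarith) (by rw [hθ]; linarith) (by rw [hθ]; linarith) (by linarith) hδ hδ1 n
      ((cint u)⁻¹ • u) ((cint u)⁻¹ • v) (hu.smul (inv_nonneg.2 hr0)) (hv.smul (inv_nonneg.2 hr0)) (by rw [cint_smul, h1]) (by rw [cint_smul, ← huv, h1])
    rw [map_smul, map_smul, ← smul_sub, norm_smul, Real.norm_of_nonneg (inv_nonneg.2 hr0), inv_mul_le_iff₀ h0] at this
    calc _ ≤ _ := this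
      _ = _ := by ring

lemma L_cone' {a r : ℝ} (hr : 0 < r) (hr1 : r ≤ 1) (ha : 0 ≤ a) (ha' : 3 + a * (1 / 2) ^ r ≤ a) {u : C(UI, ℝ)} (hu : LCone a r u) (n : ℕ) :
    LCone a r ((S.L ^ n) u) := by
  induction n with
  | zero => simpa using hu
  | succ n ih =>
    rw [pow_succ']
    exact (S.L_cone hr hr1 ha ih).mono hr (by linarith)

lemma cint_pow (u : C(UI, ℝ)) (n : ℕ) : cint ((S.L ^ n) u) = cint u := by
  induction n with
  | zero => simp
  | succ n ih =>
    rw [pow_succ', ← ih]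
    exact S.L_cint _

lemma exists_dens {r : ℝ} (hr : 0 < r) (hr1 : r ≤ 1) : ∃ (a q K : ℝ) (ρ : C(UI, ℝ)), 3 ≤ a ∧ 0 ≤ q ∧ q < 1 ∧ 0 ≤ K ∧ 3 + a * (1 / 2) ^ r ≤ a ∧
    (∀ u v : C(UI, ℝ), LCone a r u → LCone a r v → cint u = cint v → ∀ n, ‖(S.L ^ n) u - (S.L ^ n) v‖ ≤ K * cint u * q ^ n) ∧
    LCone a r ρ ∧ (∀ y, 0 < ρ y) ∧ S.L ρ = ρ ∧ cint ρ = 1 := by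
  obtain ⟨a, q, K, ha, hq, hq1, hK, ha', hc⟩ := S.exists_contr hr hr1
  set o : C(UI, ℝ) := ContinuousMap.const UI 1 with ho
  have hoc : LCone a r o := LCone.const hr (by linarith) zero_le_one
  have hcau : CauchySeq fun n => (S.L ^ n) o := by
    refine cauchySeq_of_le_geometric q K hq1 fun n => ?_
    rw [dist_eq_norm, pow_succ]
    have := hc o (S.L o) hoc (by simpa using S.L_cone' hr hr1 (by linarith) ha' hoc 1) (S.L_cint o).symm n
    rw [cint_const, mul_one] at this
    exact this
  obtain ⟨ρ, hρ⟩ := cauchySeq_tendsto_of_complete hcau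
  have hρc : LCone a r ρ := LCone.of_tendsto hρ fun n => S.L_cone' hr hr1 (by linarith) ha' hoc n
  have hρ1 : cint ρ = 1 := by
    have h1 := (continuous_cint.tendsto ρ).comp hρ
    refine tendsto_nhds_unique h1 ?_
    have : (cint ∘ fun n => (S.L ^ n) o) = fun _ => 1 := by
      ext n; simp only [Function.comp]; rw [S.cint_pow, ho, cint_const]
    rw [this]; exact tendsto_const_nhds
  refine ⟨a, q, K, ρ, ha, hq, hq1, hK, ha', hc, hρc, fun y => ?_, ?_, hρ1⟩
  · have := hρc.cint_mul_le hr (by linarith) y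
    rw [hρ1, mul_one] at this
    exact (Real.exp_pos _).trans_le this
  · have h1 := (S.L.continuous.tendsto ρ).comp hρ
    refine tendsto_nhds_unique h1 ?_
    have h2 := (tendsto_add_atTop_iff_nat 1).2 hρ
    refine h2.congr fun n => ?_
    rw [pow_succ']; rfl

lemma dens_mp {ρ : C(UI, ℝ)} (hρ : ∀ y, 0 < ρ y) (hL : S.L ρ = ρ) : MeasurePreserving (fun x => f^[κ x + 1] x) (densM ρ) (densM ρ) := by
  refine ⟨S.measG, ?_⟩
  have : IsFiniteMeasure ((densM ρ).map (fun x => f^[κ x + 1] x)) := Measure.isFiniteMeasure_map _ _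
  refine ext_of_forall_integral_eq_of_IsFiniteMeasure fun g => ?_
  rw [integral_map S.measG.aemeasurable g.continuous.aestronglyMeasurable, densM_integral hρ, densM_integral hρ,
    S.L_int ρ g g.continuous.measurable ⟨‖g‖, g.norm_coe_le_norm⟩, hL]

lemma inv_int {A : Set UI} (hA : MeasurableSet A) (hG : (fun x => f^[κ x + 1] x) ⁻¹' A = A) (u : C(UI, ℝ)) (n : ℕ) :
    ∫ x, u x * A.indicator (fun _ => (1:ℝ)) x = ∫ x, (S.L ^ n) u x * A.indicator (fun _ => (1:ℝ)) x := by
  induction n with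
  | zero => simp
  | succ n ih =>
    rw [ih, pow_succ']
    show _ = ∫ x, S.L ((S.L ^ n) u) x * A.indicator (fun _ => (1:ℝ)) x
    rw [← S.L_int _ (A.indicator (fun _ => (1:ℝ))) (measurable_const.indicator hA) ⟨1, fun x => by
      by_cases hx : x ∈ A <;> simp [hx]⟩]
    congr 1; ext x
    congr 1
    have hx : (f^[κ x + 1] x ∈ A) ↔ x ∈ A := by
      conv_rhs => rw [← hG]
      rfl
    by_cases h1 : x ∈ A
    · rw [indicator_of_mem h1, indicator_of_mem (hx.2 h1)]
    · rw [indicator_of_notMem h1, indicator_of_notMem (fun h2 => h1 (hx.1 h2))]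

end LSys

noncomputable def indInt (A : Set UI) (hA : MeasurableSet A) : C(UI, ℝ) →L[ℝ] ℝ :=
  LinearMap.mkContinuous
    { toFun := fun u => ∫ x, u x * A.indicator (fun _ => (1:ℝ)) x
      map_add' := fun u v => by
        have hi : ∀ u : C(UI, ℝ), Integrable (fun x => u x * A.indicator (fun _ => (1:ℝ)) x) := fun u =>
          (UI_integrable u).mul_bdd (c := 1) (measurable_const.indicator hA).aestronglyMeasurable (Eventually.of_forall fun x => by
            by_cases hx : x ∈ A <;> simp [hx])
        rw [← integral_add (hi u) (hi v)]
        congr 1; ext x; simp [add_mul]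
      map_smul' := fun c u => by
        simp only [RingHom.id_apply, smul_eq_mul]
        rw [← integral_const_mul]
        congr 1; ext x; simp [mul_assoc] }
    1 (fun u => by
      show ‖∫ x, u x * A.indicator (fun _ => (1:ℝ)) x‖ ≤ 1 * ‖u‖
      refine (norm_integral_le_of_norm_le_const (C := ‖u‖) (Eventually.of_forall fun x => ?_)).trans (by simp)
      rw [norm_mul]
      by_cases hx : x ∈ A
      · simpa [hx] using u.norm_coe_le_norm x
      · simp [hx])

lemma indInt_apply (A : Set UI) (hA : MeasurableSet A) (u : C(UI, ℝ)) : indInt A hA u = ∫ x, u x * A.indicator (fun _ => (1:ℝ)) x := rfl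

lemma dense_lip (Λ : C(UI, ℝ) →L[ℝ] ℝ) (h1 : ∀ u : C(UI, ℝ), (∃ C : ℝ, 0 ≤ C ∧ ∀ y y', |u y - u y'| ≤ C * dist y y') → Λ u = 0) (u : C(UI, ℝ)) : Λ u = 0 := by
  have hd := polynomialFunctions_closure_eq_top 0 1
  have hu : u ∈ (polynomialFunctions (Set.Icc (0:ℝ) 1)).topologicalClosure := by rw [hd]; trivial
  have hcl : IsClosed {u : C(UI, ℝ) | Λ u = 0} := isClosed_eq Λ.continuous continuous_const
  refine closure_minimal ?_ hcl hu
  intro p hp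
  replace hp : p ∈ (polynomialFunctions (Set.Icc (0:ℝ) 1) : Set C(UI, ℝ)) := hp
  rw [polynomialFunctions_coe] at hp
  obtain ⟨p, rfl⟩ := hp
  show Λ _ = 0
  induction p using Polynomial.induction_on' with
  | add p q hp hq => rw [map_add, map_add, hp, hq, add_zero]
  | monomial n c =>
    apply h1
    refine ⟨|c| * n, by positivity, fun y y' => ?_⟩
    simp only [Polynomial.toContinuousMapOnAlgHom_apply, Polynomial.toContinuousMapOn_apply, Polynomial.toContinuousMap_apply, Polynomial.eval_monomial]
    rw [← mul_sub, abs_mul, mul_assoc]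
    refine mul_le_mul_of_nonneg_left ?_ (abs_nonneg c)
    have := abs_pow_sub_pow_le (y : ℝ) (y' : ℝ) n
    refine this.trans ?_
    have h2 : max |(y:ℝ)| |(y':ℝ)| ^ (n - 1) ≤ 1 := by
      refine pow_le_one₀ (le_max_of_le_left (abs_nonneg _)) (max_le ?_ ?_)
      · rw [abs_of_nonneg y.2.1]; exact y.2.2
      · rw [abs_of_nonneg y'.2.1]; exact y'.2.2
    have h3 : |(y:ℝ) - y'| = dist y y' := rfl
    rw [h3]
    calc dist y y' * n * max |(y:ℝ)| |(y':ℝ)| ^ (n - 1) ≤ dist y y' * n * 1 := by gcongr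
      _ = _ := by ring

namespace LSys
variable {f : UI → UI} {κ : UI → ℕ} {h : ℕ → C(UI, UI)} {w : ℕ → C(UI, ℝ)} (S : LSys f κ h w)
include S

lemma inv_triv {A : Set UI} (hA : MeasurableSet A) (hG : (fun x => f^[κ x + 1] x) ⁻¹' A = A) :
    volume A = 0 ∨ volume Aᶜ = 0 := by
  obtain ⟨a, q, K, ρ, ha, hq, hq1, hK, ha', hc, hρc, hρ, hL, hρ1⟩ := S.exists_dens one_pos le_rfl
  set c : ℝ := indInt A hA ρ with hcdef
  have hLn : ∀ n, (S.L ^ n) ρ = ρ := by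
    intro n
    induction n with
    | zero => simp
    | succ n ih => rw [pow_succ]; show (S.L ^ n) (S.L ρ) = ρ; rw [hL, ih]
  have hcone : ∀ u : C(UI, ℝ), LCone a 1 u → indInt A hA u = cint u * c := by
    intro u hu
    have hu0 : 0 ≤ cint u := le_cint u hu.1
    have hb := hc u (cint u • ρ) hu (hρc.smul hu0) (by rw [cint_smul, hρ1, mul_one])
    have ht : Tendsto (fun n => (S.L ^ n) u) atTop (𝓝 (cint u • ρ)) := by
      rw [tendsto_iff_norm_sub_tendsto_zero]
      refine squeeze_zero (fun n => norm_nonneg _) (fun n => ?_) (by simpa using (tendsto_pow_atTop_nhds_zero_of_lt_one hq hq1).const_mul (K * cint u))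
      have := hb n
      rwa [map_smul, hLn] at this
    have h2 := ((indInt A hA).continuous.tendsto _).comp ht
    have h3 : ((indInt A hA) ∘ fun n => (S.L ^ n) u) = fun _ => indInt A hA u := by
      ext n; exact (S.inv_int hA hG u n).symm
    rw [h3, map_smul, smul_eq_mul] at h2
    exact tendsto_nhds_unique tendsto_const_nhds h2
  have hall : ∀ u : C(UI, ℝ), indInt A hA u = cint u * c := by
    have hz := dense_lip (indInt A hA - c • indInt univ MeasurableSet.univ) ?_
    · intro u
      have := hz u
      simp only [ContinuousLinearMap.sub_apply, ContinuousLinearMap.smul_apply, indInt_apply, indicator_univ, mul_one, smul_eq_mul] at this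
      rw [indInt_apply, cint]; linarith
    · rintro u ⟨C, hC, hu⟩
      have hs := LCone.shift_of_holder (r := 1) (b := 1) (M := C / 1 + ‖u‖) one_pos one_pos u hC (by simpa using hu) le_rfl
      have h1 := hcone _ (hs.mono one_pos (by linarith))
      have h2 := hcone _ (LCone.const (a := a) (r := 1) (c := C / 1 + ‖u‖) one_pos (by linarith) (by positivity))
      rw [map_add, cint_add, h2, cint_const] at h1
      simp only [ContinuousLinearMap.sub_apply, ContinuousLinearMap.smul_apply, smul_eq_mul]
      have h3 : indInt univ MeasurableSet.univ u = cint u := by simp [indInt_apply, cint]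
      rw [h3]; linarith
  have hc0 : 0 ≤ c := integral_nonneg fun x => mul_nonneg (hρ x).le (by by_cases hx : x ∈ A <;> simp [hx])
  obtain ⟨cn, hcn⟩ : ∃ cn : ℝ≥0, (cn:ℝ) = c := ⟨⟨c, hc0⟩, rfl⟩
  have hm : (volume : Measure UI).restrict A = cn • (volume : Measure UI) := by
    refine ext_of_forall_integral_eq_of_IsFiniteMeasure fun g => ?_
    rw [integral_smul_nnreal_measure]
    have := hall g.toContinuousMap
    rw [indInt_apply, cint] at this
    rw [← integral_indicator hA]
    rw [NNReal.smul_def, smul_eq_mul, hcn, mul_comm]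
    refine Eq.trans ?_ this
    congr 1; ext x
    by_cases hx : x ∈ A <;> simp [hx]
  by_cases hc1 : c = 0
  · left
    have : cn = 0 := by ext; rw [hcn, hc1]; rfl
    rw [this, zero_smul] at hm
    have := congrArg (fun m : Measure UI => m univ) hm
    simpa using this
  · right
    have := congrArg (fun m : Measure UI => m Aᶜ) hm
    simp only [Measure.restrict_apply hA.compl, compl_inter_self, measure_empty, Measure.smul_apply] at this
    rw [eq_comm, ENNReal.smul_def, smul_eq_mul, mul_eq_zero] at this
    rcases this with h0 | h0
    · exfalso; apply hc1
      have : cn = 0 := by exact_mod_cast h0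
      rw [← hcn, this]; rfl
    · exact h0

lemma dens_ergodic {ρ : C(UI, ℝ)} (hρ : ∀ y, 0 < ρ y) (hL : S.L ρ = ρ) : Ergodic (fun x => f^[κ x + 1] x) (densM ρ) := by
  refine ⟨S.dens_mp hρ hL, ⟨fun A hA hG => ?_⟩⟩
  rcases S.inv_triv hA hG with h0 | h0
  · refine eventuallyConst_set'.2 (Or.inl ?_)
    exact ae_eq_empty.2 (densM_ac ρ h0)
  · refine eventuallyConst_set'.2 (Or.inr ?_)
    exact ae_eq_univ.2 (densM_ac ρ h0)

end LSys
end Sys9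


section Sys10
set_option linter.unusedSectionVars false
open scoped Topology ENNReal

def birkS (f : UI → UI) (κ : UI → ℕ) (φ : UI → ℝ) (x : UI) : ℝ := ∑ j ∈ Finset.range (κ x + 1), φ (f^[j] x)

noncomputable def birkU (h : ℕ → C(UI, UI)) (φ : C(UI, ℝ)) (k : ℕ) : C(UI, ℝ) := ∑ j ∈ Finset.range (k + 1), φ.comp (h (k - j))

noncomputable def birkV (h : ℕ → C(UI, UI)) (w : ℕ → C(UI, ℝ)) (ρ φ : C(UI, ℝ)) : C(UI, ℝ) :=
  ∑' k, w k * (ρ.comp (h k) * birkU h φ k)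

lemma birkU_norm (h : ℕ → C(UI, UI)) (φ : C(UI, ℝ)) (k : ℕ) : ‖birkU h φ k‖ ≤ ((k : ℝ) + 1) * ‖φ‖ := by
  refine (norm_sum_le _ _).trans ?_
  refine (Finset.sum_le_sum (g := fun _ => ‖φ‖) fun j _ => LSys.comp_norm_le φ _).trans ?_
  simp

lemma birkU_sub (h : ℕ → C(UI, UI)) (φ ψ : C(UI, ℝ)) (k : ℕ) : birkU h (φ - ψ) k = birkU h φ k - birkU h ψ k := by
  rw [birkU, birkU, birkU, ← Finset.sum_sub_distrib]
  rfl

lemma birkS_abs_le (f : UI → UI) (κ : UI → ℕ) (φ : C(UI, ℝ)) (x : UI) : |birkS f κ φ x| ≤ ‖φ‖ * ((κ x : ℝ) + 1) := by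
  refine (Finset.abs_sum_le_sum_abs _ _).trans ?_
  refine (Finset.sum_le_sum (g := fun _ => ‖φ‖) fun j _ => φ.norm_coe_le_norm _).trans ?_
  simp [mul_comm]

namespace LSys
variable {f : UI → UI} {κ : UI → ℕ} {h : ℕ → C(UI, UI)} {w : ℕ → C(UI, ℝ)} (S : LSys f κ h w)
include S

lemma birkS_meas {φ : UI → ℝ} (hφ : Measurable φ) : Measurable (birkS f κ φ) :=
  (measurable_birk_var S.hf hφ).comp (measurable_id.prodMk (S.hκ.add_const 1))

lemma birkS_h (φ : C(UI, ℝ)) (k : ℕ) (y : UI) (hy : (y : ℝ) < 1) : birkS f κ φ (h k y) = birkU h φ k y := by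
  rw [birkS, S.kap k y hy, birkU, ContinuousMap.sum_apply]
  refine Finset.sum_congr rfl fun j hj => ?_
  rw [S.orbit k y hy j (by simpa [Nat.lt_succ_iff] using hj)]
  rfl

lemma birkV_summ (ρ φ : C(UI, ℝ)) : Summable fun k => ‖w k * (ρ.comp (h k) * birkU h φ k)‖ := by
  refine Summable.of_nonneg_of_le (fun k => norm_nonneg _) (fun k => ?_) (S.summ1.mul_right (‖ρ‖ * ‖φ‖))
  calc ‖w k * (ρ.comp (h k) * birkU h φ k)‖ ≤ ‖w k‖ * (‖ρ.comp (h k)‖ * ‖birkU h φ k‖) :=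
        (norm_mul_le _ _).trans (mul_le_mul_of_nonneg_left (norm_mul_le _ _) (norm_nonneg _))
    _ ≤ ‖w k‖ * (‖ρ‖ * (((k : ℝ) + 1) * ‖φ‖)) := by
        gcongr
        · exact comp_norm_le ρ k
        · exact birkU_norm h φ k
    _ = _ := by ring

lemma birkV_sub (ρ φ ψ : C(UI, ℝ)) : birkV h w ρ (φ - ψ) = birkV h w ρ φ - birkV h w ρ ψ := by
  rw [birkV, birkV, birkV, ← (S.birkV_summ ρ φ).of_norm.tsum_sub (S.birkV_summ ρ ψ).of_norm]
  congr 1; ext1 k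
  rw [birkU_sub, mul_sub, mul_sub]

lemma birk_int (ρ φ : C(UI, ℝ)) : Integrable (fun x => ρ x * birkS f κ φ x) ∧ ∀ g : UI → ℝ, Measurable g → (∃ C, ∀ x, |g x| ≤ C) →
      ∫ x, (ρ x * birkS f κ φ x) * g (f^[κ x + 1] x) = ∫ y, birkV h w ρ φ y * g y :=
  S.xfer (ρ.continuous.measurable.mul (S.birkS_meas φ.continuous.measurable)) (fun k => ρ.comp (h k) * birkU h φ k)
    (fun k y hy => by
      show ρ (h k y) * birkS f κ φ (h k y) = _
      rw [S.birkS_h φ k y hy]; rfl) (S.birkV_summ ρ φ)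

lemma birk_cint (ρ φ : C(UI, ℝ)) : ∫ x, ρ x * birkS f κ φ x = cint (birkV h w ρ φ) := by
  have := (S.birk_int ρ φ).2 (fun _ => 1) measurable_const ⟨1, fun _ => by simp⟩
  simpa [cint] using this

lemma birkV_cone {a r : ℝ} (hr : 0 < r) (hr1 : r ≤ 1) (ha : 0 ≤ a) (ha' : 3 + a * (1 / 2) ^ r ≤ a) {ρ φ : C(UI, ℝ)} (hρ : LCone a r ρ)
    (hφ : LCone 1 r φ) : LCone a r (birkV h w ρ φ) := by
  refine (S.cone_sum hr hr1 (a := a * (1 / 2) ^ r + 1) _ (S.birkV_summ ρ φ) fun k => ?_).mono hr (by linarith)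
  refine LCone.mul (hρ.comp (h k) hr ha (by norm_num) (S.contr k)) (LCone.sum _ _ fun j _ => ?_)
  refine (hφ.comp (h (k - j)) hr zero_le_one (by norm_num) (S.contr _)).mono hr ?_
  rw [one_mul]
  exact Real.rpow_le_one (by norm_num) (by norm_num) hr.le

lemma kap_sq_int (ρ : C(UI, ℝ)) : Integrable (fun x => ρ x * ((κ x : ℝ) + 1) ^ 2) := by
  have hm : Measurable fun x => (κ x : ℝ) := measurable_from_top.comp S.hκ
  refine (S.xfer (ρ.continuous.measurable.mul ((hm.add_const 1).pow_const 2)) (fun k => ((k : ℝ) + 1) ^ 2 • ρ.comp (h k)) ?_ ?_).1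
  · intro k y hy
    show ρ (h k y) * ((κ (h k y) : ℝ) + 1) ^ 2 = _
    rw [S.kap k y hy]; simp [mul_comm]
  · refine Summable.of_nonneg_of_le (fun k => norm_nonneg _) (fun k => ?_) (S.summ.mul_right ‖ρ‖)
    rw [mul_smul_comm, norm_smul, Real.norm_of_nonneg (by positivity), mul_assoc]
    refine mul_le_mul_of_nonneg_left ((norm_mul_le _ _).trans ?_) (by positivity)
    exact mul_le_mul_of_nonneg_left (comp_norm_le ρ k) (norm_nonneg _)

lemma densM_integrable {ρ : C(UI, ℝ)} (hρ : ∀ y, 0 < ρ y) {g : UI → ℝ} (hg : Integrable fun x => ρ x * g x) : Integrable g (densM ρ) := by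
  rw [densM, integrable_withDensity_iff_integrable_smul' ρ.continuous.measurable.ennreal_ofReal (Eventually.of_forall fun y => ENNReal.ofReal_lt_top)]
  refine hg.congr (Eventually.of_forall fun y => ?_)
  simp only [ENNReal.toReal_ofReal (hρ y).le, smul_eq_mul]

lemma birkS_memLp {ρ : C(UI, ℝ)} (hρ : ∀ y, 0 < ρ y) (φ : C(UI, ℝ)) : MemLp (birkS f κ φ) 2 (densM ρ) := by
  have hm : Measurable fun x => (κ x : ℝ) := measurable_from_top.comp S.hκ
  have h1 : MemLp (fun x => (κ x : ℝ) + 1) 2 (densM ρ) :=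
    (memLp_two_iff_integrable_sq (hm.add_const 1).aestronglyMeasurable).2 (S.densM_integrable hρ (S.kap_sq_int ρ))
  refine MemLp.mono (h1.const_mul ‖φ‖) (S.birkS_meas φ.continuous.measurable).aestronglyMeasurable (Eventually.of_forall fun x => ?_)
  refine (birkS_abs_le f κ φ x).trans (le_abs_self _)

lemma birk_lint {ρ φ : C(UI, ℝ)} (hρ : ∀ y, 0 < ρ y) (hφ : ∀ y, 0 ≤ φ y) :
    ∫⁻ x, ∑ j ∈ Finset.range (κ x + 1), ENNReal.ofReal (φ (f^[j] x)) ∂(densM ρ) = ENNReal.ofReal (cint (birkV h w ρ φ)) := by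
  have h0 : ∀ x, ∑ j ∈ Finset.range (κ x + 1), ENNReal.ofReal (φ (f^[j] x)) = ENNReal.ofReal (birkS f κ φ x) := fun x =>
    (ENNReal.ofReal_sum_of_nonneg fun j _ => hφ _).symm
  have h0' : ∀ x, 0 ≤ birkS f κ φ x := fun x => Finset.sum_nonneg fun j _ => hφ _
  simp_rw [h0]
  rw [densM_lintegral ρ (S.birkS_meas φ.continuous.measurable).ennreal_ofReal, ← S.birk_cint ρ φ,
    ofReal_integral_eq_lintegral_ofReal (S.birk_int ρ φ).1 (Eventually.of_forall fun x => mul_nonneg (hρ x).le (h0' x))]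
  congr 1; ext x
  rw [ENNReal.ofReal_mul (hρ x).le]

lemma martingale {r : ℝ} (hr : 0 < r) (hr1 : r ≤ 1) {a q K : ℝ} {ρ : C(UI, ℝ)} (ha : 3 ≤ a) (hq : 0 ≤ q) (hq1 : q < 1) (ha' : 3 + a * (1 / 2) ^ r ≤ a)
    (hc : ∀ u v : C(UI, ℝ), LCone a r u → LCone a r v → cint u = cint v → ∀ n, ‖(S.L ^ n) u - (S.L ^ n) v‖ ≤ K * cint u * q ^ n)
    (hρc : LCone a r ρ) (hρ : ∀ y, 0 < ρ y) (hL : S.L ρ = ρ) (φ : C(UI, ℝ)) {M : ℝ} (hM : 0 ≤ M)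
    (hφ : LCone 1 r (φ + ContinuousMap.const UI M))
    (hmean : cint (birkV h w ρ (φ + ContinuousMap.const UI M)) = cint (birkV h w ρ (ContinuousMap.const UI M))) :
    ∃ χ : C(UI, ℝ), ∀ g, Measurable g → (∃ C, ∀ x, |g x| ≤ C) →
      ∫ x, (birkS f κ φ x + χ x - χ (f^[κ x + 1] x)) * g (f^[κ x + 1] x) ∂(densM ρ) = 0 := by
  set v := birkV h w ρ φ with hv
  have hsub : v = birkV h w ρ (φ + ContinuousMap.const UI M) - birkV h w ρ (ContinuousMap.const UI M) := by
    rw [← S.birkV_sub, add_sub_cancel_right]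
  have hbd : ∀ n, ‖(S.L ^ n) v‖ ≤ K * cint (birkV h w ρ (φ + ContinuousMap.const UI M)) * q ^ n := by
    intro n
    rw [hsub, map_sub]
    exact hc _ _ (S.birkV_cone hr hr1 (by linarith) ha' hρc hφ) (S.birkV_cone hr hr1 (by linarith) ha' hρc (LCone.const hr zero_le_one hM)) hmean n
  have hsum : Summable fun n => (S.L ^ n) v :=
    Summable.of_norm_bounded ((summable_geometric_of_lt_one hq hq1).mul_left _) hbd
  set ψ := ∑' n, (S.L ^ n) v with hψ
  have hψL : ψ = v + S.L ψ := by
    rw [hψ, S.L.map_tsum hsum]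
    conv_lhs => rw [hsum.tsum_eq_zero_add]
    congr 1
    congr 1; ext1 n
    rw [pow_succ']; rfl
  refine ⟨⟨fun y => ψ y / ρ y, ψ.continuous.div ρ.continuous fun y => (hρ y).ne'⟩, ?_⟩
  rintro g hg ⟨C, hC⟩
  simp only [ContinuousMap.coe_mk]
  rw [densM_integral hρ]
  have hgG : Measurable fun x => g (f^[κ x + 1] x) := hg.comp S.measG
  have hCb : ∀ᵐ x : UI, ‖g (f^[κ x + 1] x)‖ ≤ C := Eventually.of_forall fun x => hC _
  set χ : C(UI, ℝ) := ⟨fun y => ψ y / ρ y, ψ.continuous.div ρ.continuous fun y => (hρ y).ne'⟩ with hχ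
  have hi1 : Integrable fun x => (ρ x * birkS f κ φ x) * g (f^[κ x + 1] x) := (S.birk_int ρ φ).1.mul_bdd hgG.aestronglyMeasurable hCb
  have hi2 : Integrable fun x => ψ x * g (f^[κ x + 1] x) := (UI_integrable ψ).mul_bdd hgG.aestronglyMeasurable hCb
  have hχg : Measurable fun x => χ x * g x := χ.continuous.measurable.mul hg
  have hχC : ∀ x, |χ x * g x| ≤ ‖χ‖ * C := fun x => by
    rw [abs_mul]; exact mul_le_mul (χ.norm_coe_le_norm x) (hC x) (abs_nonneg _) (norm_nonneg _)
  have hi3 : Integrable fun x => ρ x * (χ (f^[κ x + 1] x) * g (f^[κ x + 1] x)) :=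
    (UI_integrable ρ).mul_bdd (hχg.comp S.measG).aestronglyMeasurable (Eventually.of_forall fun x => hχC _)
  have e : (fun x => ρ x * ((birkS f κ φ x + ψ x / ρ x - ψ (f^[κ x + 1] x) / ρ (f^[κ x + 1] x)) * g (f^[κ x + 1] x))) =
      fun x => (ρ x * birkS f κ φ x) * g (f^[κ x + 1] x) + ψ x * g (f^[κ x + 1] x) - ρ x * (χ (f^[κ x + 1] x) * g (f^[κ x + 1] x)) := by
    ext x
    have := (hρ x).ne'
    simp only [hχ, ContinuousMap.coe_mk]
    have e1 : ρ x * (ψ x / ρ x) = ψ x := by field_simp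
    linear_combination g (f^[κ x + 1] x) * e1
  have hi12 : Integrable fun x => (ρ x * birkS f κ φ x) * g (f^[κ x + 1] x) + ψ x * g (f^[κ x + 1] x) := hi1.add hi2
  rw [e, integral_sub hi12 hi3, integral_add hi1 hi2, (S.birk_int ρ φ).2 g hg ⟨C, hC⟩, S.L_int ψ g hg ⟨C, hC⟩,
    S.L_int ρ (fun x => χ x * g x) hχg ⟨_, hχC⟩, hL]
  have e2 : ∀ y, ρ y * (χ y * g y) = v y * g y + S.L ψ y * g y := by
    intro y
    have := (hρ y).ne'
    have e1 : ρ y * χ y = ψ y := by simp only [hχ, ContinuousMap.coe_mk]; field_simp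
    have e3 : ψ y = v y + S.L ψ y := congrArg (fun u : C(UI, ℝ) => u y) hψL
    rw [← mul_assoc, e1]
    conv_lhs => rw [e3]
    ring
  simp_rw [e2]
  have hg1 : ∀ u : C(UI, ℝ), Integrable fun y => u y * g y := fun u =>
    (UI_integrable u).mul_bdd hg.aestronglyMeasurable (Eventually.of_forall hC)
  rw [integral_add (hg1 v) (hg1 (S.L ψ)), sub_self]

theorem clt {r C : ℝ} (hr : 0 < r) (hr1 : r ≤ 1) (hC : 0 ≤ C) (φ : C(UI, ℝ)) (hφ : ∀ y y', |φ y - φ y'| ≤ C * dist y y' ^ r) :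
    ∃ ν : Measure UI, IsProbabilityMeasure ν ∧ Ergodic f ν ∧ volume ≪ ν ∧ (∫ x, φ x ∂ν = 0 →
      ∃ σ : ℝ≥0, ∀ g : BoundedContinuousFunction ℝ ℝ,
      Tendsto (fun n : ℕ => ∫ x, g ((n : ℝ) ^ (-(1 / 2 : ℝ)) * ∑ j ∈ Finset.range n, φ (f^[j] x)) ∂ν)
        atTop (nhds (∫ y, g y ∂(ProbabilityTheory.gaussianReal 0 (σ ^ 2))))) := by
  obtain ⟨a, q, K, ρ, ha, hq, hq1, hK, ha', hc, hρc, hρ, hL, hρ1⟩ := S.exists_dens hr hr1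
  set Z : ℝ≥0∞ := ∫⁻ x, (κ x + 1 : ℝ≥0∞) ∂(densM ρ) with hZ
  have hZs : ∀ {M : ℝ}, 0 ≤ M → ENNReal.ofReal (cint (birkV h w ρ (ContinuousMap.const UI M))) = Z * ENNReal.ofReal M := by
    intro M hM
    have hm : Measurable fun x => (κ x : ℝ≥0∞) := measurable_from_top.comp S.hκ
    rw [← S.birk_lint hρ (fun y => hM), hZ, ← lintegral_mul_const _ (hm.add_const 1)]
    congr 1; ext x
    simp
  have hZt : Z ≠ ⊤ := by
    have := hZs zero_le_one
    rw [ENNReal.ofReal_one, mul_one] at this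
    rw [← this]; exact ENNReal.ofReal_ne_top
  have hZ0 : Z ≠ 0 := by
    intro h0
    have h1 : densM ρ univ ≤ Z := by
      rw [← lintegral_one]
      exact lintegral_mono fun x => by simp
    rw [h0, nonpos_iff_eq_zero] at h1
    have := ac_densM hρ h1
    simp at this
  set m0 : Measure UI := Z⁻¹ • densM ρ with hm0
  have hG : Ergodic (fun x => f^[κ x + 1] x) m0 := (S.dens_ergodic hρ hL).smul_measure _
  have h1 : ∫⁻ x, (κ x + 1 : ℝ≥0∞) ∂m0 = 1 := by
    rw [hm0, lintegral_smul_measure, ← hZ, smul_eq_mul, ENNReal.inv_mul_cancel hZ0 hZt]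
  have hprob := projMeas_prob S.hf S.hκ h1
  refine ⟨projMeas f κ m0, hprob, projMeas_ergodic S.hf S.hκ hG, ?_, fun hmean => ?_⟩
  · refine (ac_densM hρ).trans (Measure.AbsolutelyContinuous.trans ?_ (ac_projMeas S.hf S.hκ))
    exact Measure.absolutelyContinuous_smul (ENNReal.inv_ne_zero.2 hZt)
  · set M : ℝ := C / 1 + ‖φ‖ with hMdef
    have hM : 0 ≤ M := by positivity
    have hcone := LCone.shift_of_holder hr one_pos φ hC hφ (le_refl M)
    have hmean' : cint (birkV h w ρ (φ + ContinuousMap.const UI M)) = cint (birkV h w ρ (ContinuousMap.const UI M)) := by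
      have h2 : ∫⁻ x, ENNReal.ofReal ((φ + ContinuousMap.const UI M) x) ∂(projMeas f κ m0) = ENNReal.ofReal M := by
        have hi : Integrable φ (projMeas f κ m0) := Integrable.of_bound (C := ‖φ‖) φ.continuous.aestronglyMeasurable (Eventually.of_forall φ.norm_coe_le_norm)
        rw [← ofReal_integral_eq_lintegral_ofReal]
        · congr 1
          simp only [ContinuousMap.add_apply, ContinuousMap.const_apply]
          rw [integral_add hi (integrable_const _), hmean]
          simp
        · exact hi.add (integrable_const _)
        · exact Eventually.of_forall hcone.1
      rw [lintegral_projMeas S.hf S.hκ (φ + ContinuousMap.const UI M).continuous.measurable.ennreal_ofReal, hm0, lintegral_smul_measure, S.birk_lint hρ hcone.1] at h2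
      have h3 : ENNReal.ofReal (cint (birkV h w ρ (φ + ContinuousMap.const UI M))) = ENNReal.ofReal (cint (birkV h w ρ (ContinuousMap.const UI M))) := by
        rw [hZs hM, ← h2, smul_eq_mul, ← mul_assoc, ENNReal.mul_inv_cancel hZ0 hZt, one_mul]
      refine (ENNReal.ofReal_eq_ofReal_iff ?_ ?_).1 h3
      · exact le_cint _ (S.birkV_cone hr hr1 (by linarith) ha' hρc hcone).1
      · exact le_cint _ (S.birkV_cone hr hr1 (by linarith) ha' hρc (LCone.const hr zero_le_one hM)).1
    obtain ⟨χ, hχ⟩ := S.martingale hr hr1 ha hq hq1 ha' hc hρc hρ hL φ hM hcone hmean'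
    refine tower_clt S.hf S.hκ hG h1 (φ := φ) (χ := χ) (mY := fun x => birkS f κ φ x + χ x - χ (f^[κ x + 1] x)) φ.continuous.measurable χ.continuous.measurable ?_ ?_ ?_ ?_
    · exact ((S.birkS_meas φ.continuous.measurable).add χ.continuous.measurable).sub (χ.continuous.measurable.comp S.measG)
    · refine MemLp.smul_measure ?_ (ENNReal.inv_ne_top.2 hZ0)
      refine MemLp.sub (MemLp.add (S.birkS_memLp hρ φ) ?_) ?_
      · exact MemLp.of_bound χ.continuous.aestronglyMeasurable ‖χ‖ (Eventually.of_forall χ.norm_coe_le_norm)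
      · exact MemLp.of_bound (χ.continuous.measurable.comp S.measG).aestronglyMeasurable ‖χ‖ (Eventually.of_forall fun x => χ.norm_coe_le_norm _)
    · intro g hg hgC
      rw [hm0, integral_smul_measure, hχ g hg hgC, smul_zero]
    · refine Eventually.of_forall fun x => ?_
      simp only [birkS]; ring

end LSys
end Sys10


section Conc
open scoped Topology ENNReal

noncomputable def lF (z x : ℝ) : ℝ := x * (1 + 2 ^ z * |x| ^ z)

lemma lF_nonneg_eq {z x : ℝ} (hx : 0 ≤ x) : lF z x = x * (1 + 2 ^ z * x ^ z) := by rw [lF, abs_of_nonneg hx]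

lemma lF_cont {z : ℝ} (hz : 0 < z) : Continuous (lF z) := by
  unfold lF
  refine continuous_id.mul (continuous_const.add (continuous_const.mul ?_))
  exact continuous_abs.rpow_const fun x => Or.inr hz.le

lemma lF_diff {z x x' : ℝ} (hz : 0 < z) (hx : 0 ≤ x) (hxx : x ≤ x') : x' - x ≤ lF z x' - lF z x := by
  rw [lF_nonneg_eq hx, lF_nonneg_eq (hx.trans hxx)]
  have h1 : x ^ z ≤ x' ^ z := Real.rpow_le_rpow hx hxx hz.le
  have h2 : x * x ^ z ≤ x' * x' ^ z := mul_le_mul hxx h1 (Real.rpow_nonneg hx z) (hx.trans hxx)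
  have h3 : (0:ℝ) < 2 ^ z := by positivity
  nlinarith

lemma lF_mono {z : ℝ} (hz : 0 < z) : StrictMono (lF z) := by
  refine strictMono_of_odd_strictMonoOn_nonneg (fun x => by simp [lF]) ?_
  intro x hx y hy hxy
  have := lF_diff hz hx hxy.le
  linarith

lemma lF_surj {z : ℝ} (hz : 0 < z) : Function.Surjective (lF z) := by
  have h1 : Tendsto (lF z) atTop atTop := by
    refine tendsto_atTop_mono' _ ?_ tendsto_id
    filter_upwards [eventually_ge_atTop (0:ℝ)] with x hx
    have := lF_diff hz le_rfl hx
    simp only [lF, zero_mul] at this ⊢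
    simp only [id]; linarith
  refine (lF_cont hz).surjective h1 ?_
  have h2 : lF z = fun x => - lF z (-x) := by ext x; simp [lF]
  rw [h2]
  exact tendsto_neg_atTop_atBot.comp (h1.comp tendsto_neg_atBot_atTop)

noncomputable def lG (z : ℝ) (hz : 0 < z) : ℝ ≃o ℝ := (StrictMono.orderIsoOfSurjective (lF z) (lF_mono hz) (lF_surj hz)).symm

variable {z : ℝ} (hz : 0 < z)

lemma lF_lG (s : ℝ) : lF z (lG z hz s) = s :=
  (StrictMono.orderIsoOfSurjective (lF z) (lF_mono hz) (lF_surj hz)).apply_symm_apply s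

lemma lG_lF (x : ℝ) : lG z hz (lF z x) = x :=
  (StrictMono.orderIsoOfSurjective (lF z) (lF_mono hz) (lF_surj hz)).symm_apply_apply x

lemma lG_zero : lG z hz 0 = 0 := by
  conv_lhs => rw [show (0:ℝ) = lF z 0 by simp [lF]]
  exact lG_lF hz 0

lemma lG_one : lG z hz 1 = 1 / 2 := by
  have : lF z (1 / 2) = 1 := by
    rw [lF_nonneg_eq (by norm_num), ← Real.mul_rpow (by norm_num) (by norm_num)]
    norm_num
  conv_lhs => rw [← this]
  exact lG_lF hz _

lemma lG_cont : Continuous (lG z hz) := (lG z hz).continuous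
lemma lG_mono : StrictMono (lG z hz) := (lG z hz).strictMono

lemma lG_nonneg {s : ℝ} (hs : 0 ≤ s) : 0 ≤ lG z hz s := by
  rw [← lG_zero hz]; exact (lG_mono hz).monotone hs
lemma lG_pos {s : ℝ} (hs : 0 < s) : 0 < lG z hz s := by
  conv_lhs => rw [← lG_zero hz]
  exact lG_mono hz hs

lemma lG_diff {s s' : ℝ} (hs : 0 ≤ s) (hss : s ≤ s') : lG z hz s' - lG z hz s ≤ s' - s := by
  have := lF_diff hz (lG_nonneg hz hs) ((lG_mono hz).monotone hss)
  rwa [lF_lG, lF_lG] at this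

lemma lG_le {s : ℝ} (hs : 0 ≤ s) : lG z hz s ≤ s := by
  have := lG_diff hz le_rfl hs
  rw [lG_zero] at this; linarith

noncomputable def lq (z x : ℝ) : ℝ := (1 + (1 + z) * (2 ^ z * |x| ^ z))⁻¹

lemma lq_den {z : ℝ} (hz : 0 < z) (x : ℝ) : 0 < 1 + (1 + z) * (2 ^ z * |x| ^ z) := by positivity

lemma lq_pos {z : ℝ} (hz : 0 < z) (x : ℝ) : 0 < lq z x := inv_pos.2 (lq_den hz x)

lemma lq_cont {z : ℝ} (hz : 0 < z) : Continuous (lq z) := by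
  unfold lq
  refine Continuous.inv₀ ?_ fun x => (lq_den hz x).ne'
  exact continuous_const.add (continuous_const.mul (continuous_const.mul (continuous_abs.rpow_const fun x => Or.inr hz.le)))

lemma lq_anti {z : ℝ} (hz : 0 < z) {x x' : ℝ} (hx : 0 ≤ x) (hxx : x ≤ x') : lq z x' ≤ lq z x := by
  unfold lq
  rw [abs_of_nonneg hx, abs_of_nonneg (hx.trans hxx)]
  gcongr

lemma lF_deriv {z : ℝ} (hz : 0 < z) {x : ℝ} (hx : 0 < x) : HasDerivAt (lF z) (1 + (1 + z) * (2 ^ z * |x| ^ z)) x := by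
  have h1 : HasDerivAt (fun x : ℝ => x * (1 + 2 ^ z * x ^ z)) (1 * (1 + 2 ^ z * x ^ z) + x * (2 ^ z * (z * x ^ (z - 1)))) x := by
    refine (hasDerivAt_id x).mul ?_
    exact ((Real.hasDerivAt_rpow_const (Or.inl hx.ne')).const_mul _).const_add _
  have h2 : lF z =ᶠ[𝓝 x] fun x : ℝ => x * (1 + 2 ^ z * x ^ z) := by
    filter_upwards [lt_mem_nhds hx] with y hy
    exact lF_nonneg_eq hy.le
  refine (h1.congr_of_eventuallyEq h2).congr_deriv ?_
  rw [abs_of_pos hx]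
  have h3 : x * x ^ (z - 1) = x ^ z := by
    rw [Real.rpow_sub_one hx.ne']; field_simp
  linear_combination 2 ^ z * z * h3

lemma lG_deriv {s : ℝ} (hs : 0 < s) : HasDerivAt (lG z hz) (lq z (lG z hz s)) s :=
  HasDerivAt.of_local_left_inverse (lG_cont hz).continuousAt (lF_deriv hz (lG_pos hz hs)) (lq_den hz _).ne'
    (Eventually.of_forall fun y => lF_lG hz y)

noncomputable def lD (z : ℝ) (hz : 0 < z) : ℕ → ℝ → ℝ
  | 0, _ => 1
  | k + 1, s => lD z hz k (lG z hz s) * lq z (lG z hz s)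

lemma lD_pos (k : ℕ) : ∀ s, 0 < lD z hz k s := by
  induction k with
  | zero => intro s; exact one_pos
  | succ k ih => intro s; exact mul_pos (ih _) (lq_pos hz _)

lemma lD_cont (k : ℕ) : Continuous (lD z hz k) := by
  induction k with
  | zero => exact continuous_const
  | succ k ih => exact (ih.comp (lG_cont hz)).mul ((lq_cont hz).comp (lG_cont hz))

lemma lD_anti (k : ℕ) : ∀ s s', 0 ≤ s → s ≤ s' → lD z hz k s' ≤ lD z hz k s := by
  induction k with
  | zero => intro s s' _ _; exact le_rfl
  | succ k ih =>
    intro s s' hs hss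
    have h1 := (lG_mono hz).monotone hss
    exact mul_le_mul (ih _ _ (lG_nonneg hz hs) h1) (lq_anti hz (lG_nonneg hz hs) h1) (lq_pos hz _).le (lD_pos hz k _).le

lemma lP_mono {z t t' : ℝ} (hz : 0 < z) (hz1 : z < 1) (ht : 0 ≤ t) (htt : t ≤ t') : (1 + t) ^ 2 * (1 + (1 + z) * t)⁻¹ ≤ (1 + t') ^ 2 * (1 + (1 + z) * t')⁻¹ := by
  have h1 : 0 < 1 + (1 + z) * t := by positivity
  have h2 : 0 < 1 + (1 + z) * t' := by have := ht.trans htt; positivity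
  rw [← div_eq_mul_inv, ← div_eq_mul_inv, div_le_div_iff₀ h1 h2]
  have h3 : (1 + t') ^ 2 * (1 + (1 + z) * t) - (1 + t) ^ 2 * (1 + (1 + z) * t') = (t' - t) * ((1 - z) + (t + t') + (1 + z) * t * t') := by ring
  have h4 : 0 ≤ (t' - t) * ((1 - z) + (t + t') + (1 + z) * t * t') := by
    have h5 := ht.trans htt
    have h6 : 0 ≤ (1 + z) * t * t' := by positivity
    exact mul_nonneg (by linarith) (by linarith)
  linarith

lemma lD_sq (hz1 : z < 1) (k : ℕ) : ∀ s s', 0 ≤ s → s ≤ s' → s ^ 2 * lD z hz k s ≤ s' ^ 2 * lD z hz k s' := by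
  induction k with
  | zero =>
    intro s s' hs hss
    simp only [lD, mul_one]
    exact pow_le_pow_left₀ hs hss 2
  | succ k ih =>
    have key : ∀ s, 0 ≤ s → s ^ 2 * lD z hz (k + 1) s = ((lG z hz s) ^ 2 * lD z hz k (lG z hz s)) *
        ((1 + 2 ^ z * (lG z hz s) ^ z) ^ 2 * (1 + (1 + z) * (2 ^ z * (lG z hz s) ^ z))⁻¹) := by
      intro s hs
      have h1 : s = lG z hz s * (1 + 2 ^ z * (lG z hz s) ^ z) := by
        rw [← lF_nonneg_eq (lG_nonneg hz hs), lF_lG]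
      simp only [lD, lq, abs_of_nonneg (lG_nonneg hz hs)]
      conv_lhs => enter [1]; rw [h1]
      ring
    intro s s' hs hss
    have h1 := (lG_mono hz).monotone hss
    have h0 := lG_nonneg hz hs
    have h0' := lG_nonneg hz (hs.trans hss)
    rw [key s hs, key s' (hs.trans hss)]
    refine mul_le_mul (ih _ _ h0 h1) (lP_mono hz hz1 (by positivity) ?_) (by positivity) (mul_nonneg (sq_nonneg _) (lD_pos hz k _).le)
    gcongr

lemma lGk_deriv (k : ℕ) : ∀ s, 0 < s → HasDerivAt ((lG z hz)^[k]) (lD z hz k s) s := by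
  induction k with
  | zero => intro s hs; exact hasDerivAt_id s
  | succ k ih =>
    intro s hs
    rw [Function.iterate_succ]
    exact (ih _ (lG_pos hz hs)).comp s (lG_deriv hz hs)

noncomputable def lH (z : ℝ) (hz : 0 < z) (k : ℕ) (y : ℝ) : ℝ := (lG z hz)^[k] ((y + 1) / 2)

lemma lH_succ (k : ℕ) (y : ℝ) : lH z hz (k + 1) y = lG z hz (lH z hz k y) := by
  rw [lH, Function.iterate_succ_apply']; rfl

lemma lH_cont (k : ℕ) : Continuous (lH z hz k) :=
  ((lG_cont hz).iterate k).comp (by fun_prop)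

lemma lH_smono (k : ℕ) : StrictMono (lH z hz k) :=
  ((lG_mono hz).iterate k).comp fun a b hab => by linarith

lemma lH_surj (k : ℕ) : Function.Surjective (lH z hz k) :=
  ((lG z hz).surjective.iterate k).comp fun a => ⟨2 * a - 1, by ring⟩

lemma lH_deriv (k : ℕ) {y : ℝ} (hy : -1 < y) : HasDerivAt (lH z hz k) (lD z hz k ((y + 1) / 2) * (1 / 2)) y :=
  HasDerivAt.comp y (lGk_deriv hz k _ (by linarith)) (((hasDerivAt_id y).add_const 1).div_const 2)

lemma lH_pos (k : ℕ) {y : ℝ} (hy : 0 ≤ y) : 0 < lH z hz k y := by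
  induction k with
  | zero => simp only [lH, Function.iterate_zero, id]; linarith
  | succ k ih => rw [lH_succ]; exact lG_pos hz ih

lemma lH_le (k : ℕ) {y : ℝ} (hy : 0 ≤ y) : lH z hz k y ≤ (y + 1) / 2 := by
  induction k with
  | zero => exact le_rfl
  | succ k ih => rw [lH_succ]; exact (lG_le hz (lH_pos hz k hy).le).trans ih

lemma lH_diff (k : ℕ) {y y' : ℝ} (hy : 0 ≤ y) (hyy : y ≤ y') : lH z hz k y' - lH z hz k y ≤ 1 / 2 * (y' - y) := by
  induction k with
  | zero => simp only [lH, Function.iterate_zero, id]; linarith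
  | succ k ih =>
    rw [lH_succ, lH_succ]
    exact (lG_diff hz (lH_pos hz k hy).le ((lH_smono hz k).monotone hyy)).trans ih

lemma lH_zero_eq (k : ℕ) : lH z hz k 0 = lH z hz (k + 1) 1 := by
  have h1 : ((1:ℝ) + 1) / 2 = 1 := by norm_num
  have h2 : ((0:ℝ) + 1) / 2 = 1 / 2 := by norm_num
  rw [lH, lH, h1, h2, Function.iterate_succ_apply, lG_one]

lemma lH_step (k : ℕ) : lH z hz k 1 = lH z hz (k + 1) 1 * (1 + 2 ^ z * (lH z hz (k + 1) 1) ^ z) := by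
  rw [← lF_nonneg_eq (lH_pos hz (k + 1) zero_le_one).le, lH_succ, lF_lG]

lemma lH_decay (hz1 : z < 1) (k : ℕ) : ((k : ℝ) + 1) * (z / 2) ≤ (lH z hz k 1) ^ (-z) := by
  induction k with
  | zero =>
    have : lH z hz 0 1 = 1 := by simp [lH]
    rw [this, Real.one_rpow]; push_cast; linarith
  | succ k ih =>
    set x := lH z hz (k + 1) 1 with hx
    set X := lH z hz k 1 with hX
    have hx0 : 0 < x := lH_pos hz _ zero_le_one
    have hX0 : 0 < X := lH_pos hz _ zero_le_one
    have hstep : X = x * (1 + 2 ^ z * x ^ z) := lH_step hz k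
    set t := (2:ℝ) ^ z * x ^ z with ht
    have ht0 : 0 < t := by positivity
    have hX1 : X ≤ 1 := by
      have := lH_le hz k (zero_le_one (α := ℝ)); norm_num at this; exact this
    have hxh : x ≤ 1 / 2 := by
      rw [hx, lH_succ, ← lG_one hz]; exact (lG_mono hz).monotone hX1
    have ht' : t = (2 * x) ^ z := (Real.mul_rpow (by norm_num) hx0.le).symm
    have ht1 : t ≤ 1 := by
      rw [ht']; exact Real.rpow_le_one (by positivity) (by linarith) hz.le
    have hXx : X ≤ 2 * x := by rw [hstep]; nlinarith
    have h1 : X ^ (-z) * t ≥ 1 := by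
      have : X ^ z ≤ t := by rw [ht']; exact Real.rpow_le_rpow hX0.le hXx hz.le
      calc X ^ (-z) * t ≥ X ^ (-z) * X ^ z := mul_le_mul_of_nonneg_left this (Real.rpow_nonneg hX0.le _)
        _ = 1 := by rw [← Real.rpow_add hX0, neg_add_cancel, Real.rpow_zero]
    have h2 : x ^ (-z) = X ^ (-z) * (1 + t) ^ z := by
      rw [hstep, Real.mul_rpow hx0.le (by positivity), mul_assoc, ← Real.rpow_add (by positivity), neg_add_cancel, Real.rpow_zero, mul_one]
    have h3 : 1 + z * (t / 2) ≤ (1 + t) ^ z := by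
      have h4 := Real.one_sub_inv_le_log_of_pos (by positivity : 0 < 1 + t)
      have h5 : t / 2 ≤ 1 - (1 + t)⁻¹ := by
        have : 1 - (1 + t)⁻¹ = t / (1 + t) := by field_simp; ring
        rw [this]; gcongr; linarith
      have h6 := Real.add_one_le_exp (Real.log (1 + t) * z)
      rw [Real.rpow_def_of_pos (by positivity)]
      nlinarith
    rw [h2]
    have hXp : 0 ≤ X ^ (-z) := Real.rpow_nonneg hX0.le _
    have h7 : X ^ (-z) * (1 + z * (t / 2)) ≤ X ^ (-z) * (1 + t) ^ z := mul_le_mul_of_nonneg_left h3 hXp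
    push_cast
    nlinarith

lemma lH_decay' (hz1 : z < 1) (k : ℕ) : lH z hz k 1 ≤ (((k : ℝ) + 1) * (z / 2)) ^ (-(1 / z)) := by
  have h0 := lH_pos hz k (zero_le_one (α := ℝ))
  have h1 := Real.rpow_le_rpow_of_nonpos (by positivity) (lH_decay hz hz1 k) (by rw [neg_nonpos]; positivity : -(1 / z) ≤ 0)
  rw [← Real.rpow_mul h0.le] at h1
  have : -z * -(1 / z) = 1 := by field_simp
  rwa [this, Real.rpow_one] at h1

lemma lH_tendsto (hz1 : z < 1) : Tendsto (fun k => lH z hz k 1) atTop (𝓝 0) := by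
  refine squeeze_zero (fun k => (lH_pos hz k zero_le_one).le) (lH_decay' hz hz1) ?_
  refine (tendsto_rpow_neg_atTop (by positivity : 0 < 1 / z)).comp ?_
  refine Tendsto.atTop_mul_const (by positivity) ?_
  exact tendsto_atTop_add_const_right _ _ tendsto_natCast_atTop_atTop

noncomputable def lW (z : ℝ) (hz : 0 < z) (k : ℕ) (y : ℝ) : ℝ := lD z hz k ((y + 1) / 2) * (1 / 2)

lemma lW_pos (k : ℕ) (y : ℝ) : 0 < lW z hz k y := mul_pos (lD_pos hz k _) (by norm_num)

lemma lW_cont (k : ℕ) : Continuous (lW z hz k) := ((lD_cont hz k).comp (by fun_prop)).mul continuous_const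

lemma lW_dist (hz1 : z < 1) (k : ℕ) {y y' : ℝ} (hy : 0 ≤ y) (hy' : 0 ≤ y') : lW z hz k y ≤ Real.exp (2 * |y - y'|) * lW z hz k y' := by
  have hD := lD_pos hz k ((y' + 1) / 2)
  rcases le_total y y' with hyy | hyy
  · have h1 := lD_sq hz hz1 k ((y + 1) / 2) ((y' + 1) / 2) (by linarith) (by linarith)
    have h2 : (y' + 1) / 2 ≤ (y + 1) / 2 * Real.exp (y' - y) := by
      have := Real.add_one_le_exp (y' - y)
      nlinarith
    have h3 : ((y' + 1) / 2) ^ 2 ≤ ((y + 1) / 2) ^ 2 * Real.exp (2 * |y - y'|) := by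
      rw [abs_sub_comm, abs_of_nonneg (by linarith : 0 ≤ y' - y), two_mul, Real.exp_add]
      calc ((y' + 1) / 2) ^ 2 ≤ ((y + 1) / 2 * Real.exp (y' - y)) ^ 2 := pow_le_pow_left₀ (by linarith) h2 2
        _ = _ := by ring
    have h4 : ((y + 1) / 2) ^ 2 * lD z hz k ((y + 1) / 2) ≤ ((y + 1) / 2) ^ 2 * (Real.exp (2 * |y - y'|) * lD z hz k ((y' + 1) / 2)) := by
      calc _ ≤ _ := h1
        _ ≤ (((y + 1) / 2) ^ 2 * Real.exp (2 * |y - y'|)) * lD z hz k ((y' + 1) / 2) := mul_le_mul_of_nonneg_right h3 hD.le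
        _ = _ := by ring
    have h5 := le_of_mul_le_mul_left h4 (by positivity)
    simp only [lW]
    rw [← mul_assoc]
    exact mul_le_mul_of_nonneg_right h5 (by norm_num)
  · have h1 := lD_anti hz k ((y' + 1) / 2) ((y + 1) / 2) (by linarith) (by linarith)
    have h2 : 1 ≤ Real.exp (2 * |y - y'|) := Real.one_le_exp (by positivity)
    simp only [lW]
    nlinarith

lemma lW_le (hz1 : z < 1) (k : ℕ) {y : ℝ} (hy : y ∈ Icc (0:ℝ) 1) :
    lW z hz k y ≤ Real.exp 2 * (2 * (z / 2) ^ (-(1 + 1 / z))) * ((k : ℝ) + 1) ^ (-(1 + 1 / z)) := by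
  obtain ⟨c, hc, hce⟩ := exists_hasDerivAt_eq_slope (lH z hz k) (lW z hz k) one_pos (lH_cont hz k).continuousOn
    (fun y hy => lH_deriv hz k (by linarith [hy.1]))
  rw [sub_zero, div_one, lH_zero_eq, lH_step] at hce
  set x := lH z hz (k + 1) 1 with hx
  have hx0 : 0 < x := lH_pos hz _ zero_le_one
  have h1 : lW z hz k c ≤ 2 * x ^ (1 + z) := by
    have h2 : (2:ℝ) ^ z ≤ 2 := by
      calc (2:ℝ) ^ z ≤ 2 ^ (1:ℝ) := Real.rpow_le_rpow_of_exponent_le (by norm_num) hz1.le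
        _ = 2 := Real.rpow_one 2
    rw [Real.rpow_add hx0, Real.rpow_one, hce]
    have : 0 ≤ x * x ^ z := by positivity
    nlinarith
  have h2 : x ≤ (((k : ℝ) + 1) * (z / 2)) ^ (-(1 / z)) := by
    refine (lH_decay' hz hz1 (k + 1)).trans ?_
    refine Real.rpow_le_rpow_of_nonpos (by positivity) ?_ (by rw [neg_nonpos]; positivity)
    push_cast
    gcongr; linarith
  have h3 : x ^ (1 + z) ≤ (z / 2) ^ (-(1 + 1 / z)) * ((k : ℝ) + 1) ^ (-(1 + 1 / z)) := by
    calc x ^ (1 + z) ≤ ((((k : ℝ) + 1) * (z / 2)) ^ (-(1 / z))) ^ (1 + z) := Real.rpow_le_rpow hx0.le h2 (by positivity)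
      _ = (((k : ℝ) + 1) * (z / 2)) ^ (-(1 + 1 / z)) := by
        rw [← Real.rpow_mul (by positivity)]
        congr 1; field_simp; ring
      _ = _ := by rw [Real.mul_rpow (by positivity) (by positivity), mul_comm]
  have h4 := lW_dist hz hz1 k hy.1 hc.1.le
  have h5 : Real.exp (2 * |y - c|) ≤ Real.exp 2 := by
    apply Real.exp_le_exp.2
    have : |y - c| ≤ 1 := abs_le.2 ⟨by linarith [hy.1, hc.2], by linarith [hy.2, hc.1]⟩
    linarith
  calc lW z hz k y ≤ _ := h4
    _ ≤ Real.exp 2 * (2 * ((z / 2) ^ (-(1 + 1 / z)) * ((k : ℝ) + 1) ^ (-(1 + 1 / z)))) := by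
      refine mul_le_mul h5 (h1.trans ?_) (lW_pos hz k c).le (Real.exp_pos 2).le
      linarith
    _ = _ := by ring

include hz in
lemma lW_summ_aux (hz2 : z < 1 / 2) (A : ℝ) : Summable fun k : ℕ => ((k : ℝ) + 1) ^ 2 * (A * ((k : ℝ) + 1) ^ (-(1 + 1 / z))) := by
  have h1 : Summable fun k : ℕ => (k : ℝ) ^ (1 - 1 / z) := by
    rw [Real.summable_nat_rpow]
    have : 2 < 1 / z := by rw [lt_div_iff₀ hz]; linarith
    linarith
  have h2 := ((_root_.summable_nat_add_iff 1).2 h1).mul_left A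
  refine h2.congr fun k => ?_
  have hk : (0:ℝ) < (k:ℝ) + 1 := by positivity
  push_cast
  have : ((k:ℝ) + 1) ^ (1 - 1 / z) = ((k:ℝ) + 1) ^ 2 * ((k:ℝ) + 1) ^ (-(1 + 1 / z)) := by
    rw [← Real.rpow_natCast, ← Real.rpow_add hk]
    congr 1; push_cast; ring
  rw [this]; ring

lemma lH_anti : Antitone fun k => lH z hz k 1 :=
  antitone_nat_of_succ_le fun k => by
    rw [lH_succ]; exact lG_le hz (lH_pos hz k zero_le_one).le

lemma lH_union (hz1 : z < 1) : (⋃ k, lH z hz k '' Ioc 0 1) = Ioc (0:ℝ) 1 := by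
  have him : ∀ k, lH z hz k '' Ioc 0 1 = Ioc (lH z hz (k + 1) 1) (lH z hz k 1) := by
    intro k
    ext x
    constructor
    · rintro ⟨y, hy, rfl⟩
      rw [← lH_zero_eq]
      exact ⟨lH_smono hz k hy.1, (lH_smono hz k).monotone hy.2⟩
    · rintro ⟨h1, h2⟩
      obtain ⟨y, rfl⟩ := lH_surj hz k x
      rw [← lH_zero_eq] at h1
      exact ⟨y, ⟨(lH_smono hz k).lt_iff_lt.1 h1, (lH_smono hz k).le_iff_le.1 h2⟩, rfl⟩
  have h01 : lH z hz 0 1 = 1 := by simp [lH]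
  ext x
  simp only [him, mem_iUnion]
  constructor
  · rintro ⟨k, hk⟩
    refine ⟨(lH_pos hz _ zero_le_one).trans hk.1, hk.2.trans ?_⟩
    exact (lH_anti hz (Nat.zero_le k)).trans_eq h01
  · rintro ⟨h0, h1⟩
    have hex : ∃ k, lH z hz (k + 1) 1 < x :=
      ((((tendsto_add_atTop_iff_nat 1).2 (lH_tendsto hz hz1)).eventually (gt_mem_nhds h0))).exists
    classical
    refine ⟨Nat.find hex, Nat.find_spec hex, ?_⟩
    rcases hk : Nat.find hex with _ | k
    · rw [h01]; exact h1
    · exact not_lt.1 (Nat.find_min hex (by omega : k < Nat.find hex))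

lemma lH_disj : Pairwise (Function.onFun Disjoint fun k => lH z hz k '' Ioc 0 1) := by
  have hsub : ∀ k, lH z hz k '' Ioc 0 1 ⊆ Ioc (lH z hz (k + 1) 1) (lH z hz k 1) := by
    rintro k _ ⟨y, hy, rfl⟩
    rw [← lH_zero_eq]
    exact ⟨lH_smono hz k hy.1, (lH_smono hz k).monotone hy.2⟩
  intro i j hij
  exact ((lH_anti hz).pairwise_disjoint_on_Ioc_succ hij).mono (hsub i) (hsub j)

lemma lH_change (hz1 : z < 1) (U : ℝ → ℝ≥0∞) :
    ∫⁻ x in Ioc (0:ℝ) 1, U x = ∑' k, ∫⁻ y in Ioc (0:ℝ) 1, ENNReal.ofReal (lW z hz k y) * U (lH z hz k y) := by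
  have hms : ∀ k, MeasurableSet (lH z hz k '' Ioc 0 1) := fun k =>
    measurableSet_Ioc.image_of_continuousOn_injOn (lH_cont hz k).continuousOn (lH_smono hz k).injective.injOn
  conv_lhs => rw [← lH_union hz hz1]
  rw [lintegral_iUnion hms (lH_disj hz)]
  congr 1; ext1 k
  rw [lintegral_image_eq_lintegral_abs_deriv_mul measurableSet_Ioc (fun y hy => (lH_deriv hz k (by linarith [hy.1])).hasDerivWithinAt) (lH_smono hz k).injective.injOn]
  congr 1; ext1 y
  congr 2
  exact abs_of_pos (lW_pos hz k y)

end Conc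

section Fin12
open scoped Topology ENNReal

lemma lsv_meas (z : ℝ) : Measurable (lsv z) := by
  unfold lsv
  refine Measurable.ite measurableSet_Iio ?_ ?_
  · exact measurable_id.mul (measurable_const.add (measurable_const.mul (measurable_id.pow_const z)))
  · exact (measurable_id.const_mul 2).sub_const 1

variable {z : ℝ} (hz : 0 < z)

lemma lsv_lt {x : ℝ} (hx : 0 ≤ x) (hx2 : x < 1 / 2) : lsv z x = lF z x := by
  rw [lsv, if_pos hx2, lF_nonneg_eq hx]

include hz in
lemma lsv_mem {x : ℝ} (hx : x ∈ Icc (0:ℝ) 1) : lsv z x ∈ Icc (0:ℝ) 1 := by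
  by_cases h : x < 1 / 2
  · rw [lsv_lt hx.1 h]
    have h0 : lF z 0 = 0 := by simp [lF]
    have h1 : lF z (1 / 2) = 1 := by rw [← lG_one hz, lF_lG]
    refine ⟨?_, ?_⟩
    · rw [← h0]; exact (lF_mono hz).monotone hx.1
    · rw [← h1]; exact (lF_mono hz).monotone h.le
  · rw [lsv, if_neg h]
    push Not at h
    exact ⟨by linarith, by linarith [hx.2]⟩

noncomputable def lsvI (z : ℝ) (hz : 0 < z) (x : UI) : UI := ⟨lsv z x, lsv_mem hz x.2⟩

noncomputable def lsvK (z : ℝ) (x : UI) : ℕ := sInf {k | 1 / 2 ≤ (lsv z)^[k] x}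

noncomputable def lsvH (z : ℝ) (hz : 0 < z) (k : ℕ) : C(UI, UI) :=
  ⟨fun y => ⟨lH z hz k y, (lH_pos hz k y.2.1).le, (lH_le hz k y.2.1).trans (by linarith [y.2.2])⟩,
    ((lH_cont hz k).comp continuous_subtype_val).subtype_mk _⟩

noncomputable def lsvW (z : ℝ) (hz : 0 < z) (k : ℕ) : C(UI, ℝ) :=
  ⟨fun y => lW z hz k y, (lW_cont hz k).comp continuous_subtype_val⟩

lemma lsvI_val (j : ℕ) (x : UI) : (((lsvI z hz)^[j] x : UI) : ℝ) = (lsv z)^[j] x :=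
  (Function.Semiconj.iterate_right (f := (Subtype.val : UI → ℝ)) (ga := lsvI z hz) (gb := lsv z) (fun _ => rfl) j) x

lemma lsvK_meas : Measurable (lsvK z) := by
  have hs : ∀ k, MeasurableSet {x : UI | 1 / 2 ≤ (lsv z)^[k] (x : ℝ)} := fun k =>
    (((lsv_meas z).iterate k).comp measurable_subtype_coe) measurableSet_Ici
  refine measurable_to_countable' fun n => ?_
  have : lsvK z ⁻¹' {n} = ({x : UI | 1 / 2 ≤ (lsv z)^[n] (x : ℝ)} ∩ ⋂ m : Fin n, {x : UI | 1 / 2 ≤ (lsv z)^[m] (x : ℝ)}ᶜ) ∪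
      (if n = 0 then ⋂ m : ℕ, {x : UI | 1 / 2 ≤ (lsv z)^[m] (x : ℝ)}ᶜ else ∅) := by
    ext x
    simp only [mem_preimage, mem_singleton_iff, mem_union, mem_inter_iff, mem_iInter, mem_compl_iff, mem_setOf_eq]
    constructor
    · intro hx
      rcases Set.eq_empty_or_nonempty {k | 1 / 2 ≤ (lsv z)^[k] (x : ℝ)} with he | hne
      · right
        have h0 : n = 0 := by rw [← hx, lsvK, he, Nat.sInf_empty]
        rw [if_pos h0]
        simp only [mem_iInter, mem_compl_iff, mem_setOf_eq]
        intro m hm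
        have : m ∈ {k | 1 / 2 ≤ (lsv z)^[k] (x : ℝ)} := hm
        rw [he] at this; exact this
      · left
        rw [← hx]
        exact ⟨Nat.sInf_mem hne, fun m hm => Nat.notMem_of_lt_sInf m.2 hm⟩
    · rintro (⟨h1, h2⟩ | h1)
      · refine le_antisymm (Nat.sInf_le h1) ?_
        by_contra hlt
        push Not at hlt
        have h3 : 1 / 2 ≤ (lsv z)^[lsvK z x] (x : ℝ) :=
          Nat.sInf_mem (s := {k | 1 / 2 ≤ (lsv z)^[k] (x : ℝ)}) ⟨n, h1⟩
        exact h2 ⟨_, hlt⟩ h3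
      · split_ifs at h1 with h0
        · simp only [mem_iInter, mem_compl_iff, mem_setOf_eq] at h1
          rw [h0, lsvK, Nat.sInf_eq_zero]
          right
          ext k
          simp only [mem_setOf_eq, mem_empty_iff_false, iff_false]
          exact h1 k
        · exact absurd h1 (by simp)
  rw [this]
  refine ((hs n).inter (MeasurableSet.iInter fun m : Fin n => (hs (m : ℕ)).compl)).union ?_
  split_ifs
  · exact MeasurableSet.iInter fun m => (hs m).compl
  · exact MeasurableSet.empty

lemma UI_lintegral (V : ℝ → ℝ≥0∞) : ∫⁻ x : UI, V x = ∫⁻ x in Ioc (0:ℝ) 1, V x := by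
  rw [restrict_Ioc_eq_restrict_Icc]
  exact lintegral_subtype_comap measurableSet_Icc V

lemma lsv_lH_succ (k : ℕ) {y : ℝ} (hy : 0 ≤ y) (hy1 : y < 1) : lH z hz (k + 1) y < 1 / 2 ∧ lsv z (lH z hz (k + 1) y) = lH z hz k y := by
  have h1 : lH z hz k y < 1 := (lH_le hz k hy).trans_lt (by linarith)
  have h2 : lH z hz (k + 1) y < 1 / 2 := by
    rw [lH_succ, ← lG_one hz]; exact lG_mono hz h1
  refine ⟨h2, ?_⟩
  rw [lsv_lt (lH_pos hz _ hy).le h2, lH_succ, lF_lG]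

lemma lsv_orbit {y : ℝ} (hy : 0 ≤ y) (hy1 : y < 1) (j : ℕ) : ∀ k, j ≤ k → (lsv z)^[j] (lH z hz k y) = lH z hz (k - j) y := by
  induction j with
  | zero => intro k _; rfl
  | succ j ih =>
    intro k hk
    rw [Function.iterate_succ_apply', ih k (by omega)]
    have h1 : k - j = (k - (j + 1)) + 1 := by omega
    rw [h1, (lsv_lH_succ hz _ hy hy1).2]

lemma lsv_half (y : ℝ) (hy : 0 ≤ y) : lsv z (lH z hz 0 y) = y := by
  have : lH z hz 0 y = (y + 1) / 2 := rfl
  rw [this, lsv, if_neg (by linarith)]; ring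

lemma lsv_LSys (hz2 : z < 1 / 2) : LSys (lsvI z hz) (lsvK z) (lsvH z hz) (lsvW z hz) where
  hf := ((lsv_meas z).comp measurable_subtype_coe).subtype_mk
  hκ := lsvK_meas
  wpos k y := lW_pos hz k y
  contr k y y' := by
    show |lH z hz k y - lH z hz k y'| ≤ 1 / 2 * |(y:ℝ) - y'|
    rcases le_total (y:ℝ) y' with hyy | hyy
    · rw [abs_sub_comm, abs_sub_comm (y:ℝ), abs_of_nonneg (sub_nonneg.2 ((lH_smono hz k).monotone hyy)), abs_of_nonneg (sub_nonneg.2 hyy)]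
      exact lH_diff hz k y.2.1 hyy
    · rw [abs_of_nonneg (sub_nonneg.2 ((lH_smono hz k).monotone hyy)), abs_of_nonneg (sub_nonneg.2 hyy)]
      exact lH_diff hz k y'.2.1 hyy
  dist_le k y y' := lW_dist hz (by linarith) k y.2.1 y'.2.1
  summ := by
    refine Summable.of_nonneg_of_le (fun k => by positivity) (fun k => ?_) (lW_summ_aux hz hz2 (Real.exp 2 * (2 * (z / 2) ^ (-(1 + 1 / z)))))
    refine mul_le_mul_of_nonneg_left ?_ (by positivity)
    refine (ContinuousMap.norm_le _ (by positivity)).2 fun y => ?_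
    show ‖lW z hz k y‖ ≤ _
    rw [Real.norm_of_nonneg (lW_pos hz k y).le]
    exact lW_le hz (by linarith) k y.2
  change U hU := by
    set V : ℝ → ℝ≥0∞ := fun x => U (projIcc 0 1 zero_le_one x) with hV
    have e : ∀ x : UI, U x = V x := fun x => by simp [hV]
    have e1 : ∫⁻ x, U x = ∫⁻ x : UI, V x := by simp_rw [e]
    rw [e1, UI_lintegral, lH_change hz (by linarith) V]
    congr 1; ext1 k
    rw [← UI_lintegral (fun y => ENNReal.ofReal (lW z hz k y) * V (lH z hz k y))]
    congr 1; ext1 y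
    rw [e]; rfl
  orbit k y hy j hj := by
    apply Subtype.ext
    rw [lsvI_val]
    exact lsv_orbit hz y.2.1 hy j k hj
  ret k y hy := by
    apply Subtype.ext
    rw [lsvI_val, Function.iterate_succ_apply']
    have : (lsv z)^[k] ((lsvH z hz k y : UI) : ℝ) = lH z hz 0 y := by
      have := lsv_orbit hz y.2.1 hy k k le_rfl
      rwa [Nat.sub_self] at this
    rw [this, lsv_half hz _ y.2.1]
  kap k y hy := by
    have h0 : ∀ j ≤ k, (lsv z)^[j] ((lsvH z hz k y : UI) : ℝ) = lH z hz (k - j) y := fun j hj => lsv_orbit hz y.2.1 hy j k hj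
    have hk : 1 / 2 ≤ (lsv z)^[k] ((lsvH z hz k y : UI) : ℝ) := by
      rw [h0 k le_rfl, Nat.sub_self]
      show 1 / 2 ≤ ((y:ℝ) + 1) / 2
      linarith [y.2.1]
    refine le_antisymm (Nat.sInf_le hk) ?_
    by_contra hlt
    push Not at hlt
    have h1 : 1 / 2 ≤ (lsv z)^[lsvK z (lsvH z hz k y)] ((lsvH z hz k y : UI) : ℝ) := Nat.sInf_mem (s := {k' | 1 / 2 ≤ (lsv z)^[k'] ((lsvH z hz k y : UI) : ℝ)}) ⟨k, hk⟩
    rw [h0 _ hlt.le] at h1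
    have h2 : k - lsvK z (lsvH z hz k y) = (k - lsvK z (lsvH z hz k y) - 1) + 1 := by omega
    rw [h2] at h1
    exact absurd (lsv_lH_succ hz (k - lsvK z (lsvH z hz k y) - 1) y.2.1 hy).1 (not_lt.2 h1)

end Fin12

/-- For `z ∈ (0, 1/2)`, `μ` the unique absolutely continuous `f_z`-invariant
Borel probability measure on `[0,1]`, and `φ` Hölder with mean zero, the normalized Birkhoff
sums `n^{-1/2} Φ_n` converge in distribution (under `μ`) to a Gaussian `N(0, σ²)` for some
`σ ≥ 0`. Convergence in distribution is expressed by convergence of integrals of bounded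
continuous test functions. -/
theorem lsv_central_limit_theorem
    (z : ℝ) (hz : z ∈ Set.Ioo (0 : ℝ) (1 / 2))
    (μ : Measure ℝ) (hμprob : IsProbabilityMeasure μ) (hμsupp : μ (Set.Icc (0 : ℝ) 1)ᶜ = 0)
    (hμac : μ ≪ volume) (hμinv : MeasurePreserving (lsv z) μ μ)
    (φ : ℝ → ℝ) (hφ : ∃ C r : ℝ≥0, 0 < r ∧ r ≤ 1 ∧ HolderOnWith C r φ (Set.Icc (0 : ℝ) 1))
    (hmean : ∫ x, φ x ∂μ = 0) :
    ∃ σ : ℝ≥0, ∀ g : BoundedContinuousFunction ℝ ℝ,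
      Tendsto (fun n : ℕ => ∫ x, g ((n : ℝ) ^ (-(1 / 2 : ℝ)) * lsvBirkhoff z φ n x) ∂μ)
        atTop (nhds (∫ y, g y ∂(ProbabilityTheory.gaussianReal 0 (σ ^ 2)))) := by
  obtain ⟨C, r, hr, hr1, hH⟩ := hφ
  have S := lsv_LSys hz.1 hz.2
  let φI : C(UI, ℝ) := ⟨fun y => φ y, continuousOn_iff_continuous_restrict.1 (hH.continuousOn hr)⟩
  have hφI : ∀ y y' : UI, |φI y - φI y'| ≤ (C:ℝ) * dist y y' ^ (r:ℝ) := fun y y' => hH.dist_le y.2 y'.2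
  obtain ⟨ν, hν, herg, hac, hclt⟩ := S.clt (r := r) (by exact_mod_cast hr) (by exact_mod_cast hr1) C.2 φI hφI
  have hemb : MeasurableEmbedding (Subtype.val : UI → ℝ) := MeasurableEmbedding.subtype_coe measurableSet_Icc
  have hmp : MeasurePreserving (Subtype.val : UI → ℝ) ν (ν.map Subtype.val) := ⟨measurable_subtype_coe, rfl⟩
  have herg' : Ergodic (lsv z) (ν.map (Subtype.val : UI → ℝ)) :=
    hmp.ergodic_of_ergodic_semiconj herg (lsv_meas z) (fun _ => rfl)
  have hμν : μ ≪ ν.map (Subtype.val : UI → ℝ) := by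
    intro A hA
    obtain ⟨B, hAB, hB, hB0⟩ := exists_measurable_superset_of_null hA
    rw [Measure.map_apply measurable_subtype_coe hB] at hB0
    have h1 := hac hB0
    have h2 : volume (B ∩ Icc 0 1) = 0 := by
      have : (volume : Measure UI) (Subtype.val ⁻¹' B) = volume (Subtype.val '' ((Subtype.val : UI → ℝ) ⁻¹' B)) :=
        comap_subtype_coe_apply measurableSet_Icc _ _
      rw [this, Subtype.image_preimage_coe] at h1
      rwa [inter_comm]
    refine measure_mono_null hAB ?_
    refine measure_mono_null (t := (B ∩ Icc 0 1) ∪ (Icc 0 1)ᶜ) ?_ (measure_union_null (hμac h2) hμsupp)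
    intro x hx
    by_cases hx1 : x ∈ Icc (0:ℝ) 1
    · exact Or.inl ⟨hx, hx1⟩
    · exact Or.inr hx1
  have hp : IsProbabilityMeasure (ν.map (Subtype.val : UI → ℝ)) := Measure.isProbabilityMeasure_map measurable_subtype_coe.aemeasurable
  have heq : μ = ν.map (Subtype.val : UI → ℝ) := herg'.eq_of_absolutelyContinuous hμinv hμν
  have hIntg : ∀ u : ℝ → ℝ, ∫ x, u x ∂μ = ∫ y : UI, u y ∂ν := fun u => by rw [heq, hemb.integral_map]
  obtain ⟨σ, hσ⟩ := hclt ((hIntg φ).symm.trans hmean)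
  refine ⟨σ, fun g => (hσ g).congr fun n => ?_⟩
  rw [hIntg]
  congr 1; ext y
  congr 2
  rw [lsvBirkhoff]
  refine Finset.sum_congr rfl fun j _ => ?_
  show φ _ = _
  rw [lsvI_val]
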